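/- arXiv:2110.10740 — 2 statements merged into one kernel-verified Lean document; each statement's English description precedes it below -/
import Mathlib

section
/- Let P = (X, ≺) be a poset with |X| = n elements, let ω : X → ℝ_{>0} be a positive order-reversing weight function, and fix an element z ∈ X. Then for every integer 1 < k < n: N_ω(k)² ≥ N_ω(k−1)·N_ω(k+1). -/
open scoped Classical BigOperators

noncomputable section

variable {X : Type*} [Fintype X] [DecidableEq X] [PartialOrder X]

/-- A linear extension of the poset `X` with `n = |X|` elements, encoded as a bijection
`σ : X ≃ Fin n`; the value `L(x) ∈ {1, …, n}` of the usual description corresponds to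
`(σ x : ℕ) + 1`. -/
def IsLinExt (σ : X ≃ Fin (Fintype.card X)) : Prop :=
  ∀ x y : X, x < y → σ x < σ y

/-- The weighted count `N_ω(k) = Σ_{L ∈ E, L(z) = k} Π_{x : L(x) < L(z)} ω(x)` over linear
extensions placing `z` in position `k`. -/
def Nw (ω : X → ℝ) (z : X) (k : ℕ) : ℝ :=
  ∑ σ ∈ Finset.univ.filter (fun σ : X ≃ Fin (Fintype.card X) =>
      IsLinExt σ ∧ (σ z : ℕ) = k - 1),
    ∏ x ∈ Finset.univ.filter (fun x : X => σ x < σ z), ω x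


/-- Spectral lemma. -/
theorem ws_spec {J : Type*} [Fintype J] [DecidableEq J] (L : (J → ℝ) →ₗ[ℝ] (J → ℝ))
    (hsym : ∀ u v, ∑ i, u i * L v i = ∑ i, v i * L u i)
    (h d : J → ℝ) (hd : ∀ i, 0 < d i)
    (h1 : ∀ v, ∑ i, v i * L v i ≤ ∑ i, (L v i) ^ 2 / d i)
    (h2 : ∀ v, ∑ i, v i * L v i ≤ ∑ i, d i * (v i) ^ 2)
    (h3 : ∀ v, ∑ i, v i * L v i = ∑ i, d i * (v i) ^ 2 → ∃ c : ℝ, ∀ i, v i = c * h i)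
    (v : J → ℝ) (hv : ∑ i, d i * h i * v i = 0) : ∑ i, v i * L v i ≤ 0 := by
  set s : J → ℝ := fun i => Real.sqrt (d i) with hs
  have hspos : ∀ i, 0 < s i := fun i => Real.sqrt_pos.2 (hd i)
  have hsq : ∀ i, s i * s i = d i := fun i => Real.mul_self_sqrt (hd i).le
  -- symmetrised operator on EuclideanSpace
  let A : EuclideanSpace ℝ J →ₗ[ℝ] EuclideanSpace ℝ J :=
    { toFun := fun x => WithLp.toLp 2 (fun i => (s i)⁻¹ * L (fun j => (s j)⁻¹ * x j) i)
      map_add' := by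
        intro x y
        ext i
        have : (fun j => (s j)⁻¹ * (x + y) j) = (fun j => (s j)⁻¹ * x j) + (fun j => (s j)⁻¹ * y j) := by
          funext j; simp [mul_add]
        simp only [this, map_add]
        simp [mul_add]
      map_smul' := by
        intro a x
        ext i
        have : (fun j => (s j)⁻¹ * (a • x) j) = a • (fun j => (s j)⁻¹ * x j) := by
          funext j; simp; ring
        simp only [this, map_smul]
        simp; ring }
  have hA : ∀ x i, A x i = (s i)⁻¹ * L (fun j => (s j)⁻¹ * x j) i := fun x i => rfl
  have hin : ∀ x y : EuclideanSpace ℝ J, inner ℝ x y = ∑ i, x i * y i := by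
    intro x y
    simp [PiLp.inner_apply, mul_comm]
  have hAin : ∀ x y : EuclideanSpace ℝ J, inner ℝ x (A y) =
      ∑ i, ((s i)⁻¹ * x i) * L (fun j => (s j)⁻¹ * y j) i := by
    intro x y
    rw [hin]
    refine Finset.sum_congr rfl fun i _ => ?_
    rw [hA]; ring
  have hAs : A.IsSymmetric := by
    intro x y
    rw [real_inner_comm, hAin, hAin]
    exact hsym _ _
  have hn : Module.finrank ℝ (EuclideanSpace ℝ J) = Fintype.card J := by simp
  let b := hAs.eigenvectorBasis hn
  let lam := hAs.eigenvalues hn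
  have hb : ∀ k, A (b k) = lam k • b k := fun k => hAs.apply_eigenvectorBasis hn k
  -- each eigenvalue
  have key : ∀ k, 0 < lam k → ∃ c : ℝ, ∀ i, (s i)⁻¹ * b k i = c * h i := by
    intro k hk
    set x : J → ℝ := fun j => (s j)⁻¹ * b k j with hx
    have hLx : ∀ i, L x i = lam k * d i * x i := by
      intro i
      have := congrArg (fun y : EuclideanSpace ℝ J => y i) (hb k)
      simp only [hA] at this
      have h' : (s i)⁻¹ * L x i = lam k * b k i := by simpa using this
      have hb' : b k i = s i * x i := by
        simp only [hx]; field_simp [(hspos i).ne']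
      rw [hb'] at h'
      have : L x i = s i * ((s i)⁻¹ * L x i) := by field_simp [(hspos i).ne']
      rw [this, h', ← hsq i]; ring
    set Q := ∑ i, d i * (x i)^2 with hQ
    have e1 : ∑ i, x i * L x i = lam k * Q := by
      rw [hQ, Finset.mul_sum]
      refine Finset.sum_congr rfl fun i _ => ?_
      rw [hLx]; ring
    have e2 : ∑ i, (L x i) ^ 2 / d i = lam k ^ 2 * Q := by
      rw [hQ, Finset.mul_sum]
      refine Finset.sum_congr rfl fun i _ => ?_
      rw [hLx]; field_simp [(hd i).ne']
    have hQ1 : Q = 1 := by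
      have : inner ℝ (b k) (b k) = (1:ℝ) := by
        rw [real_inner_self_eq_norm_sq, b.orthonormal.1 k]; norm_num
      rw [hin] at this
      rw [← this, hQ]
      refine Finset.sum_congr rfl fun i _ => ?_
      simp only [hx]
      rw [← hsq i]; field_simp [(hspos i).ne']
    have l1 := h1 x
    have l2 := h2 x
    rw [e1, e2, hQ1] at l1
    rw [e1, ← hQ, hQ1] at l2
    have : lam k = 1 := by nlinarith
    apply h3 x
    rw [e1, ← hQ, this, one_mul]
  let y : EuclideanSpace ℝ J := WithLp.toLp 2 (fun i => s i * v i)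
  have hy : (fun j => (s j)⁻¹ * y j) = v := by
    funext j
    show (s j)⁻¹ * (s j * v j) = v j
    field_simp [(hspos j).ne']
  have hgoal : ∑ i, v i * L v i = inner ℝ y (A y) := by
    rw [hAin, hy]
    refine Finset.sum_congr rfl fun i _ => ?_
    rw [← congrFun hy i]
  rw [hgoal, ← b.sum_inner_mul_inner]
  apply Finset.sum_nonpos
  intro k _
  have : inner ℝ (b k) (A y) = lam k * inner ℝ (b k) y := by
    rw [← hAs, hb, real_inner_smul_left]
  rw [this, real_inner_comm y]
  by_cases hk : 0 < lam k
  · obtain ⟨c, hc⟩ := key k hk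
    have : inner ℝ (b k) y = (0:ℝ) := by
      rw [hin]
      have : ∀ i, b k i * y i = c * (d i * h i * v i) := by
        intro i
        have h1 := hc i
        have : b k i = s i * (c * h i) := by rw [← h1]; field_simp [(hspos i).ne']
        rw [this, ← hsq i]
        show _ * (s i * v i) = _
        ring
      simp_rw [this]
      rw [← Finset.mul_sum, hv, mul_zero]
    rw [real_inner_comm] at this
    simp [this]
  · have := mul_self_nonneg (inner ℝ y (b k))
    nlinarith

set_option linter.unusedSectionVars false

/-- strict order (`true`) or its dual (`false`). -/
def wsr (b : Bool) (x y : X) : Prop := if b then x < y else y < x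

theorem wsr_irrefl (b : Bool) (x : X) : ¬ wsr b x x := by cases b <;> simp [wsr]

theorem wsr_trans {b : Bool} {x y t : X} (h : wsr b x y) (h' : wsr b y t) : wsr b x t := by
  cases b <;> simp only [wsr] at * <;> simp at * <;> first | exact h.trans h' | exact h'.trans h

theorem wsr_not (b : Bool) (x y : X) : wsr (!b) x y ↔ wsr b y x := by cases b <;> simp [wsr]

/-- index `(x, b)` can be removed from the state `S`. -/
def wsAvail (z : X) (S : Finset X) (i : X × Bool) : Prop :=
  i.1 ∈ S ∧ ¬ wsr i.2 z i.1 ∧ ∀ y ∈ S, ¬ wsr i.2 y i.1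

/-- the finset of available indices. -/
def wsAv (z : X) (S : Finset X) : Finset (X × Bool) := Finset.univ.filter (wsAvail z S)

theorem mem_wsAv {z : X} {S : Finset X} {i : X × Bool} : i ∈ wsAv z S ↔ wsAvail z S i := by
  simp [wsAv]

/-- relation between indices. -/
def wsRel (i j : X × Bool) : Prop := i.2 = j.2 ∧ wsr i.2 i.1 j.1

theorem wsRel_irrefl (i : X × Bool) : ¬ wsRel i i := fun h => wsr_irrefl _ _ h.2

/-- the transfer operator. -/
def wsT (i : X × Bool) (v : X × Bool → ℝ) (j : X × Bool) : ℝ := if wsRel i j then v i else v j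

theorem wsT_const (i : X × Bool) (c : Bool → ℝ) :
    wsT i (fun j : X × Bool => c j.2) = fun j => c j.2 := by
  funext j
  unfold wsT
  split_ifs with h
  · show c i.2 = c j.2
    rw [h.1]
  · rfl

theorem wsAv_not_rel {z : X} {S : Finset X} {i j : X × Bool} (hi : i ∈ wsAv z S)
    (hj : j ∈ wsAv z S) : ¬ wsRel i j := by
  rw [mem_wsAv] at *
  rintro ⟨h1, h2⟩
  rw [h1] at h2
  exact hj.2.2 _ hi.1 h2

theorem wsAv_erase_of {z : X} {S : Finset X} {i j : X × Bool}
    (hj : j ∈ wsAv z S) (hne : j.1 ≠ i.1) : j ∈ wsAv z (S.erase i.1) := by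
  rw [mem_wsAv] at *
  exact ⟨Finset.mem_erase.2 ⟨hne, hj.1⟩, hj.2.1, fun y hy => hj.2.2 y (Finset.mem_of_mem_erase hy)⟩

theorem wsAv_ne_of_erase {z : X} {S : Finset X} {i j : X × Bool}
    (hj : j ∈ wsAv z (S.erase i.1)) : j.1 ≠ i.1 := by
  rw [mem_wsAv] at *
  exact Finset.ne_of_mem_erase hj.1

theorem wsAv_of_erase {z : X} {S : Finset X} {i j : X × Bool} (hi : i ∈ wsAv z S)
    (hj : j ∈ wsAv z (S.erase i.1)) (hr : ¬ wsRel i j) : j ∈ wsAv z S := by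
  rw [mem_wsAv] at *
  have hjS := Finset.mem_of_mem_erase hj.1
  refine ⟨hjS, hj.2.1, fun y hy h => ?_⟩
  by_cases hyi : y = i.1
  · subst hyi
    by_cases hb : i.2 = j.2
    · exact hr ⟨hb, by rw [hb]; exact h⟩
    · have hb' : j.2 = !i.2 := by cases h1 : i.2 <;> cases h2 : j.2 <;> simp_all
      rw [hb', wsr_not] at h
      exact hi.2.2 _ hjS h
  · exact hj.2.2 y (Finset.mem_erase.2 ⟨hyi, hy⟩) h

/-- existence of a minimal element for `wsr b`. -/
theorem wsr_exists_min (b : Bool) (S : Finset X) (hS : S.Nonempty) :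
    ∃ x ∈ S, ∀ y ∈ S, ¬ wsr b y x := by
  cases b
  · obtain ⟨x, hx⟩ := S.exists_maximal hS
    refine ⟨x, hx.prop, fun y hy h => ?_⟩
    simp [wsr] at h
    exact hx.not_gt hy h
  · obtain ⟨x, hx⟩ := S.exists_minimal hS
    refine ⟨x, hx.prop, fun y hy h => ?_⟩
    simp [wsr] at h
    exact hx.not_lt hy h

theorem wsAv_nonempty (z : X) (S : Finset X) (hS : S.Nonempty) : (wsAv z S).Nonempty := by
  by_cases h : ∃ x ∈ S, ¬ z < x
  · obtain ⟨x0, hx0, hx0z⟩ := h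
    obtain ⟨x, hx, hmin⟩ := wsr_exists_min true (S.filter fun x => ¬ z < x)
      ⟨x0, by simp [hx0, hx0z]⟩
    simp only [Finset.mem_filter] at hx hmin
    refine ⟨(x, true), mem_wsAv.2 ⟨hx.1, by simpa [wsr] using hx.2, fun y hy hyx => ?_⟩⟩
    refine hmin y ⟨hy, fun hzy => hx.2 ?_⟩ hyx
    simp [wsr] at hyx
    exact hzy.trans hyx
  · push Not at h
    obtain ⟨x, hx, hmax⟩ := wsr_exists_min false S hS
    refine ⟨(x, false), mem_wsAv.2 ⟨hx, ?_, hmax⟩⟩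
    simp [wsr]
    exact (h x hx).le.not_gt

/-- weights of indices. -/
def wsW (ω : X → ℝ) (i : X × Bool) : ℝ := if i.2 then ω i.1 else 1

theorem wsW_pos {ω : X → ℝ} (hω : ∀ x, 0 < ω x) (i : X × Bool) : 0 < wsW ω i := by
  unfold wsW; split_ifs
  · exact hω _
  · exact one_pos

/-- rows of the matrix. -/
def wsRow (ω : X → ℝ) (z : X) (S : Finset X) (g : Finset X → ℝ) (i : X × Bool)
    (v : X × Bool → ℝ) : ℝ :=
  wsW ω i * ∑ j ∈ wsAv z (S.erase i.1),
    wsW ω j * wsT i v j * g ((S.erase i.1).erase j.1)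

/-- the bilinear form. -/
def wsB (ω : X → ℝ) (z : X) (S : Finset X) (g : Finset X → ℝ) (u v : X × Bool → ℝ) : ℝ :=
  ∑ i ∈ wsAv z S, u i * wsRow ω z S g i v

/-- the one step operator. -/
def wsP (ω : X → ℝ) (z : X) (c : Bool → ℝ) (g : Finset X → ℝ) (S : Finset X) : ℝ :=
  ∑ i ∈ wsAv z S, wsW ω i * c i.2 * g (S.erase i.1)

theorem ws_split (z : X) (S : Finset X) (f : X × Bool → X × Bool → ℝ) :
    ∑ i ∈ wsAv z S, ∑ j ∈ wsAv z (S.erase i.1), f i j =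
      ∑ i ∈ wsAv z S, ∑ j ∈ (wsAv z (S.erase i.1)).filter (fun j => wsRel i j), f i j +
      ∑ i ∈ wsAv z S, ∑ j ∈ (wsAv z S).filter (fun j => j.1 ≠ i.1), f i j := by
  rw [← Finset.sum_add_distrib]
  refine Finset.sum_congr rfl fun i hi => ?_
  rw [← Finset.sum_filter_add_sum_filter_not (wsAv z (S.erase i.1)) (fun j => wsRel i j)]
  congr 1
  refine Finset.sum_congr ?_ fun _ _ => rfl
  ext j
  simp only [Finset.mem_filter]
  constructor
  · rintro ⟨h1, h2⟩
    exact ⟨wsAv_of_erase hi h1 h2, wsAv_ne_of_erase h1⟩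
  · rintro ⟨h1, h2⟩
    exact ⟨wsAv_erase_of h1 h2, wsAv_not_rel hi h1⟩

theorem ws_swap (z : X) (S : Finset X) (f : X × Bool → X × Bool → ℝ) :
    ∑ i ∈ wsAv z S, ∑ j ∈ (wsAv z S).filter (fun j => j.1 ≠ i.1), f i j =
    ∑ i ∈ wsAv z S, ∑ j ∈ (wsAv z S).filter (fun j => j.1 ≠ i.1), f j i := by
  refine Finset.sum_comm' ?_
  intro i j
  simp only [Finset.mem_filter]
  tauto

theorem wsB_eq (ω : X → ℝ) (z : X) (S : Finset X) (g : Finset X → ℝ) (u v : X × Bool → ℝ) :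
    wsB ω z S g u v = ∑ i ∈ wsAv z S, ∑ j ∈ wsAv z (S.erase i.1),
      u i * wsW ω i * wsW ω j * wsT i v j * g ((S.erase i.1).erase j.1) := by
  unfold wsB wsRow
  refine Finset.sum_congr rfl fun i _ => ?_
  rw [Finset.mul_sum, Finset.mul_sum]
  refine Finset.sum_congr rfl fun j _ => ?_
  ring

theorem wsB_symm (ω : X → ℝ) (z : X) (S : Finset X) (g : Finset X → ℝ) (u v : X × Bool → ℝ) :
    wsB ω z S g u v = wsB ω z S g v u := by
  rw [wsB_eq, wsB_eq, ws_split, ws_split]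
  congr 1
  · refine Finset.sum_congr rfl fun i _ => Finset.sum_congr rfl fun j hj => ?_
    have hr := (Finset.mem_filter.1 hj).2
    simp only [wsT, if_pos hr]
    ring
  · rw [ws_swap]
    refine Finset.sum_congr rfl fun i hi => Finset.sum_congr rfl fun j hj => ?_
    have hj' := (Finset.mem_filter.1 hj).1
    simp only [wsT, if_neg (wsAv_not_rel hi hj'), if_neg (wsAv_not_rel hj' hi)]
    rw [Finset.erase_right_comm]
    ring

theorem wsT_add (i : X × Bool) (u v : X × Bool → ℝ) : wsT i (u + v) = wsT i u + wsT i v := by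
  funext j; simp only [wsT, Pi.add_apply]; split_ifs <;> rfl

theorem wsT_smul (i : X × Bool) (a : ℝ) (v : X × Bool → ℝ) : wsT i (a • v) = a • wsT i v := by
  funext j; simp only [wsT, Pi.smul_apply]; split_ifs <;> rfl

theorem wsRow_add (ω : X → ℝ) (z : X) (S : Finset X) (g : Finset X → ℝ) (i : X × Bool)
    (u v : X × Bool → ℝ) :
    wsRow ω z S g i (u + v) = wsRow ω z S g i u + wsRow ω z S g i v := by
  unfold wsRow
  rw [← mul_add, ← Finset.sum_add_distrib, wsT_add]
  congr 1
  refine Finset.sum_congr rfl fun j _ => ?_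
  simp only [Pi.add_apply]; ring

theorem wsRow_smul (ω : X → ℝ) (z : X) (S : Finset X) (g : Finset X → ℝ) (i : X × Bool)
    (a : ℝ) (v : X × Bool → ℝ) :
    wsRow ω z S g i (a • v) = a * wsRow ω z S g i v := by
  unfold wsRow
  rw [mul_left_comm, Finset.mul_sum _ _ a, wsT_smul]
  congr 1
  refine Finset.sum_congr rfl fun j _ => ?_
  simp only [Pi.smul_apply, smul_eq_mul]; ring

theorem wsB_add_left (ω : X → ℝ) (z : X) (S : Finset X) (g : Finset X → ℝ)
    (u u' v : X × Bool → ℝ) :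
    wsB ω z S g (u + u') v = wsB ω z S g u v + wsB ω z S g u' v := by
  unfold wsB
  rw [← Finset.sum_add_distrib]
  refine Finset.sum_congr rfl fun j _ => ?_
  simp only [Pi.add_apply]; ring

theorem wsB_smul_left (ω : X → ℝ) (z : X) (S : Finset X) (g : Finset X → ℝ)
    (a : ℝ) (u v : X × Bool → ℝ) :
    wsB ω z S g (a • u) v = a * wsB ω z S g u v := by
  unfold wsB
  rw [Finset.mul_sum]
  refine Finset.sum_congr rfl fun j _ => ?_
  simp only [Pi.smul_apply, smul_eq_mul]; ring

/-- the constant bilinear values are two-step operators. -/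
theorem wsB_const (ω : X → ℝ) (z : X) (S : Finset X) (g : Finset X → ℝ) (c c' : Bool → ℝ) :
    wsB ω z S g (fun i => c i.2) (fun i => c' i.2) = wsP ω z c (wsP ω z c' g) S := by
  unfold wsB wsP wsRow
  refine Finset.sum_congr rfl fun i _ => ?_
  rw [wsT_const, ← mul_assoc, mul_comm (c i.2)]

/-- inheritance. -/
theorem wsRow_inh (ω : X → ℝ) (z : X) (S : Finset X) (g : Finset X → ℝ) (c : Bool → ℝ)
    (i : X × Bool) (v : X × Bool → ℝ) :
    wsRow ω z S (wsP ω z c g) i v =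
      wsW ω i * wsB ω z (S.erase i.1) g (wsT i v) (fun j => c j.2) := by
  unfold wsRow wsB wsP wsRow
  congr 1
  refine Finset.sum_congr rfl fun j _ => ?_
  rw [wsT_const]
  ring

/-- pullback inequality. -/
theorem ws_pull {ω : X → ℝ} (hω : ∀ x, 0 < ω x) (z : X) (S : Finset X) (g : Finset X → ℝ)
    (hg : ∀ S, 0 ≤ g S) (c : Bool → ℝ) (hc : ∀ b, 0 < c b) (v : X × Bool → ℝ) :
    wsB ω z S (wsP ω z c g) v v ≤
      ∑ i ∈ wsAv z S, c i.2 * (wsW ω i * wsB ω z (S.erase i.1) g (wsT i v) (wsT i v)) := by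
  set A : X × Bool → X × Bool → ℝ := fun i j =>
    ∑ k ∈ wsAv z ((S.erase i.1).erase j.1),
      wsW ω k * wsT j (wsT i v) k * g (((S.erase i.1).erase j.1).erase k.1) with hA
  have eR : ∑ i ∈ wsAv z S, c i.2 * (wsW ω i * wsB ω z (S.erase i.1) g (wsT i v) (wsT i v)) =
      ∑ i ∈ wsAv z S, ∑ j ∈ wsAv z (S.erase i.1),
        wsW ω i * wsW ω j * (c i.2 * wsT i v j) * A i j := by
    refine Finset.sum_congr rfl fun i _ => ?_
    unfold wsB wsRow
    rw [Finset.mul_sum, Finset.mul_sum]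
    refine Finset.sum_congr rfl fun j _ => ?_
    simp only [hA]; ring
  have eL : wsB ω z S (wsP ω z c g) v v =
      ∑ i ∈ wsAv z S, ∑ j ∈ wsAv z (S.erase i.1),
        wsW ω i * wsW ω j * (c j.2 * v i) * A i j := by
    have : wsB ω z S (wsP ω z c g) v v = ∑ i ∈ wsAv z S, v i * (wsW ω i *
        wsB ω z (S.erase i.1) g (fun j => c j.2) (wsT i v)) := by
      unfold wsB
      refine Finset.sum_congr rfl fun i _ => ?_
      rw [wsRow_inh, wsB_symm]; rfl
    rw [this]
    refine Finset.sum_congr rfl fun i _ => ?_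
    unfold wsB wsRow
    rw [Finset.mul_sum, Finset.mul_sum]
    refine Finset.sum_congr rfl fun j _ => ?_
    simp only [hA]; ring
  rw [eR, eL, ws_split, ws_split]
  refine add_le_add (le_of_eq ?_) ?_
  · refine Finset.sum_congr rfl fun i _ => Finset.sum_congr rfl fun j hj => ?_
    have hr := (Finset.mem_filter.1 hj).2
    simp only [wsT, if_pos hr]
    rw [hr.1]
  · have sw1 := ws_swap z S (fun i j => wsW ω i * wsW ω j * (c j.2 * v i) * A i j)
    have sw2 := ws_swap z S (fun i j => wsW ω i * wsW ω j * (c i.2 * wsT i v j) * A i j)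
    suffices H : ∑ i ∈ wsAv z S, ∑ j ∈ (wsAv z S).filter (fun j => j.1 ≠ i.1),
        (wsW ω i * wsW ω j * (c j.2 * v i) * A i j + wsW ω j * wsW ω i * (c i.2 * v j) * A j i) ≤
        ∑ i ∈ wsAv z S, ∑ j ∈ (wsAv z S).filter (fun j => j.1 ≠ i.1),
        (wsW ω i * wsW ω j * (c i.2 * wsT i v j) * A i j +
          wsW ω j * wsW ω i * (c j.2 * wsT j v i) * A j i) by
      simp only [Finset.sum_add_distrib] at H
      linarith
    refine Finset.sum_le_sum fun i hi => Finset.sum_le_sum fun j hj => ?_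
    have hj' := (Finset.mem_filter.1 hj).1
    have hij := wsAv_not_rel hi hj'
    have hji := wsAv_not_rel hj' hi
    have t1 : wsT i v j = v j := by simp only [wsT, if_neg hij]
    have t2 : wsT j v i = v i := by simp only [wsT, if_neg hji]
    rw [t1, t2]
    have hdiff : A i j - A j i = ∑ k ∈ (wsAv z ((S.erase i.1).erase j.1)).filter
        (fun k => wsRel i k ∧ wsRel j k),
        wsW ω k * (v j - v i) * g (((S.erase i.1).erase j.1).erase k.1) := by
      simp only [hA]
      rw [Finset.erase_right_comm (a := j.1), ← Finset.sum_sub_distrib, Finset.sum_filter]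
      refine Finset.sum_congr rfl fun k _ => ?_
      have e1 : wsT j (wsT i v) k = if wsRel j k then v j else if wsRel i k then v i else v k := by
        simp only [wsT, if_neg hij]
      have e2 : wsT i (wsT j v) k = if wsRel i k then v i else if wsRel j k then v j else v k := by
        simp only [wsT, if_neg hji]
      rw [e1, e2]
      by_cases h1 : wsRel i k <;> by_cases h2 : wsRel j k <;> simp [h1, h2] <;> ring
    have hprod : 0 ≤ (c i.2 * v j - c j.2 * v i) * (A i j - A j i) := by
      rw [hdiff, Finset.mul_sum]
      refine Finset.sum_nonneg fun k hk => ?_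
      obtain ⟨h1, h2⟩ := (Finset.mem_filter.1 hk).2
      have : i.2 = j.2 := h1.1.trans h2.1.symm
      rw [this]
      have e : (c j.2 * v j - c j.2 * v i) *
          (wsW ω k * (v j - v i) * g (((S.erase i.1).erase j.1).erase k.1)) =
          c j.2 * wsW ω k * g (((S.erase i.1).erase j.1).erase k.1) * (v j - v i) ^ 2 := by ring
      rw [e]
      have := (hc j.2).le
      have := (wsW_pos hω k).le
      have := hg (((S.erase i.1).erase j.1).erase k.1)
      positivity
    have hw := mul_nonneg (mul_pos (wsW_pos hω i) (wsW_pos hω j)).le hprod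
    nlinarith [hw]

/-- hyperbolicity of the form. -/
def wsHyp (ω : X → ℝ) (z : X) (S : Finset X) (g : Finset X → ℝ) : Prop :=
  ∀ u v, 0 ≤ wsB ω z S g v v → wsB ω z S g u u * wsB ω z S g v v ≤ (wsB ω z S g u v) ^ 2

theorem wsHyp_of {ω : X → ℝ} {z : X} {S : Finset X} {g : Finset X → ℝ} (h : X × Bool → ℝ)
    (H : ∀ v, wsB ω z S g v h = 0 → wsB ω z S g v v ≤ 0) : wsHyp ω z S g := by
  intro u v hv
  rcases hv.eq_or_lt with h0 | hpos
  · rw [← h0, mul_zero]; positivity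
  set B := wsB ω z S g with hB
  have badd : ∀ a b c, B (a + b) c = B a c + B b c := wsB_add_left ω z S g
  have bsm : ∀ (t : ℝ) a c, B (t • a) c = t * B a c := wsB_smul_left ω z S g
  have bsy : ∀ a b, B a b = B b a := wsB_symm ω z S g
  have ha : B v h ≠ 0 := fun h0 => absurd (H v h0) (not_le.2 hpos)
  set a := B v h
  set b := B u h with hb
  have hp := H (a • u + (-b) • v) (by rw [badd, bsm, bsm]; ring)
  have e : B (a • u + (-b) • v) (a • u + (-b) • v) =
      a ^ 2 * B u u - 2 * a * b * B u v + b ^ 2 * B v v := by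
    rw [badd, bsm, bsm, bsy u, bsy v, badd, badd, bsm, bsm, bsm, bsm, bsy v u]; ring
  rw [e] at hp
  have ha2 : 0 < a ^ 2 := by positivity
  by_contra hcon
  push Not at hcon
  have h1 : 0 < a ^ 2 * (B u u * B v v - B u v ^ 2) := mul_pos ha2 (by linarith)
  nlinarith [mul_le_mul_of_nonneg_right hp hpos.le, sq_nonneg (b * B v v - a * B u v)]

theorem wsP_nonneg {ω : X → ℝ} (hω : ∀ x, 0 < ω x) (z : X) {c : Bool → ℝ} (hc : ∀ b, 0 ≤ c b)
    {g : Finset X → ℝ} (hg : ∀ S, 0 ≤ g S) (S : Finset X) : 0 ≤ wsP ω z c g S :=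
  Finset.sum_nonneg fun i _ => mul_nonneg (mul_nonneg (wsW_pos hω i).le (hc _)) (hg _)

theorem wsP_pos {ω : X → ℝ} (hω : ∀ x, 0 < ω x) (z : X) {c : Bool → ℝ} (hc : ∀ b, 0 < c b)
    {g : Finset X → ℝ} {m : ℕ} (hg : ∀ S : Finset X, S.card = m → 0 < g S) (S : Finset X)
    (hS : S.card = m + 1) : 0 < wsP ω z c g S := by
  refine Finset.sum_pos (fun i hi => mul_pos (mul_pos (wsW_pos hω i) (hc _)) (hg _ ?_))
    (wsAv_nonempty z S (Finset.card_pos.1 (by omega)))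
  rw [Finset.card_erase_of_mem (mem_wsAv.1 hi).1, hS]; rfl

/-- connectivity. -/
theorem ws_conn (z : X) (S : Finset X) (hS : 2 ≤ S.card) (p : X × Bool → ℝ)
    (hp : ∀ i ∈ wsAv z S, ∀ j ∈ wsAv z S, j.1 ≠ i.1 → p i = p j)
    (i j : X × Bool) (hi : i ∈ wsAv z S) (hj : j ∈ wsAv z S) : p i = p j := by
  by_cases hne : j.1 = i.1
  · by_cases hb : j.2 = i.2
    · rw [Prod.ext hne hb]
    have hi' := mem_wsAv.1 hi
    have hj' := mem_wsAv.1 hj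
    have hb' : j.2 = !i.2 := by cases h1 : i.2 <;> cases h2 : j.2 <;> simp_all
    obtain ⟨k, hk⟩ := wsAv_nonempty z (S.erase i.1) (Finset.card_pos.1 (by
      rw [Finset.card_erase_of_mem hi'.1]; omega))
    have hki := wsAv_ne_of_erase hk
    have hkS : k ∈ wsAv z S := by
      apply wsAv_of_erase hi hk
      rintro ⟨h1, h2⟩
      refine hj'.2.2 k.1 (Finset.mem_of_mem_erase (mem_wsAv.1 hk).1) ?_
      rw [hb', wsr_not, hne]
      exact h2
    rw [hp i hi k hkS hki, hp j hj k hkS (by rw [hne]; exact hki)]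
  · exact hp i hi j hj hne

theorem ws_step {ω : X → ℝ} (hω : ∀ x, 0 < ω x) (z : X) (g : Finset X → ℝ) (m : ℕ)
    (hg0 : ∀ S, 0 ≤ g S) (hg : ∀ S : Finset X, S.card = m → 0 < g S)
    (IH : ∀ S : Finset X, z ∉ S → S.card = m + 2 → wsHyp ω z S g)
    (c : Bool → ℝ) (hc : ∀ b, 0 < c b) (S : Finset X) (hzS : z ∉ S) (hS : S.card = m + 3) :
    wsHyp ω z S (wsP ω z c g) := by
  set G := wsP ω z c g with hGdef
  have hG : ∀ S : Finset X, S.card = m + 1 → 0 < G S := wsP_pos hω z hc hg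
  set h : X × Bool → ℝ := fun i => c i.2 with hh
  have hhpos : ∀ i, 0 < h i := fun i => hc _
  set R := wsRow ω z S G with hR
  have hcardE : ∀ i ∈ wsAv z S, (S.erase i.1).card = m + 2 := fun i hi => by
    rw [Finset.card_erase_of_mem (mem_wsAv.1 hi).1, hS]; rfl
  have hcardE2 : ∀ i ∈ wsAv z S, ∀ j ∈ wsAv z (S.erase i.1),
      ((S.erase i.1).erase j.1).card = m + 1 := fun i hi j hj => by
    rw [Finset.card_erase_of_mem (mem_wsAv.1 hj).1, hcardE i hi]; rfl
  have hRh : ∀ i ∈ wsAv z S, 0 < R i h := by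
    intro i hi
    simp only [hR, wsRow]
    refine mul_pos (wsW_pos hω i) (Finset.sum_pos (fun j hj => ?_)
      (wsAv_nonempty z _ (Finset.card_pos.1 (by rw [hcardE i hi]; omega))))
    rw [hh, wsT_const]
    exact mul_pos (mul_pos (wsW_pos hω j) (hc _)) (hG _ (hcardE2 i hi j hj))
  have h1 : ∀ v, wsB ω z S G v v ≤ ∑ i ∈ wsAv z S, h i * (R i v) ^ 2 / R i h := by
    intro v
    refine (ws_pull hω z S g hg0 c hc v).trans (Finset.sum_le_sum fun i hi => ?_)
    have hhyp := IH (S.erase i.1) (fun hz => hzS (Finset.mem_of_mem_erase hz)) (hcardE i hi)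
    have e1 : R i v = wsW ω i * wsB ω z (S.erase i.1) g (wsT i v) h := wsRow_inh ω z S g c i v
    have e2 : R i h = wsW ω i * wsB ω z (S.erase i.1) g h h := by
      have := wsRow_inh ω z S g c i h
      rw [hh, wsT_const] at this
      exact this
    have hw := wsW_pos hω i
    have hbpos : 0 < wsB ω z (S.erase i.1) g h h := by
      have := hRh i hi
      rw [e2] at this
      exact pos_of_mul_pos_right this hw.le
    have h' := hhyp (wsT i v) h hbpos.le
    rw [le_div_iff₀ (hRh i hi), e1, e2]
    have := mul_le_mul_of_nonneg_left h' (mul_pos (hc i.2) (mul_pos hw hw)).le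
    calc _ = c i.2 * (wsW ω i * wsW ω i) * (wsB ω z (S.erase i.1) g (wsT i v) (wsT i v) *
            wsB ω z (S.erase i.1) g h h) := by ring
      _ ≤ _ := this
      _ = _ := by simp only [hh]; ring
  -- Dirichlet form
  set Dir : (X × Bool → ℝ) → ℝ := fun p => ∑ i ∈ wsAv z S, ∑ j ∈ wsAv z (S.erase i.1),
    h i * wsW ω i * (wsW ω j * h j * G ((S.erase i.1).erase j.1)) * (p i - wsT i p j) ^ 2 with hDir
  have hDirTerm : ∀ p, ∀ i ∈ wsAv z S, ∀ j ∈ wsAv z (S.erase i.1), 0 ≤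
      h i * wsW ω i * (wsW ω j * h j * G ((S.erase i.1).erase j.1)) * (p i - wsT i p j) ^ 2 := by
    intro p i hi j hj
    have a1 := hhpos i
    have a2 := hhpos j
    have a3 := wsW_pos hω i
    have a4 := wsW_pos hω j
    have a5 := hG _ (hcardE2 i hi j hj)
    positivity
  have hD : ∀ p : X × Bool → ℝ, wsB ω z S G (fun i => h i * p i) (fun i => h i * p i) =
      ∑ i ∈ wsAv z S, h i * (p i) ^ 2 * R i h - (1 / 2) * Dir p := by
    intro p
    have hTh : ∀ (q : X × Bool → ℝ) i j, wsT i (fun i => h i * q i) j = h j * wsT i q j := by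
      intro q i j
      unfold wsT
      split_ifs with hr
      · simp only [hh]; rw [hr.1]
      · rfl
    have e1 : ∑ i ∈ wsAv z S, h i * (p i) ^ 2 * R i h =
        wsB ω z S G (fun i => h i * (p i) ^ 2) h := rfl
    have e2 := wsB_symm ω z S G (fun i => h i * (p i) ^ 2) h
    have e3 : wsB ω z S G (fun i => h i * p i) (fun i => h i * p i) =
      (1 / 2) * wsB ω z S G (fun i => h i * (p i) ^ 2) h +
      (1 / 2) * wsB ω z S G h (fun i => h i * (p i) ^ 2) - (1 / 2) * Dir p := by
      rw [wsB_eq, wsB_eq, wsB_eq, hDir]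
      simp only [Finset.mul_sum]
      rw [← Finset.sum_add_distrib, ← Finset.sum_sub_distrib]
      refine Finset.sum_congr rfl fun i _ => ?_
      rw [← Finset.sum_add_distrib, ← Finset.sum_sub_distrib]
      refine Finset.sum_congr rfl fun j _ => ?_
      rw [hTh, hTh]
      have t1 : wsT i h j = h j := by rw [hh, wsT_const]
      have t2 : wsT i (fun i => p i ^ 2) j = (wsT i p j) ^ 2 := by
        unfold wsT; split_ifs <;> rfl
      rw [t1, t2]; ring
    rw [e1, e3, ← e2]; ring
  have hDirNonneg : ∀ p, 0 ≤ Dir p := fun p =>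
    Finset.sum_nonneg fun i hi => Finset.sum_nonneg fun j hj => hDirTerm p i hi j hj
  have hDirZero : ∀ p, Dir p = 0 → ∀ i ∈ wsAv z S, ∀ j ∈ wsAv z S, p i = p j := by
    intro p hp i hi j hj
    refine ws_conn z S (by omega) p ?_ i j hi hj
    intro i hi j hj hne
    have hj' := wsAv_erase_of hj hne
    have h0 := (Finset.sum_eq_zero_iff_of_nonneg (fun i hi =>
      Finset.sum_nonneg fun j hj => hDirTerm p i hi j hj)).1 hp i hi
    have h00 := (Finset.sum_eq_zero_iff_of_nonneg (fun j hj => hDirTerm p i hi j hj)).1 h0 j hj'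
    have hpos : 0 < h i * wsW ω i * (wsW ω j * h j * G ((S.erase i.1).erase j.1)) :=
      mul_pos (mul_pos (hhpos i) (wsW_pos hω i))
        (mul_pos (mul_pos (wsW_pos hω j) (hhpos j)) (hG _ (hcardE2 i hi j hj')))
    have h3 := (mul_eq_zero.1 h00).resolve_left hpos.ne'
    have h4 : wsT i p j = p j := by simp only [wsT, if_neg (wsAv_not_rel hi hj)]
    rw [h4] at h3
    have := pow_eq_zero_iff (n := 2) (by norm_num) |>.1 h3
    linarith
  -- the linear operator
  let L : (X × Bool → ℝ) →ₗ[ℝ] (X × Bool → ℝ) :=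
    { toFun := fun v i => if i ∈ wsAv z S then R i v else 0
      map_add' := by
        intro u v; funext i
        simp only [Pi.add_apply]
        split_ifs
        · exact wsRow_add ω z S G i u v
        · simp
      map_smul' := by
        intro a v; funext i
        simp only [Pi.smul_apply, smul_eq_mul, RingHom.id_apply]
        split_ifs
        · exact wsRow_smul ω z S G i a v
        · simp }
  have hL : ∀ v i, L v i = if i ∈ wsAv z S then R i v else 0 := fun _ _ => rfl
  have hLB : ∀ u v, ∑ i, u i * L v i = wsB ω z S G u v := by
    intro u v
    simp only [hL, mul_ite, mul_zero]
    rw [← Finset.sum_filter]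
    simp only [Finset.filter_mem_eq_inter, Finset.univ_inter]
    rfl
  set d : X × Bool → ℝ := fun i => if i ∈ wsAv z S then R i h / h i else 1 with hd
  set h' : X × Bool → ℝ := fun i => if i ∈ wsAv z S then h i else 0 with hh'
  have hdpos : ∀ i, 0 < d i := by
    intro i
    simp only [hd]
    split_ifs with hi
    · exact div_pos (hRh i hi) (hhpos i)
    · exact one_pos
  have hB2 : ∀ v, wsB ω z S G v v = ∑ i ∈ wsAv z S, d i * (v i) ^ 2 -
      (1 / 2) * Dir (fun i => v i / h i) := by
    intro v
    have := hD (fun i => v i / h i)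
    have e : (fun i => h i * (v i / h i)) = v := by
      funext i; field_simp [(hhpos i).ne']
    rw [e] at this
    rw [this]
    congr 1
    refine Finset.sum_congr rfl fun i hi => ?_
    simp only [hd, if_pos hi]
    have := (hhpos i).ne'
    field_simp
  have hsplit : ∀ v : X × Bool → ℝ, ∑ i, d i * (v i) ^ 2 = ∑ i ∈ wsAv z S, d i * (v i) ^ 2 +
      ∑ i ∈ (wsAv z S)ᶜ, (v i) ^ 2 := by
    intro v
    rw [← Finset.sum_add_sum_compl (wsAv z S)]
    congr 1
    refine Finset.sum_congr rfl fun i hi => ?_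
    simp only [hd, if_neg (Finset.mem_compl.1 hi), one_mul]
  refine wsHyp_of h fun v hv => ?_
  rw [← hLB]
  refine ws_spec L (fun u v => ?_) h' d hdpos (fun v => ?_) (fun v => ?_) (fun v hv => ?_) v ?_
  · rw [hLB, hLB, wsB_symm]
  · rw [hLB]
    refine (h1 v).trans (le_of_eq ?_)
    rw [← Finset.sum_subset (Finset.subset_univ (wsAv z S))]
    · refine Finset.sum_congr rfl fun i hi => ?_
      simp only [hd, hL, if_pos hi]
      have := (hhpos i).ne'
      have := (hRh i hi).ne'
      field_simp
    · intro i _ hi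
      simp [hL, if_neg hi]
  · rw [hLB, hB2, hsplit]
    have := hDirNonneg (fun i => v i / h i)
    have : 0 ≤ ∑ i ∈ (wsAv z S)ᶜ, (v i) ^ 2 := Finset.sum_nonneg fun i _ => sq_nonneg _
    linarith
  · rw [hLB, hB2, hsplit] at hv
    have a1 := hDirNonneg (fun i => v i / h i)
    have a2 : 0 ≤ ∑ i ∈ (wsAv z S)ᶜ, (v i) ^ 2 := Finset.sum_nonneg fun i _ => sq_nonneg _
    have b1 : Dir (fun i => v i / h i) = 0 := by linarith
    have b2 : ∑ i ∈ (wsAv z S)ᶜ, (v i) ^ 2 = 0 := by linarith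
    obtain ⟨i0, hi0⟩ := wsAv_nonempty z S (Finset.card_pos.1 (by omega))
    refine ⟨v i0 / h i0, fun i => ?_⟩
    by_cases hi : i ∈ wsAv z S
    · have := hDirZero _ b1 i hi i0 hi0
      simp only [hh', if_pos hi, ← this]
      have := (hhpos i).ne'
      field_simp
    · have := (Finset.sum_eq_zero_iff_of_nonneg (fun i _ => sq_nonneg (v i))).1 b2 i
        (Finset.mem_compl.2 hi)
      simp only [hh', if_neg hi, mul_zero]
      exact pow_eq_zero_iff (n := 2) (by norm_num) |>.1 this
  · rw [← hv]
    unfold wsB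
    rw [← Finset.sum_subset (Finset.subset_univ (wsAv z S))]
    · refine Finset.sum_congr rfl fun i hi => ?_
      simp only [hd, hh', if_pos hi]
      have := (hhpos i).ne'
      field_simp
      exact mul_comm _ _
    · intro i _ hi
      simp [hh', if_neg hi]

theorem ws_sum_av (z : X) (S : Finset X) (f : X × Bool → ℝ) :
    ∑ i ∈ wsAv z S, f i = ∑ x ∈ S, ((if wsAvail z S (x, true) then f (x, true) else 0) +
      (if wsAvail z S (x, false) then f (x, false) else 0)) := by
  unfold wsAv
  rw [Finset.sum_filter, Fintype.sum_prod_type]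
  simp only [Fintype.sum_bool]
  refine (Finset.sum_subset (Finset.subset_univ S) fun x _ hx => ?_).symm
  simp [wsAvail, hx]

theorem ws_quad (p q r a b a' b' : ℝ) (h : p * r ≤ q ^ 2) :
    (p * a * a + q * a * b + q * b * a + r * b * b) *
      (p * a' * a' + q * a' * b' + q * b' * a' + r * b' * b') ≤
      (p * a * a' + q * a * b' + q * b * a' + r * b * b') ^ 2 := by
  nlinarith [mul_nonneg (sub_nonneg.2 h) (sq_nonneg (a * b' - b * a'))]

/-- base case. -/
theorem ws_base {ω : X → ℝ} (hω : ∀ x, 0 < ω x) (hrev : ∀ x y : X, x ≤ y → ω y ≤ ω x)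
    (z : X) (S : Finset X) (hzS : z ∉ S) (hS : S.card = 2) :
    wsHyp ω z S (fun _ => 1) := by
  obtain ⟨a, b, hab, rfl⟩ := Finset.card_eq_two.1 hS
  have main : ∀ a b : X, a ≠ b → z ∉ ({a, b} : Finset X) → ¬ b < a →
      wsHyp ω z {a, b} (fun _ => 1) := by
    intro a b hab hz hba u v _
    have hba' := hab.symm
    have e1 : ({a, b} : Finset X).erase a = {b} := by
      rw [Finset.erase_insert]; simpa using hab
    have e2 : ({a, b} : Finset X).erase b = {a} := by
      rw [Finset.pair_comm, Finset.erase_insert]; simpa using hba'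
    let K : X → X → Bool → (X × Bool → ℝ) → (X × Bool → ℝ) → ℝ := fun x y c u v =>
      if wsAvail z {a, b} (x, c) then
        ((if wsAvail z {y} (y, true) then
            u (x, c) * wsW ω (x, c) * wsW ω (y, true) * wsT (x, c) v (y, true) * 1 else 0) +
         (if wsAvail z {y} (y, false) then
            u (x, c) * wsW ω (x, c) * wsW ω (y, false) * wsT (x, c) v (y, false) * 1 else 0))
      else 0
    have eB : ∀ u v, wsB ω z {a, b} (fun _ => 1) u v =
        (K a b true u v + K a b false u v) + (K b a true u v + K b a false u v) := fun u v => by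
      rw [wsB_eq, ws_sum_av, Finset.sum_pair hab]
      simp only [ws_sum_av, e1, e2, Finset.sum_singleton, K]
    simp only [eB, K]
    clear eB K
    by_cases h : a < b
    · by_cases h1 : z < a
      · have h2 : z < b := h1.trans h
        have h3 := h1.not_gt
        have h4 := h2.not_gt
        simp [wsAvail, wsr, wsT, wsRel, wsW, h, h1, h2, h3, h4, hba]
        nlinarith
      · by_cases h2 : b < z
        · have h3 : a < z := h.trans h2
          have h4 := h2.not_gt
          simp [wsAvail, wsr, wsT, wsRel, wsW, h, h1, h2, h3, h4, hba]
          nlinarith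
        · have hx := hrev a b h.le
          have hpa := hω a
          have hpb := hω b
          by_cases h3 : a < z <;> by_cases h4 : z < b <;>
          simp [wsAvail, wsr, wsT, wsRel, wsW, h, h1, h2, h3, h4, hba]
          · refine le_trans (le_of_eq ?_) ((ws_quad (0) (ω a) (0) (u (a, true)) (u (b, false))
              (v (a, true)) (v (b, false)) (by nlinarith)).trans (le_of_eq ?_)) <;> ring
          · refine le_trans (le_of_eq ?_) ((ws_quad (ω a * ω b) (ω a) (0) (u (a, true)) (u (b, false))
              (v (a, true)) (v (b, false)) (by nlinarith)).trans (le_of_eq ?_)) <;> ring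
          · refine le_trans (le_of_eq ?_) ((ws_quad (0) (ω a) (1) (u (a, true)) (u (b, false))
              (v (a, true)) (v (b, false)) (by nlinarith)).trans (le_of_eq ?_)) <;> ring
          · refine le_trans (le_of_eq ?_) ((ws_quad (ω a * ω b) (ω a) (1) (u (a, true)) (u (b, false))
              (v (a, true)) (v (b, false)) (by nlinarith)).trans (le_of_eq ?_)) <;> ring
    · let l : X → (X × Bool → ℝ) → ℝ := fun x u =>
        (if z < x then 0 else ω x * u (x, true)) + (if x < z then 0 else u (x, false))
      refine le_trans (le_of_eq ?_) ((ws_quad 0 1 0 (l a u) (l b u)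
              (l a v) (l b v) (by norm_num)).trans (le_of_eq ?_)) <;>
      simp only [l] <;>
      by_cases h1 : z < a <;> by_cases h2 : z < b <;> by_cases h3 : a < z <;>
      by_cases h4 : b < z <;>
      simp [wsAvail, wsr, wsT, wsRel, wsW, h, h1, h2, h3, h4, hba] <;> try ring
  by_cases h : b < a
  · rw [Finset.pair_comm] at hzS ⊢
    exact main b a hab.symm hzS h.not_gt
  · exact main a b hab hzS h

/-- iterated operator. -/
def wsG (ω : X → ℝ) (z : X) : List (Bool → ℝ) → Finset X → ℝ
  | [] => fun _ => 1
  | c :: C => wsP ω z c (wsG ω z C)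

theorem wsG_nonneg {ω : X → ℝ} (hω : ∀ x, 0 < ω x) (z : X) (C : List (Bool → ℝ))
    (hC : ∀ c ∈ C, ∀ b, 0 < c b) (S : Finset X) : 0 ≤ wsG ω z C S := by
  induction C generalizing S with
  | nil => exact zero_le_one
  | cons c C ih =>
    exact wsP_nonneg hω z (fun b => (hC c (by simp) b).le)
      (fun S => ih (fun c' hc' => hC c' (by simp [hc'])) S) S

theorem wsG_pos {ω : X → ℝ} (hω : ∀ x, 0 < ω x) (z : X) (C : List (Bool → ℝ))
    (hC : ∀ c ∈ C, ∀ b, 0 < c b) (S : Finset X) (hS : S.card = C.length) : 0 < wsG ω z C S := by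
  induction C generalizing S with
  | nil => exact zero_lt_one
  | cons c C ih =>
    exact wsP_pos hω z (hC c (by simp))
      (fun S hS => ih (fun c' hc' => hC c' (by simp [hc'])) S hS) S (by simpa using hS)

theorem wsG_hyp {ω : X → ℝ} (hω : ∀ x, 0 < ω x) (hrev : ∀ x y : X, x ≤ y → ω y ≤ ω x)
    (z : X) (C : List (Bool → ℝ)) (hC : ∀ c ∈ C, ∀ b, 0 < c b) (S : Finset X) (hz : z ∉ S)
    (hS : S.card = C.length + 2) : wsHyp ω z S (wsG ω z C) := by
  induction C generalizing S with
  | nil => exact ws_base hω hrev z S hz (by simpa using hS)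
  | cons c C ih =>
    have hC' : ∀ c ∈ C, ∀ b, 0 < c b := fun c' hc' => hC c' (by simp [hc'])
    exact ws_step hω z (wsG ω z C) C.length (wsG_nonneg hω z C hC') (wsG_pos hω z C hC')
      (fun S hz hS => ih hC' S hz hS) c (hC c (by simp)) S hz (by simpa using hS)

/-- perturbed indicator. -/
def wsDel (e : ℝ) (b : Bool) : Bool → ℝ := fun b' => (if b' = b then 1 else 0) + e

theorem wsG_cont (ω : X → ℝ) (z : X) (bs : List Bool) (S : Finset X) :
    Continuous fun e : ℝ => wsG ω z (bs.map (wsDel e)) S := by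
  induction bs generalizing S with
  | nil => exact continuous_const
  | cons b bs ih =>
    simp only [List.map_cons, wsG, wsP, wsDel]
    refine continuous_finsetSum _ fun i _ => ?_
    exact (continuous_const.mul (continuous_const.add continuous_id)).mul (ih _)

theorem wsG_ineq {ω : X → ℝ} (hω : ∀ x, 0 < ω x) (hrev : ∀ x y : X, x ≤ y → ω y ≤ ω x)
    (z : X) (bs : List Bool) (S : Finset X) (hz : z ∉ S) (hS : S.card = bs.length + 2) :
    wsG ω z ((true :: true :: bs).map (wsDel 0)) S *
      wsG ω z ((false :: false :: bs).map (wsDel 0)) S ≤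
      (wsG ω z ((true :: false :: bs).map (wsDel 0)) S) ^ 2 := by
  have hpos : ∀ e : ℝ, 0 < e → wsG ω z ((true :: true :: bs).map (wsDel e)) S *
      wsG ω z ((false :: false :: bs).map (wsDel e)) S ≤
      (wsG ω z ((true :: false :: bs).map (wsDel e)) S) ^ 2 := by
    intro e he
    have hdel : ∀ b b', 0 < wsDel e b b' := by
      intro b b'; unfold wsDel; split_ifs <;> linarith
    have hC : ∀ bs : List Bool, ∀ c ∈ bs.map (wsDel e), ∀ b, 0 < c b := by
      intro bs c hc b
      obtain ⟨b', _, rfl⟩ := List.mem_map.1 hc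
      exact hdel _ _
    have H := wsG_hyp hω hrev z (bs.map (wsDel e)) (hC bs) S hz (by simpa using hS)
      (fun i => wsDel e true i.2) (fun i => wsDel e false i.2)
    rw [wsB_const, wsB_const, wsB_const] at H
    exact H (wsG_nonneg hω z ((false :: false :: bs).map (wsDel e)) (hC _) S)
  have t1 := (wsG_cont ω z (true :: true :: bs) S).tendsto 0
  have t2 := (wsG_cont ω z (false :: false :: bs) S).tendsto 0
  have t3 := (wsG_cont ω z (true :: false :: bs) S).tendsto 0
  refine le_of_tendsto_of_tendsto (b := nhdsWithin (0 : ℝ) (Set.Ioi 0))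
    ((t1.mul t2).mono_left nhdsWithin_le_nhds) ((t3.pow 2).mono_left nhdsWithin_le_nhds) ?_
  filter_upwards [self_mem_nhdsWithin] with e he
  exact hpos e he

/-- labellings of the state `S`. -/
def wsFs (z : X) (k0 : ℕ) (S : Finset X) (a : ℕ) : Finset (X → ℕ) :=
  (Fintype.piFinset (fun _ : X => Finset.range (a + S.card + 1))).filter fun f =>
    (∀ x, x ∉ S → f x = k0) ∧ (∀ x ∈ S, f x ≠ k0 ∧ a ≤ f x ∧ f x ≤ a + S.card) ∧
    Set.InjOn f S ∧ ∀ x ∈ insert z S, ∀ y ∈ insert z S, x < y → f x < f y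

theorem mem_wsFs {z : X} {k0 : ℕ} {S : Finset X} {a : ℕ} (hk : k0 ≤ a + S.card) {f : X → ℕ} :
    f ∈ wsFs z k0 S a ↔
    (∀ x, x ∉ S → f x = k0) ∧ (∀ x ∈ S, f x ≠ k0 ∧ a ≤ f x ∧ f x ≤ a + S.card) ∧
    Set.InjOn f S ∧ ∀ (b : Bool), ∀ x ∈ insert z S, ∀ y ∈ insert z S,
      wsr b x y → wsr b (f x) (f y) := by
  unfold wsFs
  rw [Finset.mem_filter]
  constructor
  · rintro ⟨_, h1, h2, h3, h4⟩
    refine ⟨h1, h2, h3, fun b x hx y hy hxy => ?_⟩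
    cases b <;> simp only [wsr] at hxy ⊢ <;> simp at hxy ⊢
    · exact h4 y hy x hx hxy
    · exact h4 x hx y hy hxy
  · rintro ⟨h1, h2, h3, h4⟩
    refine ⟨?_, h1, h2, h3, fun x hx y hy hxy => ?_⟩
    · rw [Fintype.mem_piFinset]
      intro x
      rw [Finset.mem_range]
      by_cases hx : x ∈ S
      · have := (h2 x hx).2.2; omega
      · rw [h1 x hx]; omega
    · have := h4 true x hx y hy (by simpa [wsr] using hxy)
      simpa [wsr] using this

/-- weight of a labelling. -/
def wsFw (ω : X → ℝ) (k0 : ℕ) (S : Finset X) (f : X → ℕ) : ℝ :=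
  ∏ x ∈ S, if f x < k0 then ω x else 1

theorem wsFs_peel (ω : X → ℝ) (z : X) (k0 : ℕ) (S : Finset X) (hz : z ∉ S) (hS : 0 < S.card)
    (b : Bool) (a a' pos : ℕ)
    (hk1 : a ≤ k0) (hk2 : k0 ≤ a + S.card)
    (p1 : a ≤ pos ∧ pos ≤ a + S.card ∧ pos ≠ k0)
    (p2 : ∀ t, (a ≤ t ∧ t ≤ a + S.card ∧ t ≠ pos) ↔ (a' ≤ t ∧ t ≤ a' + (S.card - 1)))
    (p3 : ∀ t, a ≤ t → t ≤ a + S.card → t ≠ pos → wsr b pos t) :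
    ∑ f ∈ wsFs z k0 S a, wsFw ω k0 S f =
      ∑ x ∈ S.filter (fun x => wsAvail z S (x, b)),
        wsW ω (x, b) * ∑ f ∈ wsFs z k0 (S.erase x) a', wsFw ω k0 (S.erase x) f := by
  have hk' := (p2 k0).1 ⟨hk1, hk2, p1.2.2.symm⟩
  have hW : ∀ x, wsW ω (x, b) = if pos < k0 then ω x else 1 := by
    intro x
    have := p3 k0 hk1 hk2 p1.2.2.symm
    cases b
    · simp [wsr] at this
      simp [wsW, this.le]
    · simp [wsr] at this
      simp [wsW, this]
  simp only [Finset.mul_sum]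
  rw [Finset.sum_sigma']
  symm
  have hmem' : ∀ x ∈ S, ∀ f, f ∈ wsFs z k0 (S.erase x) a' ↔
      (∀ y, y ∉ S.erase x → f y = k0) ∧
      (∀ y ∈ S.erase x, f y ≠ k0 ∧ a' ≤ f y ∧ f y ≤ a' + (S.card - 1)) ∧
      Set.InjOn f (S.erase x : Finset X) ∧ ∀ (b : Bool), ∀ y ∈ insert z (S.erase x),
      ∀ t ∈ insert z (S.erase x), wsr b y t → wsr b (f y) (f t) := by
    intro x hx f
    have hc : (S.erase x).card = S.card - 1 := Finset.card_erase_of_mem hx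
    rw [mem_wsFs (by rw [hc]; exact hk'.2), hc]
  refine Finset.sum_bij (fun p _ => Function.update p.2 p.1 pos) ?_ ?_ ?_ ?_
  · rintro ⟨x, f⟩ hp
    simp only [Finset.mem_sigma, Finset.mem_filter] at hp
    obtain ⟨⟨hx, hav⟩, hf⟩ := hp
    rw [hmem' x hx] at hf
    obtain ⟨f1, f2, f3, f4⟩ := hf
    have hzx : z ≠ x := fun h => hz (h ▸ hx)
    have f2' : ∀ y ∈ S.erase x, f y ≠ k0 ∧ a ≤ f y ∧ f y ≤ a + S.card ∧ f y ≠ pos := by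
      intro y hy
      obtain ⟨q1, q2⟩ := f2 y hy
      have := (p2 (f y)).2 q2
      exact ⟨q1, this.1, this.2.1, this.2.2⟩
    have fz : f z = k0 := f1 z (fun h => hz (Finset.mem_of_mem_erase h))
    rw [mem_wsFs hk2]
    refine ⟨?_, ?_, ?_, ?_⟩
    · intro y hy
      have hyx : y ≠ x := fun h => hy (h ▸ hx)
      simp only [Function.update_of_ne hyx]
      exact f1 y (fun h => hy (Finset.mem_of_mem_erase h))
    · intro y hy
      by_cases hyx : y = x
      · subst hyx
        simp only [Function.update_self]
        exact ⟨p1.2.2, p1.1, p1.2.1⟩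
      · simp only [Function.update_of_ne hyx]
        have := f2' y (Finset.mem_erase.2 ⟨hyx, hy⟩)
        exact ⟨this.1, this.2.1, this.2.2.1⟩
    · intro y hy t ht hyt
      simp only at hyt
      by_cases hyx : y = x <;> by_cases htx : t = x
      · rw [hyx, htx]
      · subst hyx
        rw [Function.update_self, Function.update_of_ne htx] at hyt
        exact absurd hyt.symm (f2' t (Finset.mem_erase.2 ⟨htx, ht⟩)).2.2.2
      · subst htx
        rw [Function.update_self, Function.update_of_ne hyx] at hyt
        exact absurd hyt (f2' y (Finset.mem_erase.2 ⟨hyx, hy⟩)).2.2.2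
      · rw [Function.update_of_ne hyx, Function.update_of_ne htx] at hyt
        exact f3 (Finset.mem_coe.2 (Finset.mem_erase.2 ⟨hyx, hy⟩))
          (Finset.mem_coe.2 (Finset.mem_erase.2 ⟨htx, ht⟩)) hyt
    · have hrange : ∀ y ∈ insert z S, y ≠ x → wsr b pos (f y) := by
        intro y hy hyx
        rcases Finset.mem_insert.1 hy with rfl | hy
        · rw [fz]; exact p3 k0 hk1 hk2 p1.2.2.symm
        · have := f2' y (Finset.mem_erase.2 ⟨hyx, hy⟩)
          exact p3 _ this.2.1 this.2.2.1 this.2.2.2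
      have hno : ∀ y ∈ insert z S, ¬ wsr b y x := by
        intro y hy
        rcases Finset.mem_insert.1 hy with rfl | hy
        · exact hav.2.1
        · exact hav.2.2 y hy
      have hins : ∀ y ∈ insert z S, y ≠ x → y ∈ insert z (S.erase x) := by
        intro y hy hyx
        rcases Finset.mem_insert.1 hy with rfl | hy
        · exact Finset.mem_insert_self _ _
        · exact Finset.mem_insert_of_mem (Finset.mem_erase.2 ⟨hyx, hy⟩)
      have hb : ∀ y ∈ insert z S, ∀ t ∈ insert z S, wsr b y t →
          wsr b (Function.update f x pos y) (Function.update f x pos t) := by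
        intro y hy t ht hyt
        have htx : t ≠ x := by rintro rfl; exact hno y hy hyt
        by_cases hyx : y = x
        · subst hyx
          rw [Function.update_self, Function.update_of_ne htx]
          exact hrange t ht htx
        · rw [Function.update_of_ne hyx, Function.update_of_ne htx]
          exact f4 b y (hins y hy hyx) t (hins t ht htx) hyt
      intro b' y hy t ht hyt
      by_cases hbb : b' = b
      · rw [hbb] at hyt ⊢; exact hb y hy t ht hyt
      · have hb' : b' = !b := by cases b <;> cases b' <;> simp_all
        rw [hb', wsr_not] at hyt
        have := hb t ht y hy hyt
        rw [hb']
        cases b <;> simpa [wsr] using this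
  · rintro ⟨x, f⟩ hp ⟨y, f'⟩ hp' heq
    simp only [Finset.mem_sigma, Finset.mem_filter] at hp hp' heq
    obtain ⟨⟨hx, _⟩, hf⟩ := hp
    obtain ⟨⟨hy, _⟩, hf'⟩ := hp'
    rw [hmem' x hx] at hf
    rw [hmem' y hy] at hf'
    have hxy : x = y := by
      by_contra hne
      have h1 := congrFun heq y
      rw [Function.update_self, Function.update_of_ne (Ne.symm hne)] at h1
      have := hf.2.1 y (Finset.mem_erase.2 ⟨Ne.symm hne, hy⟩)
      exact ((p2 _).2 this.2).2.2 h1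
    subst hxy
    have : f = f' := by
      funext t
      by_cases ht : t = x
      · subst ht
        rw [hf.1 t (by simp), hf'.1 t (by simp)]
      · have h1 := congrFun heq t
        rwa [Function.update_of_ne ht, Function.update_of_ne ht] at h1
    rw [this]
  · intro f hf
    rw [mem_wsFs hk2] at hf
    obtain ⟨f1, f2, f3, f4⟩ := hf
    have fz : f z = k0 := f1 z hz
    have hinj : Set.InjOn f (insert z S : Finset X) := by
      intro x hx y hy hxy
      rcases Finset.mem_insert.1 (Finset.mem_coe.1 hx) with hxz | hxS <;>
      rcases Finset.mem_insert.1 (Finset.mem_coe.1 hy) with hyz | hyS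
      · rw [hxz, hyz]
      · exact absurd (by rw [← hxy, hxz, fz]) (f2 y hyS).1
      · exact absurd (by rw [hxy, hyz, fz]) (f2 x hxS).1
      · exact f3 hxS hyS hxy
    have hr : ∀ y ∈ insert z S, a ≤ f y ∧ f y ≤ a + S.card := by
      intro y hy
      rcases Finset.mem_insert.1 hy with rfl | hy
      · rw [fz]; exact ⟨hk1, hk2⟩
      · exact (f2 y hy).2
    have himg : (insert z S).image f = Finset.Icc a (a + S.card) := by
      apply Finset.eq_of_subset_of_card_le
      · intro t ht
        obtain ⟨y, hy, rfl⟩ := Finset.mem_image.1 ht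
        exact Finset.mem_Icc.2 (hr y hy)
      · rw [Finset.card_image_of_injOn hinj, Finset.card_insert_of_notMem hz, Nat.card_Icc]
        omega
    have hposmem : pos ∈ (insert z S).image f := by
      rw [himg]; exact Finset.mem_Icc.2 ⟨p1.1, p1.2.1⟩
    obtain ⟨x, hx0, hfx⟩ := Finset.mem_image.1 hposmem
    have hxz : x ≠ z := by rintro rfl; exact p1.2.2 (by rw [← hfx, fz])
    have hx : x ∈ S := (Finset.mem_insert.1 hx0).resolve_left hxz
    have hmin : ∀ y ∈ insert z S, ¬ wsr b y x := by
      intro y hy hyx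
      have h1 := f4 b y hy x hx0 hyx
      have hne : y ≠ x := by rintro rfl; exact wsr_irrefl _ _ hyx
      have hne' : f y ≠ pos := by
        rw [← hfx]; exact fun h => hne (hinj hy hx0 h)
      have h2 := p3 (f y) (hr y hy).1 (hr y hy).2 hne'
      rw [hfx] at h1
      cases b <;> simp [wsr] at h1 h2 <;> omega
    refine ⟨⟨x, Function.update f x k0⟩, ?_, ?_⟩
    · simp only [Finset.mem_sigma, Finset.mem_filter]
      refine ⟨⟨hx, hx, hmin z (Finset.mem_insert_self _ _),
        fun y hy => hmin y (Finset.mem_insert_of_mem hy)⟩, ?_⟩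
      rw [hmem' x hx]
      refine ⟨?_, ?_, ?_, ?_⟩
      · intro y hy
        by_cases hyx : y = x
        · subst hyx; simp
        · rw [Function.update_of_ne hyx]
          exact f1 y (fun h => hy (Finset.mem_erase.2 ⟨hyx, h⟩))
      · intro y hy
        have hyx := Finset.ne_of_mem_erase hy
        have hyS := Finset.mem_of_mem_erase hy
        rw [Function.update_of_ne hyx]
        refine ⟨(f2 y hyS).1, (p2 _).1 ⟨(f2 y hyS).2.1, (f2 y hyS).2.2, ?_⟩⟩
        rw [← hfx]; exact fun h => hyx (f3 hyS hx h)
      · intro y hy t ht hyt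
        have hy := Finset.mem_coe.1 hy
        have ht := Finset.mem_coe.1 ht
        rw [Function.update_of_ne (Finset.ne_of_mem_erase hy),
          Function.update_of_ne (Finset.ne_of_mem_erase ht)] at hyt
        exact f3 (Finset.mem_of_mem_erase hy) (Finset.mem_of_mem_erase ht) hyt
      · have hE : ∀ y ∈ insert z (S.erase x), y ≠ x ∧ y ∈ insert z S := by
          intro y hy
          rcases Finset.mem_insert.1 hy with rfl | hy
          · exact ⟨hxz.symm, Finset.mem_insert_self _ _⟩
          · exact ⟨Finset.ne_of_mem_erase hy,
              Finset.mem_insert_of_mem (Finset.mem_of_mem_erase hy)⟩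
        intro b' y hy t ht hyt
        rw [Function.update_of_ne (hE y hy).1, Function.update_of_ne (hE t ht).1]
        exact f4 b' y (hE y hy).2 t (hE t ht).2 hyt
    · funext t
      by_cases ht : t = x
      · subst ht; simp [hfx]
      · simp [Function.update_of_ne ht]
  · rintro ⟨x, f⟩ hp
    simp only [Finset.mem_sigma, Finset.mem_filter] at hp
    obtain ⟨⟨hx, _⟩, _⟩ := hp
    unfold wsFw
    rw [hW, ← Finset.mul_prod_erase S _ hx]
    simp only [Function.update_self]
    congr 1
    refine Finset.prod_congr rfl fun y hy => ?_
    rw [Function.update_of_ne (Finset.ne_of_mem_erase hy)]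

theorem ws_count (ω : X → ℝ) (z : X) (k0 : ℕ) (bs : List Bool) (S : Finset X) (a : ℕ)
    (hz : z ∉ S) (hS : S.card = bs.length) (hk : k0 = a + bs.count true) :
    wsG ω z (bs.map (wsDel 0)) S = ∑ f ∈ wsFs z k0 S a, wsFw ω k0 S f := by
  induction bs generalizing S a with
  | nil =>
    have hS0 : S = ∅ := Finset.card_eq_zero.1 (by simpa using hS)
    subst hS0
    have hk' : k0 = a := by simpa using hk
    have : wsFs z k0 ∅ a = {fun _ => k0} := by
      ext f
      rw [mem_wsFs (by simp [hk']), Finset.mem_singleton]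
      constructor
      · rintro ⟨h1, _⟩
        funext x; exact h1 x (by simp)
      · rintro rfl
        refine ⟨fun _ _ => rfl, by simp, by simp, ?_⟩
        intro b x hx y hy hxy
        simp at hx hy
        subst hx; subst hy
        exact absurd hxy (wsr_irrefl _ _)
    rw [this]
    simp [wsG, wsFw]
  | cons b bs ih =>
    have hcnt : bs.count true ≤ bs.length := List.count_le_length
    have hS' : S.card = bs.length + 1 := by simpa using hS
    have e : wsG ω z ((b :: bs).map (wsDel 0)) S =
        ∑ x ∈ S.filter (fun x => wsAvail z S (x, b)),
          wsW ω (x, b) * wsG ω z (bs.map (wsDel 0)) (S.erase x) := by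
      simp only [List.map_cons, wsG, wsP]
      rw [ws_sum_av, Finset.sum_filter]
      refine Finset.sum_congr rfl fun x _ => ?_
      cases b <;> simp [wsDel]
    rw [e]
    cases b
    · have hk' : k0 = a + bs.count true := by simpa using hk
      rw [wsFs_peel ω z k0 S hz (by omega) false a a (a + S.card) (by omega) (by omega)
        ⟨by omega, by omega, by omega⟩ (fun t => by omega)
        (fun t h1 h2 h3 => by simp [wsr]; omega)]
      refine Finset.sum_congr rfl fun x hx => ?_
      have hx := (Finset.mem_filter.1 hx).1
      rw [ih (S.erase x) a (fun h => hz (Finset.mem_of_mem_erase h))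
        (by rw [Finset.card_erase_of_mem hx]; omega) hk']
    · have hk' : k0 = a + (bs.count true + 1) := by simpa using hk
      rw [wsFs_peel ω z k0 S hz (by omega) true a (a + 1) a (by omega) (by omega)
        ⟨by omega, by omega, by omega⟩ (fun t => by omega)
        (fun t h1 h2 h3 => by simp [wsr]; omega)]
      refine Finset.sum_congr rfl fun x hx => ?_
      have hx := (Finset.mem_filter.1 hx).1
      rw [ih (S.erase x) (a + 1) (fun h => hz (Finset.mem_of_mem_erase h))
        (by rw [Finset.card_erase_of_mem hx]; omega) (by omega)]

theorem ws_Nw_eq (ω : X → ℝ) (z : X) (k : ℕ) (hk : k - 1 < Fintype.card X) :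
    Nw ω z k = ∑ f ∈ wsFs z (k - 1) (Finset.univ.erase z) 0,
      wsFw ω (k - 1) (Finset.univ.erase z) f := by
  have hc : (Finset.univ.erase z : Finset X).card = Fintype.card X - 1 := by
    rw [Finset.card_erase_of_mem (Finset.mem_univ z), Finset.card_univ]
  unfold Nw
  refine Finset.sum_bij (fun σ _ x => (σ x : ℕ)) ?_ ?_ ?_ ?_
  · intro σ hσ
    obtain ⟨h1, h2⟩ := (Finset.mem_filter.1 hσ).2
    rw [mem_wsFs (by omega), hc]
    refine ⟨?_, ?_, ?_, ?_⟩
    · intro x hx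
      have : x = z := by simpa using hx
      rw [this]; exact h2
    · intro x hx
      have hxz := Finset.ne_of_mem_erase hx
      refine ⟨fun h => hxz (σ.injective (Fin.ext (h.trans h2.symm))), by omega, ?_⟩
      have := (σ x).2
      omega
    · intro x _ y _ hxy
      exact σ.injective (Fin.ext hxy)
    · intro b x _ y _ hxy
      cases b <;> simp only [wsr] at hxy ⊢ <;> simp at hxy ⊢ <;> exact h1 _ _ hxy
  · intro σ _ τ _ h
    ext x
    exact congrFun h x
  · intro f hf
    rw [mem_wsFs (by omega), hc] at hf
    obtain ⟨f1, f2, f3, f4⟩ := hf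
    have fz : f z = k - 1 := f1 z (by simp)
    have hlt : ∀ x, f x < Fintype.card X := by
      intro x
      by_cases hx : x = z
      · rw [hx, fz]; exact hk
      · have := (f2 x (by simp [hx])).2.2; omega
    have hinj : Function.Injective (fun x => (⟨f x, hlt x⟩ : Fin (Fintype.card X))) := by
      intro x y hxy
      have hxy : f x = f y := congrArg Fin.val hxy
      by_cases hx : x = z <;> by_cases hy : y = z
      · rw [hx, hy]
      · exact absurd (by rw [← hxy, hx, fz]) (f2 y (by simp [hy])).1
      · exact absurd (by rw [hxy, hy, fz]) (f2 x (by simp [hx])).1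
      · exact f3 (by simp [hx]) (by simp [hy]) hxy
    have hbij := (Fintype.bijective_iff_injective_and_card _).2 ⟨hinj, by simp⟩
    refine ⟨Equiv.ofBijective _ hbij, ?_, ?_⟩
    · refine Finset.mem_filter.2 ⟨Finset.mem_univ _, ?_, ?_⟩
      · intro x y hxy
        have := f4 true x (by simp) y (by simp) (by simpa [wsr] using hxy)
        simpa [wsr] using this
      · exact fz
    · rfl
  · intro σ hσ
    obtain ⟨h1, h2⟩ := (Finset.mem_filter.1 hσ).2
    unfold wsFw
    rw [Finset.prod_filter, ← Finset.mul_prod_erase _ _ (Finset.mem_univ z)]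
    simp only [lt_self_iff_false, if_false, one_mul, Fin.lt_def, h2]

/-- **Weighted Stanley inequality.**  For a positive order-reversing weight function `ω`
and any `z ∈ X`, the numbers `N_ω(k)` are log-concave: `N_ω(k)² ≥ N_ω(k-1)·N_ω(k+1)` for
all `1 < k < n`. -/
theorem weighted_stanley_inequality
    (ω : X → ℝ) (hω : ∀ x, 0 < ω x)
    (hrev : ∀ x y : X, x ≤ y → ω y ≤ ω x)
    (z : X) (k : ℕ) (hk1 : 1 < k) (hk2 : k < Fintype.card X) :
    Nw ω z (k - 1) * Nw ω z (k + 1) ≤ (Nw ω z k) ^ 2 := by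
  set S : Finset X := Finset.univ.erase z with hSdef
  have hzS : z ∉ S := by simp [hSdef]
  have hc : S.card = Fintype.card X - 1 := by
    rw [hSdef, Finset.card_erase_of_mem (Finset.mem_univ z), Finset.card_univ]
  set bs : List Bool := List.replicate (k - 2) true ++
    List.replicate (Fintype.card X - k - 1) false with hbs
  have hlen : bs.length + 2 = Fintype.card X - 1 := by
    simp only [hbs, List.length_append, List.length_replicate]; omega
  have hcount : bs.count true = k - 2 := by
    simp [hbs, List.count_append, List.count_replicate]
  have H := wsG_ineq hω hrev z bs S hzS (by omega)
  have e1 : Nw ω z (k + 1) = wsG ω z ((true :: true :: bs).map (wsDel 0)) S := by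
    rw [ws_Nw_eq ω z (k + 1) (by omega)]
    refine (ws_count ω z _ _ S 0 hzS ?_ ?_).symm
    · simp only [List.length_cons]; omega
    · simp [hcount]; omega
  have e2 : Nw ω z k = wsG ω z ((true :: false :: bs).map (wsDel 0)) S := by
    rw [ws_Nw_eq ω z k (by omega)]
    refine (ws_count ω z _ _ S 0 hzS ?_ ?_).symm
    · simp only [List.length_cons]; omega
    · simp [hcount]; omega
  have e3 : Nw ω z (k - 1) = wsG ω z ((false :: false :: bs).map (wsDel 0)) S := by
    rw [ws_Nw_eq ω z (k - 1) (by omega)]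
    refine (ws_count ω z _ _ S 0 hzS ?_ ?_).symm
    · simp only [List.length_cons]; omega
    · simp [hcount]; omega
  rw [e1, e2, e3, mul_comm]
  exact H
end
end

section
/- Let P = (X, ≺) be a poset on |X| = n elements, let ω : X → ℝ_{>0} be a positive order-reversing weight function, fix z ∈ X and an integer 1 < k < n, and suppose N_ω(k) > 0. Then the following are equivalent: (a) N_ω(k)² = N_ω(k−1)·N_ω(k+1); (b) there exists s > 0 such that N_ω(k+1) = s·N_ω(k) = s²·N_ω(k−1); (c) there exists s > 0 such that f(x) > k for all x ≻ z, g(x) > n − k + 1 for all x ≺ z, and ω(L⁻¹(k−1)) = ω(L⁻¹(k+1)) = s for every linear extension L with L(z) = k. -/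
open scoped Classical BigOperators

noncomputable section

variable {X : Type*} [Fintype X] [DecidableEq X] [PartialOrder X]

/-- `f(x)`: the number of elements strictly below `x`. -/
def numBelow (x : X) : ℕ := (Finset.univ.filter (fun y : X => y < x)).card

/-- `g(x)`: the number of elements strictly above `x`. -/
def numAbove (x : X) : ℕ := (Finset.univ.filter (fun y : X => x < y)).card

section WSHelpers
set_option linter.unusedSectionVars false
set_option linter.unusedSimpArgs false

open Matrix in
/-- Local-to-global principle: spectral lemma. -/
theorem ws_local_global {ι : Type*} [Fintype ι] [DecidableEq ι] (M : Matrix ι ι ℝ)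
    (hsymm : ∀ i j, M i j = M j i) (hnn : ∀ i j, 0 ≤ M i j) (h : ι → ℝ) (hh : ∀ i, 0 < h i)
    (pull : ∀ v : ι → ℝ, v ⬝ᵥ (M *ᵥ v) ≤ ∑ i, h i * ((M *ᵥ v) i) ^ 2 / (M *ᵥ h) i)
    (conn : ∀ φ : ι → ℝ, (∀ i j, 0 < M i j → φ i = φ j) →
      ∀ i j, 0 < (M *ᵥ h) i → 0 < (M *ᵥ h) j → φ i = φ j)
    (v : ι → ℝ) (hv : v ⬝ᵥ (M *ᵥ h) = 0) : v ⬝ᵥ (M *ᵥ v) ≤ 0 := by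
  set D : ι → ℝ := M *ᵥ h with hD
  have hDnn : ∀ i, 0 ≤ D i := fun i =>
    Finset.sum_nonneg fun j _ => mul_nonneg (hnn i j) (hh j).le
  have hD0 : ∀ i, D i = 0 → ∀ j, M i j = 0 := by
    intro i hi j
    have := (Finset.sum_eq_zero_iff_of_nonneg
      (fun j _ => mul_nonneg (hnn i j) (hh j).le)).1 hi j (Finset.mem_univ j)
    rcases mul_eq_zero.1 this with h1 | h1
    · exact h1
    · exact absurd h1 (hh j).ne'
  set d : ι → ℝ := fun i => Real.sqrt (h i / D i) with hd
  have hd2 : ∀ i, d i ^ 2 = h i / D i := fun i =>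
    Real.sq_sqrt (div_nonneg (hh i).le (hDnn i))
  have hdpos : ∀ i, D i ≠ 0 → 0 < d i := fun i hi =>
    Real.sqrt_pos.2 (div_pos (hh i) (lt_of_le_of_ne (hDnn i) (Ne.symm hi)))
  set S : Matrix ι ι ℝ := fun i j => d i * M i j * d j with hS
  have hSH : S.IsHermitian := by
    ext i j
    change d j * M j i * d i = d i * M i j * d j
    rw [hsymm j i]; ring
  have hSmul : ∀ (y : ι → ℝ) i, (S *ᵥ y) i = d i * (M *ᵥ (fun j => d j * y j)) i := by
    intro y i
    simp only [hS, Matrix.mulVec, dotProduct, Finset.mul_sum]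
    exact Finset.sum_congr rfl fun j _ => by ring
  set b := hSH.eigenvectorBasis with hb
  set lam := hSH.eigenvalues with hlam
  have heig : ∀ k, S *ᵥ (b k).ofLp = lam k • (b k).ofLp := fun k => hSH.mulVec_eigenvectorBasis k
  -- key: eigenvectors with positive eigenvalue are orthogonal to y
  set y : ι → ℝ := fun i => v i / d i with hy
  have hyv : ∀ i, D i ≠ 0 → d i * y i = v i := by
    intro i hi
    have := (hdpos i hi).ne'
    simp only [hy]; field_simp
  have hMz : ∀ i, D i = 0 → ∀ w : ι → ℝ, (M *ᵥ w) i = 0 := by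
    intro i hi w
    simp only [Matrix.mulVec, dotProduct]
    exact Finset.sum_eq_zero fun j _ => by rw [hD0 i hi j, zero_mul]
  have key : ∀ k, 0 < lam k → (b k).ofLp ⬝ᵥ y = 0 := by
    intro k hk
    set β : ι → ℝ := (b k).ofLp with hβ
    have e1 : ∀ i, d i * (M *ᵥ (fun j => d j * β j)) i = lam k * β i := by
      intro i
      have := congrFun (heig k) i
      rw [hSmul] at this
      simpa using this
    set u : ι → ℝ := fun j => d j * β j with hu
    have hβ0 : ∀ i, D i = 0 → β i = 0 := by
      intro i hi
      have := e1 i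
      rw [hMz i hi, mul_zero] at this
      rcases mul_eq_zero.1 this.symm with h1 | h1
      · exact absurd h1 hk.ne'
      · exact h1
    have hq : u ⬝ᵥ (M *ᵥ u) = lam k * ∑ i, β i ^ 2 := by
      simp only [dotProduct, Finset.mul_sum]
      refine Finset.sum_congr rfl fun i _ => ?_
      have := e1 i
      calc u i * (M *ᵥ u) i = β i * (d i * (M *ᵥ u) i) := by simp only [hu]; ring
        _ = _ := by rw [this]; ring
    have hp : ∑ i, h i * ((M *ᵥ u) i) ^ 2 / D i = lam k ^ 2 * ∑ i, β i ^ 2 := by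
      simp only [Finset.mul_sum]
      refine Finset.sum_congr rfl fun i _ => ?_
      calc h i * ((M *ᵥ u) i) ^ 2 / D i = (h i / D i) * ((M *ᵥ u) i) ^ 2 := by ring
        _ = (d i * (M *ᵥ u) i) ^ 2 := by rw [← hd2]; ring
        _ = _ := by rw [e1 i]; ring
    have hβpos : 0 ≤ ∑ i, β i ^ 2 := Finset.sum_nonneg fun i _ => sq_nonneg _
    have hpl := pull u
    rw [hq, hp] at hpl
    -- Perron
    have hper : ∑ i, ∑ j, M i j * h i * h j * (u i / h i - u j / h j) ^ 2
        = 2 * ((∑ i, β i ^ 2) - lam k * ∑ i, β i ^ 2) := by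
      have t1 : ∀ i j, M i j * h i * h j * (u i / h i - u j / h j) ^ 2
          = (u i ^ 2 / h i) * (M i j * h j) + (u j ^ 2 / h j) * (M j i * h i)
            - 2 * (u i * (M i j * u j)) := by
        intro i j
        have := (hh i).ne'
        have := (hh j).ne'
        rw [hsymm j i]
        field_simp
        ring
      have t2 : ∑ i, ∑ j, (u i ^ 2 / h i) * (M i j * h j) = ∑ i, β i ^ 2 := by
        refine Finset.sum_congr rfl fun i _ => ?_
        rw [← Finset.mul_sum]
        change u i ^ 2 / h i * D i = _
        by_cases hi : D i = 0
        · rw [hβ0 i hi, hi]; ring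
        · have h1 : u i ^ 2 = h i / D i * β i ^ 2 := by
            simp only [hu]; rw [mul_pow, hd2]
          have := (hh i).ne'
          rw [h1]; field_simp
      have t3 : ∑ i, ∑ j, (u j ^ 2 / h j) * (M j i * h i) = ∑ i, β i ^ 2 := by
        rw [Finset.sum_comm]; exact t2
      have t4 : ∑ i, ∑ j, 2 * (u i * (M i j * u j)) = 2 * (lam k * ∑ i, β i ^ 2) := by
        rw [← hq]
        simp only [dotProduct, Matrix.mulVec, Finset.mul_sum]
      simp_rw [t1, Finset.sum_sub_distrib, Finset.sum_add_distrib]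
      rw [t2, t3, t4]; ring
    have hβne : 0 < ∑ i, β i ^ 2 := by
      have h1 : ‖b k‖ = 1 := b.orthonormal.1 k
      have h2 := EuclideanSpace.real_norm_sq_eq (b k)
      rw [h1] at h2
      have : ∑ i, β i ^ 2 = 1 := by rw [← one_pow 2, h2]
      rw [this]; norm_num
    have hl1 : 1 ≤ lam k := by
      have : lam k * 1 ≤ lam k * lam k := by
        have : lam k * (∑ i, β i ^ 2) ≤ (lam k * lam k) * (∑ i, β i ^ 2) := by
          rw [← sq]; exact hpl
        simpa using le_of_mul_le_mul_right this hβne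
      exact le_of_mul_le_mul_left this hk
    have hnn2 : ∀ i j, 0 ≤ M i j * h i * h j * (u i / h i - u j / h j) ^ 2 := fun i j =>
      mul_nonneg (mul_nonneg (mul_nonneg (hnn i j) (hh i).le) (hh j).le) (sq_nonneg _)
    have hz : ∑ i, ∑ j, M i j * h i * h j * (u i / h i - u j / h j) ^ 2 = 0 := by
      apply le_antisymm
      · rw [hper]; nlinarith
      · exact Finset.sum_nonneg fun i _ => Finset.sum_nonneg fun j _ => hnn2 i j
    have hφ : ∀ i j, 0 < M i j → u i / h i = u j / h j := by
      intro i j hij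
      have h1 := (Finset.sum_eq_zero_iff_of_nonneg
        (fun i _ => Finset.sum_nonneg fun j _ => hnn2 i j)).1 hz i (Finset.mem_univ i)
      have h2 := (Finset.sum_eq_zero_iff_of_nonneg
        (fun j _ => hnn2 i j)).1 h1 j (Finset.mem_univ j)
      have h3 : 0 < M i j * h i * h j := mul_pos (mul_pos hij (hh i)) (hh j)
      rcases mul_eq_zero.1 h2 with h4 | h4
      · exact absurd h4 h3.ne'
      · exact sub_eq_zero.1 (pow_eq_zero_iff (two_ne_zero) |>.1 h4)
    have hc := conn (fun i => u i / h i) hφ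
    by_cases hex : ∃ i0, 0 < D i0
    · obtain ⟨i0, hi0⟩ := hex
      set c := u i0 / h i0 with hcdef
      have : ∀ i, β i * y i = c * (v i * D i) := by
        intro i
        by_cases hi : D i = 0
        · rw [hβ0 i hi, hi]; ring
        · have hpos : 0 < D i := lt_of_le_of_ne (hDnn i) (Ne.symm hi)
          have h1 : u i / h i = c := hc i i0 hpos hi0
          have h2 : d i * β i = c * h i := by
            rw [← h1]; have := (hh i).ne'; field_simp; rfl
          have h3 := hyv i hi
          have h4 := hd2 i
          have h5 : 0 < d i := hdpos i hi
          have h6 : d i ^ 2 * (β i * y i) = d i ^ 2 * (c * (v i * D i)) := by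
            calc d i ^ 2 * (β i * y i) = (d i * β i) * (d i * y i) := by ring
              _ = c * h i * v i := by rw [h2, h3]
              _ = _ := by rw [h4]; field_simp
          exact mul_left_cancel₀ (pow_pos h5 2).ne' h6
      simp only [dotProduct] at hv ⊢
      rw [Finset.sum_congr rfl fun i _ => this i, ← Finset.mul_sum, hv, mul_zero]
    · simp only [dotProduct]
      refine Finset.sum_eq_zero fun i _ => ?_
      rw [hβ0 i (le_antisymm (not_lt.1 fun h => hex ⟨i, h⟩) (hDnn i)), zero_mul]
  -- final
  have hvy : v ⬝ᵥ (M *ᵥ v) = y ⬝ᵥ (S *ᵥ y) := by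
    have e : M *ᵥ v = M *ᵥ (fun j => d j * y j) := by
      funext i
      simp only [Matrix.mulVec, dotProduct]
      refine Finset.sum_congr rfl fun j _ => ?_
      by_cases hj : D j = 0
      · rw [hsymm i j, hD0 j hj i]; ring
      · rw [hyv j hj]
    simp only [dotProduct]
    refine Finset.sum_congr rfl fun i _ => ?_
    rw [hSmul, ← e]
    by_cases hi : D i = 0
    · rw [hMz i hi]; ring
    · rw [← hyv i hi]; ring
  rw [hvy]
  have hexp := b.sum_inner_mul_inner (WithLp.toLp 2 y) (WithLp.toLp 2 (S *ᵥ y))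
  have hin : ∀ p q : ι → ℝ, inner ℝ (WithLp.toLp 2 p : EuclideanSpace ℝ ι) (WithLp.toLp 2 q) = q ⬝ᵥ p := by
    intro p q
    rw [EuclideanSpace.inner_toLp_toLp]; simp
  rw [hin] at hexp
  rw [dotProduct_comm, ← hexp]
  refine Finset.sum_nonpos fun k _ => ?_
  have i1 : inner ℝ (WithLp.toLp 2 y) (b k) = (b k).ofLp ⬝ᵥ y := hin y (b k).ofLp
  have i2 : inner ℝ (b k) (WithLp.toLp 2 (S *ᵥ y)) = (S *ᵥ y) ⬝ᵥ (b k).ofLp :=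
    hin (b k).ofLp (S *ᵥ y)
  have hST : Sᵀ = S := by
    ext i j
    change d j * M j i * d i = d i * M i j * d j
    rw [hsymm j i]; ring
  have i3 : (S *ᵥ y) ⬝ᵥ (b k).ofLp = lam k * ((b k).ofLp ⬝ᵥ y) := by
    rw [dotProduct_comm, Matrix.dotProduct_mulVec, ← Matrix.mulVec_transpose, hST, heig k,
      smul_dotProduct, smul_eq_mul]
  rw [i1, i2, i3]
  by_cases hk : 0 < lam k
  · rw [key k hk]; simp
  · have := not_lt.1 hk
    nlinarith [sq_nonneg ((b k).ofLp ⬝ᵥ y)]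


/-- strict order (`true`) or its dual (`false`) -/
def slt : Bool → X → X → Prop
  | true, x, y => x < y
  | false, x, y => y < x

theorem slt_irrefl (c : Bool) (x : X) : ¬ slt c x x := by
  cases c <;> simp [slt]

theorem slt_trans {c : Bool} {x y w : X} (h1 : slt c x y) (h2 : slt c y w) : slt c x w := by
  cases c
  · exact lt_trans (a := w) h2 h1
  · exact lt_trans (a := x) h1 h2

theorem slt_asymm {c : Bool} {x y : X} (h1 : slt c x y) : ¬ slt c y x :=
  fun h2 => slt_irrefl c x (slt_trans h1 h2)

theorem slt_not {c : Bool} {x y : X} : slt (!c) x y ↔ slt c y x := by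
  cases c <;> simp [slt]

theorem slt_of_ne {c d : Bool} {x y : X} (h : d ≠ c) : slt d x y ↔ slt c y x := by
  have : d = !c := by cases c <;> cases d <;> simp_all
  subst this; exact slt_not

/-- elements of `Y` other than `z` which are extremal on side `c` -/
def ext (z : X) (c : Bool) (Y : Finset X) : Finset X :=
  Y.filter (fun x => x ≠ z ∧ ∀ y ∈ Y, ¬ slt c y x)

theorem mem_ext {z : X} {c : Bool} {Y : Finset X} {x : X} :
    x ∈ ext z c Y ↔ x ∈ Y ∧ x ≠ z ∧ ∀ y ∈ Y, ¬ slt c y x := by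
  simp [ext]

theorem ext_erase_of_mem {z : X} {c : Bool} {Y : Finset X} {x y : X}
    (hy : y ∈ ext z c Y) (hne : y ≠ x) : y ∈ ext z c (Y.erase x) := by
  rw [mem_ext] at hy ⊢
  exact ⟨Finset.mem_erase.2 ⟨hne, hy.1⟩, hy.2.1, fun u hu => hy.2.2 u (Finset.mem_of_mem_erase hu)⟩

theorem ext_new {z : X} {c : Bool} {Y : Finset X} {x y : X}
    (hy : y ∈ ext z c (Y.erase x)) (hn : y ∉ ext z c Y) : x ∈ Y ∧ slt c x y := by
  rw [mem_ext] at hy hn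
  push Not at hn
  obtain ⟨u, hu, hs⟩ := hn (Finset.mem_of_mem_erase hy.1) hy.2.1
  by_cases hux : u = x
  · subst hux; exact ⟨hu, hs⟩
  · exact absurd hs (hy.2.2 u (Finset.mem_erase.2 ⟨hux, hu⟩))

theorem ext_new_side {z : X} {c d : Bool} {Y : Finset X} {x y : X}
    (hx : x ∈ ext z c Y)
    (hy : y ∈ ext z d (Y.erase x)) (hn : y ∉ ext z d Y) : d = c := by
  by_contra hdc
  have h1 := (ext_new hy hn).2
  rw [slt_of_ne hdc] at h1
  exact (mem_ext.1 hx).2.2 y (Finset.mem_of_mem_erase (mem_ext.1 hy).1) h1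

/-- weighted number of peelings -/
def cnt (W : Bool × X → ℝ) (z : X) : List Bool → Finset X → ℝ
  | [], _ => 1
  | c :: s, Y => ∑ x ∈ ext z c Y, W (c, x) * cnt W z s (Y.erase x)

/-- index set of active coordinates -/
def II (z : X) (Y : Finset X) : Finset (Bool × X) :=
  Finset.univ.filter (fun i => i.2 ∈ ext z i.1 Y)

theorem mem_II {z : X} {Y : Finset X} {i : Bool × X} : i ∈ II z Y ↔ i.2 ∈ ext z i.1 Y := by
  simp [II]

theorem sum_II (z : X) (Y : Finset X) (F : Bool × X → ℝ) :
    ∑ i ∈ II z Y, F i = ∑ c : Bool, ∑ x ∈ ext z c Y, F (c, x) := by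
  unfold II
  rw [Finset.sum_filter, Fintype.sum_prod_type]
  refine Finset.sum_congr rfl fun c _ => ?_
  rw [← Finset.sum_filter]
  refine Finset.sum_congr ?_ fun _ _ => rfl
  ext x; simp

/-- side indicator -/
def ee (c : Bool) (i : Bool × X) : ℝ := if i.1 = c then 1 else 0

/-- restriction to a face -/
def TT (z : X) (Y : Finset X) (i : Bool × X) (v : Bool × X → ℝ) : Bool × X → ℝ :=
  fun j => if j ∈ II z Y then v j else v i

/-- linear form -/
def AA (W : Bool × X → ℝ) (z : X) (s : List Bool) (Y : Finset X) (v : Bool × X → ℝ) : ℝ :=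
  ∑ i ∈ II z Y, W i * cnt W z s (Y.erase i.2) * v i

/-- bilinear form -/
def BB (W : Bool × X → ℝ) (z : X) (s : List Bool) (Y : Finset X) (v v' : Bool × X → ℝ) : ℝ :=
  ∑ i ∈ II z Y, v i * (W i * AA W z s (Y.erase i.2) (TT z Y i v'))

variable {W : Bool × X → ℝ} {z : X}

theorem AA_congr {s : List Bool} {Y : Finset X} {v v' : Bool × X → ℝ}
    (h : ∀ i ∈ II z Y, v i = v' i) : AA W z s Y v = AA W z s Y v' :=
  Finset.sum_congr rfl fun i hi => by rw [h i hi]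

theorem TT_side {Y : Finset X} {i : Bool × X} (hi : i ∈ II z Y) (g : Bool → ℝ)
    {j : Bool × X} (hj : j ∈ II z (Y.erase i.2)) :
    TT z Y i (fun k => g k.1) j = g j.1 := by
  unfold TT
  split_ifs with h
  · rfl
  · rw [mem_II] at *
    rw [ext_new_side hi hj h]

theorem AA_ee (c : Bool) (s : List Bool) (Y : Finset X) :
    AA W z s Y (ee c) = cnt W z (c :: s) Y := by
  unfold AA
  rw [sum_II]
  simp only [cnt, ee]
  cases c <;> simp

theorem AA_TT_ee {Y : Finset X} {i : Bool × X} (hi : i ∈ II z Y) (s : List Bool) (c : Bool) :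
    AA W z s (Y.erase i.2) (TT z Y i (ee c)) = cnt W z (c :: s) (Y.erase i.2) := by
  rw [← AA_ee]
  exact AA_congr fun j hj => TT_side hi (fun b => if b = c then 1 else 0) hj

theorem BB_ee (v : Bool × X → ℝ) (c : Bool) (s : List Bool) (Y : Finset X) :
    BB W z s Y v (ee c) = AA W z (c :: s) Y v := by
  unfold BB
  conv_rhs => unfold AA
  refine Finset.sum_congr rfl fun i hi => ?_
  rw [AA_TT_ee hi]; ring

theorem BB_ee_ee (c d : Bool) (s : List Bool) (Y : Finset X) :
    BB W z s Y (ee c) (ee d) = cnt W z (c :: d :: s) Y := by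
  rw [BB_ee, AA_ee]

theorem BB_symm (s : List Bool) (Y : Finset X) (v v' : Bool × X → ℝ) :
    BB W z s Y v v' = BB W z s Y v' v := by
  have key : ∀ v v' : Bool × X → ℝ, BB W z s Y v v' =
      (∑ i ∈ II z Y, ∑ j ∈ II z Y, if i.2 = j.2 then 0 else
        W i * W j * cnt W z s ((Y.erase i.2).erase j.2) * (v i * v' j)) +
      ∑ i ∈ II z Y, ∑ j ∈ II z (Y.erase i.2) \ II z Y,
        W i * W j * cnt W z s ((Y.erase i.2).erase j.2) * (v i * v' i) := by
    intro v v'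
    unfold BB
    rw [← Finset.sum_add_distrib]
    refine Finset.sum_congr rfl fun i hi => ?_
    unfold AA
    rw [← Finset.sum_inter_add_sum_sdiff (II z (Y.erase i.2)) (II z Y), mul_add, mul_add]
    congr 1
    · rw [Finset.mul_sum, Finset.mul_sum]
      have : II z (Y.erase i.2) ∩ II z Y = (II z Y).filter (fun j => ¬ i.2 = j.2) := by
        ext j
        simp only [Finset.mem_inter, Finset.mem_filter, mem_II]
        constructor
        · rintro ⟨h1, h2⟩
          exact ⟨h2, fun h => (Finset.mem_erase.1 (mem_ext.1 h1).1).1 h.symm⟩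
        · rintro ⟨h1, h2⟩
          exact ⟨ext_erase_of_mem h1 (Ne.symm h2), h1⟩
      rw [this, Finset.sum_filter]
      refine Finset.sum_congr rfl fun j hj => ?_
      by_cases h : i.2 = j.2
      · simp [h]
      · simp only [h, not_false_eq_true, if_true, if_false, TT, hj]; ring
    · rw [Finset.mul_sum, Finset.mul_sum]
      refine Finset.sum_congr rfl fun j hj => ?_
      rw [Finset.mem_sdiff] at hj
      simp only [TT, hj.2, if_false]; ring
  rw [key, key]
  congr 1
  · rw [Finset.sum_comm]
    refine Finset.sum_congr rfl fun i _ => Finset.sum_congr rfl fun j _ => ?_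
    by_cases h : i.2 = j.2
    · simp [h]
    · rw [if_neg h, if_neg (Ne.symm h), Finset.erase_right_comm]; ring
  · refine Finset.sum_congr rfl fun i _ => Finset.sum_congr rfl fun j _ => ?_
    ring

theorem AA_add (s : List Bool) (Y : Finset X) (v v' : Bool × X → ℝ) :
    AA W z s Y (v + v') = AA W z s Y v + AA W z s Y v' := by
  unfold AA
  rw [← Finset.sum_add_distrib]
  exact Finset.sum_congr rfl fun i _ => by simp only [Pi.add_apply]; ring

theorem AA_smul (s : List Bool) (Y : Finset X) (r : ℝ) (v : Bool × X → ℝ) :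
    AA W z s Y (r • v) = r * AA W z s Y v := by
  unfold AA
  rw [Finset.mul_sum]
  exact Finset.sum_congr rfl fun i _ => by simp only [Pi.smul_apply, smul_eq_mul]; ring

theorem TT_add (Y : Finset X) (i : Bool × X) (v v' : Bool × X → ℝ) :
    TT z Y i (v + v') = TT z Y i v + TT z Y i v' := by
  funext j; simp only [TT, Pi.add_apply]; split_ifs <;> rfl

theorem TT_smul (Y : Finset X) (i : Bool × X) (r : ℝ) (v : Bool × X → ℝ) :
    TT z Y i (r • v) = r • TT z Y i v := by
  funext j; simp only [TT, Pi.smul_apply]; split_ifs <;> rfl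

theorem BB_add_right (s : List Bool) (Y : Finset X) (v w w' : Bool × X → ℝ) :
    BB W z s Y v (w + w') = BB W z s Y v w + BB W z s Y v w' := by
  unfold BB
  rw [← Finset.sum_add_distrib]
  exact Finset.sum_congr rfl fun i _ => by rw [TT_add, AA_add]; ring

theorem BB_smul_right (s : List Bool) (Y : Finset X) (r : ℝ) (v w : Bool × X → ℝ) :
    BB W z s Y v (r • w) = r * BB W z s Y v w := by
  unfold BB
  rw [Finset.mul_sum]
  exact Finset.sum_congr rfl fun i _ => by rw [TT_smul, AA_smul]; ring

theorem BB_add_left (s : List Bool) (Y : Finset X) (v v' w : Bool × X → ℝ) :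
    BB W z s Y (v + v') w = BB W z s Y v w + BB W z s Y v' w := by
  rw [BB_symm, BB_add_right, BB_symm s Y w, BB_symm s Y w]

theorem BB_smul_left (s : List Bool) (Y : Finset X) (r : ℝ) (v w : Bool × X → ℝ) :
    BB W z s Y (r • v) w = r * BB W z s Y v w := by
  rw [BB_symm, BB_smul_right, BB_symm s Y w]

theorem BB_congr_right {s : List Bool} {Y : Finset X} (v : Bool × X → ℝ) {w w' : Bool × X → ℝ}
    (h : ∀ i ∈ II z Y, w i = w' i) : BB W z s Y v w = BB W z s Y v w' := by
  rw [BB_symm, BB_symm s Y v w']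
  exact Finset.sum_congr rfl fun i hi => by rw [h i hi]

theorem BB_congr {s : List Bool} {Y : Finset X} {v v' w w' : Bool × X → ℝ}
    (h1 : ∀ i ∈ II z Y, v i = v' i)
    (h : ∀ i ∈ II z Y, w i = w' i) : BB W z s Y v w = BB W z s Y v' w' := by
  rw [BB_congr_right v h, BB_symm, BB_congr_right w' h1, BB_symm]

theorem cnt_nonneg (hW : ∀ i, 0 < W i) (s : List Bool) (Y : Finset X) : 0 ≤ cnt W z s Y := by
  induction s generalizing Y with
  | nil => simp [cnt]
  | cons c s ih => exact Finset.sum_nonneg fun x _ => mul_nonneg (hW _).le (ih _)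

theorem AA_nonneg (hW : ∀ i, 0 < W i) {s : List Bool} {Y : Finset X} {v : Bool × X → ℝ}
    (hv : ∀ i, 0 ≤ v i) : 0 ≤ AA W z s Y v :=
  Finset.sum_nonneg fun i _ => mul_nonneg (mul_nonneg (hW _).le (cnt_nonneg hW _ _)) (hv i)

theorem TT_nonneg {Y : Finset X} {i : Bool × X} {v : Bool × X → ℝ}
    (hv : ∀ i, 0 ≤ v i) (j : Bool × X) : 0 ≤ TT z Y i v j := by
  unfold TT; split_ifs <;> exact hv _

theorem BB_nonneg (hW : ∀ i, 0 < W i) {s : List Bool} {Y : Finset X} {v w : Bool × X → ℝ}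
    (hv : ∀ i, 0 ≤ v i) (hw : ∀ i, 0 ≤ w i) : 0 ≤ BB W z s Y v w :=
  Finset.sum_nonneg fun i _ => mul_nonneg (hv i)
    (mul_nonneg (hW _).le (AA_nonneg hW (TT_nonneg hw)))

/-- The pullback inequality. -/
theorem pull_ineq (hW : ∀ i, 0 < W i) (d : Bool) (s : List Bool) (Y : Finset X)
    (v : Bool × X → ℝ) :
    BB W z (d :: s) Y v v ≤
      ∑ x ∈ ext z d Y, W (d, x) * BB W z s (Y.erase x) (TT z Y (d, x) v) (TT z Y (d, x) v) := by
  have hpair : ∀ {u : X}, u ∈ ext z d Y ↔ (d, u) ∈ II z Y := fun {u} => by rw [mem_II]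
  -- expansions
  have hL : BB W z (d :: s) Y v v =
      (∑ i ∈ II z Y, ∑ u ∈ ext z d Y, if i.2 = u then 0 else W i * W (d, u) * (v i *
        AA W z s ((Y.erase i.2).erase u) (TT z (Y.erase i.2) (d, u) (TT z Y i v)))) +
      ∑ x ∈ ext z d Y, ∑ u ∈ ext z d (Y.erase x) \ ext z d Y, W (d, x) * W (d, u) * (v (d, x) *
        AA W z s ((Y.erase x).erase u) (TT z (Y.erase x) (d, u) (TT z Y (d, x) v))) := by
    have h1 : BB W z (d :: s) Y v v = ∑ i ∈ II z Y, ∑ u ∈ ext z d (Y.erase i.2),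
        W i * W (d, u) * (v i *
        AA W z s ((Y.erase i.2).erase u) (TT z (Y.erase i.2) (d, u) (TT z Y i v))) := by
      unfold BB
      refine Finset.sum_congr rfl fun i hi => ?_
      rw [← BB_ee, BB_symm]
      unfold BB
      rw [sum_II]
      simp only [ee]
      rw [Finset.mul_sum, Finset.mul_sum]
      rw [Finset.sum_eq_single d]
      · rw [Finset.mul_sum, Finset.mul_sum]
        refine Finset.sum_congr rfl fun u _ => ?_
        simp only [if_true]; ring
      · intro b _ hb
        simp [hb]
      · simp
    rw [h1]
    have h2 : ∀ i ∈ II z Y, ∑ u ∈ ext z d (Y.erase i.2),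
        W i * W (d, u) * (v i *
        AA W z s ((Y.erase i.2).erase u) (TT z (Y.erase i.2) (d, u) (TT z Y i v))) =
        (∑ u ∈ ext z d Y, if i.2 = u then 0 else W i * W (d, u) * (v i *
        AA W z s ((Y.erase i.2).erase u) (TT z (Y.erase i.2) (d, u) (TT z Y i v)))) +
        ∑ u ∈ ext z d (Y.erase i.2) \ ext z d Y,
        W i * W (d, u) * (v i *
        AA W z s ((Y.erase i.2).erase u) (TT z (Y.erase i.2) (d, u) (TT z Y i v))) := by
      intro i hi
      rw [← Finset.sum_inter_add_sum_sdiff (ext z d (Y.erase i.2)) (ext z d Y)]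
      congr 1
      have : ext z d (Y.erase i.2) ∩ ext z d Y = (ext z d Y).filter (fun u => ¬ i.2 = u) := by
        ext u
        simp only [Finset.mem_inter, Finset.mem_filter]
        constructor
        · rintro ⟨h1, h2⟩
          exact ⟨h2, fun h => (Finset.mem_erase.1 (mem_ext.1 h1).1).1 h.symm⟩
        · rintro ⟨h1, h2⟩
          exact ⟨ext_erase_of_mem h1 (Ne.symm h2), h1⟩
      rw [this, Finset.sum_filter]
      refine Finset.sum_congr rfl fun u _ => ?_
      by_cases h : i.2 = u <;> simp [h]
    rw [Finset.sum_congr rfl h2, Finset.sum_add_distrib]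
    congr 1
    rw [sum_II, Finset.sum_eq_single d]
    · intro b _ hb
      refine Finset.sum_eq_zero fun x hx => Finset.sum_eq_zero fun u hu => ?_
      rw [Finset.mem_sdiff] at hu
      exact absurd (ext_new_side hx hu.1 hu.2) (Ne.symm hb)
    · simp
  have hR : ∑ x ∈ ext z d Y, W (d, x) * BB W z s (Y.erase x) (TT z Y (d, x) v) (TT z Y (d, x) v) =
      (∑ i ∈ II z Y, ∑ u ∈ ext z d Y, if i.2 = u then 0 else W i * W (d, u) * (v i *
        AA W z s ((Y.erase i.2).erase u) (TT z (Y.erase u) i (TT z Y (d, u) v)))) +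
      ∑ x ∈ ext z d Y, ∑ u ∈ ext z d (Y.erase x) \ ext z d Y, W (d, x) * W (d, u) * (v (d, x) *
        AA W z s ((Y.erase x).erase u) (TT z (Y.erase x) (d, u) (TT z Y (d, x) v))) := by
    rw [Finset.sum_comm, ← Finset.sum_add_distrib]
    refine Finset.sum_congr rfl fun u hu => ?_
    unfold BB
    rw [← Finset.sum_inter_add_sum_sdiff (II z (Y.erase u)) (II z Y), mul_add]
    congr 1
    · have : II z (Y.erase u) ∩ II z Y = (II z Y).filter (fun j => ¬ j.2 = u) := by
        ext j
        simp only [Finset.mem_inter, Finset.mem_filter, mem_II]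
        constructor
        · rintro ⟨h1, h2⟩
          exact ⟨h2, fun h => (Finset.mem_erase.1 (mem_ext.1 h1).1).1 h⟩
        · rintro ⟨h1, h2⟩
          exact ⟨ext_erase_of_mem h1 h2, h1⟩
      rw [this, Finset.sum_filter, Finset.mul_sum]
      refine Finset.sum_congr rfl fun j hj => ?_
      by_cases h : j.2 = u
      · simp [h]
      · have e : TT z Y (d, u) v j = v j := by simp only [TT, hj, if_true]
        simp only [h, not_false_eq_true, if_true, if_false, e]
        rw [Finset.erase_right_comm]; ring
    · have : II z (Y.erase u) \ II z Y =
          (ext z d (Y.erase u) \ ext z d Y).image (fun x => (d, x)) := by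
        ext ⟨b, x⟩
        simp only [Finset.mem_sdiff, Finset.mem_image, mem_II, Prod.mk.injEq]
        constructor
        · rintro ⟨h1, h2⟩
          have := ext_new_side hu h1 h2
          subst this
          exact ⟨x, ⟨h1, h2⟩, rfl, rfl⟩
        · rintro ⟨x', ⟨h1, h2⟩, rfl, rfl⟩
          exact ⟨h1, h2⟩
      rw [this, Finset.sum_image (by intro a _ b _ h; simpa using h), Finset.mul_sum]
      refine Finset.sum_congr rfl fun x hx => ?_
      have : (d, x) ∉ II z Y := by rw [mem_II]; exact (Finset.mem_sdiff.1 hx).2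
      have e : TT z Y (d, u) v (d, x) = v (d, u) := by simp only [TT, this, if_false]
      rw [e]; ring
  -- the symmetric kernel
  let K : X → X → ℝ := fun x u =>
    ∑ y ∈ (ext z d ((Y.erase x).erase u)).filter (fun y => slt d x y ∧ slt d u y),
      W (d, y) * cnt W z s (((Y.erase x).erase u).erase y)
  have hKs : ∀ x u, K x u = K u x := by
    intro x u
    simp only [K]
    rw [Finset.erase_right_comm]
    refine Finset.sum_congr ?_ fun _ _ => rfl
    ext y; simp only [Finset.mem_filter]; tauto
  have hK0 : ∀ x u, 0 ≤ K x u := fun x u =>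
    Finset.sum_nonneg fun y _ => mul_nonneg (hW _).le (cnt_nonneg hW _ _)
  have hdiff : ∀ i ∈ II z Y, ∀ u ∈ ext z d Y, i.2 ≠ u →
      AA W z s ((Y.erase i.2).erase u) (TT z (Y.erase u) i (TT z Y (d, u) v)) -
      AA W z s ((Y.erase i.2).erase u) (TT z (Y.erase i.2) (d, u) (TT z Y i v)) =
      if i.1 = d then (v i - v (d, u)) * K i.2 u else 0 := by
    intro i hi u hu hne
    have hu' : (d, u) ∈ II z Y := hpair.1 hu
    have hpt : ∀ j ∈ II z ((Y.erase i.2).erase u),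
        TT z (Y.erase u) i (TT z Y (d, u) v) j - TT z (Y.erase i.2) (d, u) (TT z Y i v) j =
        if slt j.1 i.2 j.2 ∧ slt j.1 u j.2 then v i - v (d, u) else 0 := by
      intro j hj
      have hj' := mem_ext.1 (mem_II.1 hj)
      have hjY : j.2 ∈ Y := Finset.mem_of_mem_erase (Finset.mem_of_mem_erase hj'.1)
      have hjx : j.2 ≠ i.2 := (Finset.mem_erase.1 (Finset.mem_of_mem_erase hj'.1)).1
      have hju : j.2 ≠ u := (Finset.mem_erase.1 hj'.1).1
      have hiY := (mem_ext.1 (mem_II.1 hi)).1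
      have huY := (mem_ext.1 hu).1
      have c0 : j ∈ II z Y ↔ ¬ slt j.1 i.2 j.2 ∧ ¬ slt j.1 u j.2 := by
        rw [mem_II, mem_ext]
        constructor
        · rintro ⟨_, _, h⟩; exact ⟨h _ hiY, h _ huY⟩
        · rintro ⟨h1, h2⟩
          refine ⟨hjY, hj'.2.1, fun y hy hs => ?_⟩
          by_cases e1 : y = i.2
          · exact h1 (e1 ▸ hs)
          by_cases e2 : y = u
          · exact h2 (e2 ▸ hs)
          exact hj'.2.2 y (Finset.mem_erase.2 ⟨e2, Finset.mem_erase.2 ⟨e1, hy⟩⟩) hs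
      have c1 : j ∈ II z (Y.erase u) ↔ ¬ slt j.1 i.2 j.2 := by
        rw [mem_II, mem_ext]
        constructor
        · rintro ⟨_, _, h⟩; exact h _ (Finset.mem_erase.2 ⟨hne, hiY⟩)
        · intro h1
          refine ⟨Finset.mem_erase.2 ⟨hju, hjY⟩, hj'.2.1, fun y hy hs => ?_⟩
          by_cases e1 : y = i.2
          · exact h1 (e1 ▸ hs)
          exact hj'.2.2 y (Finset.mem_erase.2 ⟨(Finset.mem_erase.1 hy).1,
            Finset.mem_erase.2 ⟨e1, Finset.mem_of_mem_erase hy⟩⟩) hs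
      have c2 : j ∈ II z (Y.erase i.2) ↔ ¬ slt j.1 u j.2 := by
        rw [mem_II, mem_ext]
        constructor
        · rintro ⟨_, _, h⟩; exact h _ (Finset.mem_erase.2 ⟨Ne.symm hne, huY⟩)
        · intro h1
          refine ⟨Finset.mem_erase.2 ⟨hjx, hjY⟩, hj'.2.1, fun y hy hs => ?_⟩
          by_cases e1 : y = u
          · exact h1 (e1 ▸ hs)
          exact hj'.2.2 y (Finset.mem_erase.2 ⟨e1, hy⟩) hs
      simp only [TT, c0, c1, c2, hi, hu', if_true]
      by_cases p : slt j.1 i.2 j.2 <;> by_cases q : slt j.1 u j.2 <;> simp [p, q]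
    have hAA : AA W z s ((Y.erase i.2).erase u) (TT z (Y.erase u) i (TT z Y (d, u) v)) -
      AA W z s ((Y.erase i.2).erase u) (TT z (Y.erase i.2) (d, u) (TT z Y i v)) =
      ∑ j ∈ II z ((Y.erase i.2).erase u), W j * cnt W z s (((Y.erase i.2).erase u).erase j.2) *
        (if slt j.1 i.2 j.2 ∧ slt j.1 u j.2 then v i - v (d, u) else 0) := by
      unfold AA
      rw [← Finset.sum_sub_distrib]
      refine Finset.sum_congr rfl fun j hj => ?_
      rw [← hpt j hj]; ring
    rw [hAA, sum_II, Finset.sum_eq_single d]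
    · split_ifs with hid
      · simp only [K]
        rw [Finset.sum_filter, Finset.mul_sum]
        refine Finset.sum_congr rfl fun y _ => ?_
        split_ifs <;> ring
      · refine Finset.sum_eq_zero fun y hy => ?_
        rw [if_neg, mul_zero]
        rintro ⟨h1, _⟩
        rw [slt_of_ne (Ne.symm hid)] at h1
        exact (mem_ext.1 (mem_II.1 hi)).2.2 y
          (Finset.mem_of_mem_erase (Finset.mem_of_mem_erase (mem_ext.1 hy).1)) h1
    · intro b _ hb
      refine Finset.sum_eq_zero fun y hy => ?_
      rw [if_neg, mul_zero]
      rintro ⟨_, h1⟩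
      simp only at h1
      rw [slt_of_ne hb] at h1
      exact (mem_ext.1 hu).2.2 y
        (Finset.mem_of_mem_erase (Finset.mem_of_mem_erase (mem_ext.1 hy).1)) h1
    · simp
  rw [hL, hR]
  apply add_le_add_left
  rw [← sub_nonneg, ← Finset.sum_sub_distrib]
  have hsum : ∑ i ∈ II z Y, ((∑ u ∈ ext z d Y, if i.2 = u then 0 else W i * W (d, u) * (v i *
        AA W z s ((Y.erase i.2).erase u) (TT z (Y.erase u) i (TT z Y (d, u) v)))) -
      ∑ u ∈ ext z d Y, if i.2 = u then 0 else W i * W (d, u) * (v i *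
        AA W z s ((Y.erase i.2).erase u) (TT z (Y.erase i.2) (d, u) (TT z Y i v)))) =
      ∑ x ∈ ext z d Y, ∑ u ∈ ext z d Y, if x = u then 0 else
        W (d, x) * W (d, u) * K x u * (v (d, x) * (v (d, x) - v (d, u))) := by
    have : ∀ i ∈ II z Y, ((∑ u ∈ ext z d Y, if i.2 = u then 0 else W i * W (d, u) * (v i *
        AA W z s ((Y.erase i.2).erase u) (TT z (Y.erase u) i (TT z Y (d, u) v)))) -
      ∑ u ∈ ext z d Y, if i.2 = u then 0 else W i * W (d, u) * (v i *
        AA W z s ((Y.erase i.2).erase u) (TT z (Y.erase i.2) (d, u) (TT z Y i v)))) =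
      ∑ u ∈ ext z d Y, if i.2 = u then 0 else
        W i * W (d, u) * (v i * if i.1 = d then (v i - v (d, u)) * K i.2 u else 0) := by
      intro i hi
      rw [← Finset.sum_sub_distrib]
      refine Finset.sum_congr rfl fun u hu => ?_
      by_cases h : i.2 = u
      · simp [h]
      · rw [← hdiff i hi u hu h]
        simp only [h, if_false]; ring
    rw [Finset.sum_congr rfl this, sum_II, Finset.sum_eq_single d]
    · refine Finset.sum_congr rfl fun x _ => Finset.sum_congr rfl fun u _ => ?_
      simp only [if_true]
      split_ifs <;> ring
    · intro b _ hb
      refine Finset.sum_eq_zero fun x _ => Finset.sum_eq_zero fun u _ => ?_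
      simp [hb]
    · simp
  rw [hsum]
  set Z := ∑ x ∈ ext z d Y, ∑ u ∈ ext z d Y, (if x = u then 0 else
        W (d, x) * W (d, u) * K x u * (v (d, x) * (v (d, x) - v (d, u)))) with hZ
  have hZ2 : Z + Z = ∑ x ∈ ext z d Y, ∑ u ∈ ext z d Y, if x = u then 0 else
        W (d, x) * W (d, u) * K x u * (v (d, x) - v (d, u)) ^ 2 := by
    conv_lhs => rw [hZ]; arg 2; rw [Finset.sum_comm]
    rw [← Finset.sum_add_distrib]
    refine Finset.sum_congr rfl fun x _ => ?_
    rw [← Finset.sum_add_distrib]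
    refine Finset.sum_congr rfl fun u _ => ?_
    by_cases h : x = u
    · simp [h]
    · rw [if_neg h, if_neg (Ne.symm h), if_neg h, hKs u x]; ring
  have : 0 ≤ Z + Z := by
    rw [hZ2]
    refine Finset.sum_nonneg fun x _ => Finset.sum_nonneg fun u _ => ?_
    split_ifs
    · exact le_rfl
    · exact mul_nonneg (mul_nonneg (mul_nonneg (hW _).le (hW _).le) (hK0 _ _)) (sq_nonneg _)
  linarith
/-- number of elements of `Y` on side `c` of `z` -/
def pp (z : X) (c : Bool) (Y : Finset X) : ℕ := (Y.filter (fun y => slt c y z)).card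

theorem pp_erase_lt {c : Bool} {Y : Finset X} {x : X} (hx : x ∈ Y) (h : slt c x z) :
    pp z c (Y.erase x) + 1 = pp z c Y := by
  unfold pp
  rw [Finset.filter_erase, Finset.card_erase_add_one]
  simp [hx, h]

theorem pp_erase_not {c : Bool} {Y : Finset X} {x : X} (h : ¬ slt c x z) :
    pp z c (Y.erase x) = pp z c Y := by
  unfold pp
  rw [Finset.filter_erase, Finset.erase_eq_of_notMem]
  simp [h]

theorem pp_erase_le (c : Bool) (Y : Finset X) (x : X) :
    pp z c (Y.erase x) ≤ pp z c Y := by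
  unfold pp
  exact Finset.card_le_card (Finset.filter_subset_filter _ (Finset.erase_subset _ _))

theorem pp_le_erase (c : Bool) (Y : Finset X) (x : X) :
    pp z c Y ≤ pp z c (Y.erase x) + 1 := by
  unfold pp
  rw [Finset.filter_erase]
  have := Finset.pred_card_le_card_erase (s := Y.filter (fun y => slt c y z)) (a := x)
  omega

theorem pp_add_le {Y : Finset X} (hz : z ∈ Y) (c : Bool) :
    pp z c Y + pp z (!c) Y + 1 ≤ Y.card := by
  unfold pp
  rw [← Finset.card_union_of_disjoint, ← Finset.card_erase_add_one hz]
  · apply Nat.succ_le_succ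
    apply Finset.card_le_card
    intro y hy
    simp only [Finset.mem_union, Finset.mem_filter, Finset.mem_erase] at hy ⊢
    refine ⟨?_, by tauto⟩
    rintro rfl
    rcases hy with h | h <;> exact slt_irrefl _ _ h.2
  · rw [Finset.disjoint_left]
    intro y h1 h2
    simp only [Finset.mem_filter] at h1 h2
    rw [slt_not] at h2
    exact slt_asymm h1.2 h2.2

theorem count_add (c : Bool) (s : List Bool) : s.count c + s.count (!c) = s.length := by
  simp

theorem exists_extremal (c : Bool) {Y : Finset X} {x : X} (hx : x ∈ Y) :
    ∃ u ∈ Y, (u = x ∨ slt c u x) ∧ ∀ y ∈ Y, ¬ slt c y u := by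
  have hwf : WellFounded (slt c : X → X → Prop) := by
    have : IsTrans X (slt c) := ⟨fun _ _ _ => slt_trans⟩
    have : Std.Irrefl (slt c : X → X → Prop) := ⟨slt_irrefl c⟩
    exact Finite.wellFounded_of_trans_of_irrefl _
  obtain ⟨u, ⟨hu, hux⟩, hmin⟩ := hwf.has_min {y : X | y ∈ Y ∧ (y = x ∨ slt c y x)} ⟨x, hx, Or.inl rfl⟩
  refine ⟨u, hu, hux, fun y hy hs => hmin y ⟨hy, ?_⟩ hs⟩
  rcases hux with rfl | h
  · exact Or.inr hs
  · exact Or.inr (slt_trans hs h)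

theorem exists_ext_lt {c : Bool} {Y : Finset X} (h : 0 < pp z c Y) :
    ∃ u ∈ ext z c Y, slt c u z := by
  unfold pp at h
  obtain ⟨y, hy⟩ := Finset.card_pos.1 h
  rw [Finset.mem_filter] at hy
  obtain ⟨u, hu, h1, h2⟩ := exists_extremal c hy.1
  have : slt c u z := by
    rcases h1 with rfl | h1
    · exact hy.2
    · exact slt_trans h1 hy.2
  refine ⟨u, mem_ext.2 ⟨hu, ?_, h2⟩, this⟩
  rintro rfl; exact slt_irrefl _ _ this

theorem ext_not_slt {c d : Bool} (hcd : d ≠ c) {Y : Finset X} (hz : z ∈ Y) {x : X}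
    (hx : x ∈ ext z c Y) : ¬ slt d x z := by
  rw [slt_of_ne hcd]
  exact (mem_ext.1 hx).2.2 z hz

theorem mem_erase_z {c : Bool} {Y : Finset X} (hz : z ∈ Y) {x : X}
    (hx : x ∈ ext z c Y) : z ∈ Y.erase x :=
  Finset.mem_erase.2 ⟨(mem_ext.1 hx).2.1.symm, hz⟩

theorem card_erase_ext {c : Bool} {Y : Finset X} {x : X}
    (hx : x ∈ ext z c Y) : (Y.erase x).card + 1 = Y.card :=
  Finset.card_erase_add_one (mem_ext.1 hx).1

theorem cnt_pos_iff (hW : ∀ i, 0 < W i) (s : List Bool) (Y : Finset X) (hz : z ∈ Y)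
    (hc : Y.card = s.length + 1) :
    0 < cnt W z s Y ↔ ∀ d, pp z d Y ≤ s.count d := by
  induction s generalizing Y with
  | nil =>
    simp only [cnt, zero_lt_one, true_iff]
    intro d
    have := pp_add_le hz d
    simp at hc
    omega
  | cons c s ih =>
    have hother : ∀ x ∈ ext z c Y, ∀ d, d ≠ c → pp z d (Y.erase x) = pp z d Y :=
      fun x hx d hd => pp_erase_not (ext_not_slt hd hz hx)
    have ih' : ∀ x ∈ ext z c Y, (0 < cnt W z s (Y.erase x) ↔
        ∀ d, pp z d (Y.erase x) ≤ s.count d) := by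
      intro x hx
      refine ih _ (mem_erase_z hz hx) ?_
      have := card_erase_ext hx
      simp at hc; omega
    constructor
    · intro h
      have : ∃ x ∈ ext z c Y, 0 < cnt W z s (Y.erase x) := by
        by_contra hno
        push Not at hno
        have : cnt W z (c :: s) Y ≤ 0 := Finset.sum_nonpos fun x hx =>
          mul_nonpos_of_nonneg_of_nonpos (hW _).le (hno x hx)
        linarith
      obtain ⟨x, hx, hpos⟩ := this
      have h1 := (ih' x hx).1 hpos
      intro d
      have h2 := h1 d
      by_cases hd : d = c
      · subst hd
        have := pp_le_erase (z := z) d Y x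
        simp; omega
      · rw [hother x hx d hd] at h2
        rw [List.count_cons_of_ne (Ne.symm hd)]; exact h2
    · intro h
      have : ∃ x ∈ ext z c Y, pp z c (Y.erase x) ≤ s.count c := by
        have hcc := h c
        simp at hcc
        by_cases hp : 0 < pp z c Y
        · obtain ⟨u, hu, hs⟩ := exists_ext_lt hp
          refine ⟨u, hu, ?_⟩
          have := pp_erase_lt (mem_ext.1 hu).1 hs
          omega
        · have hex : ∃ x0 ∈ Y, x0 ≠ z ∧ ¬ slt (!c) x0 z := by
            by_contra hno
            push Not at hno
            have hle : (Y.erase z).card ≤ pp z (!c) Y := by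
              unfold pp
              apply Finset.card_le_card
              intro y hy
              rw [Finset.mem_erase] at hy
              exact Finset.mem_filter.2 ⟨hy.2, hno y hy.2 hy.1⟩
            have h3 := h (!c)
            have h4 := Finset.card_erase_add_one hz
            have h5 := count_add c s
            rw [List.count_cons_of_ne (by simp)] at h3
            simp at hc
            omega
          obtain ⟨x0, hx0, hne, hns⟩ := hex
          obtain ⟨u, hu, h1, h2⟩ := exists_extremal c hx0
          refine ⟨u, mem_ext.2 ⟨hu, ?_, h2⟩, ?_⟩
          · rintro rfl
            rcases h1 with h1 | h1
            · exact hne h1.symm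
            · exact hns (slt_not.2 h1)
          · have := pp_erase_le (z := z) c Y u
            omega
      obtain ⟨x, hx, hxc⟩ := this
      have hp : 0 < cnt W z s (Y.erase x) := by
        rw [ih' x hx]
        intro d
        by_cases hd : d = c
        · subst hd; exact hxc
        · rw [hother x hx d hd]
          have := h d
          rwa [List.count_cons_of_ne (Ne.symm hd)] at this
      refine Finset.sum_pos' (fun y _ => mul_nonneg (hW _).le (cnt_nonneg hW _ _)) ⟨x, hx, ?_⟩
      exact mul_pos (hW _) hp

/-- connectivity of the support graph -/
theorem conn_aux (s : List Bool) (Y : Finset X) (hz : z ∈ Y) (hc : Y.card = s.length + 4)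
    (φ : Bool × X → ℝ)
    (hφ : ∀ i ∈ II z Y, ∀ j ∈ II z Y, i.2 ≠ j.2 →
      (∀ d, pp z d ((Y.erase i.2).erase j.2) ≤ s.count d + 1) → φ i = φ j)
    (i j : Bool × X) (hi : i ∈ II z Y) (hj : j ∈ II z Y)
    (hsi : ∀ d, pp z d (Y.erase i.2) ≤ s.count d + 2)
    (hsj : ∀ d, pp z d (Y.erase j.2) ≤ s.count d + 2) : φ i = φ j := by
  have via : ∀ d, s.count d + 2 ≤ pp z d Y → ∀ u ∈ ext z d Y, slt d u z → ∀ k ∈ II z Y,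
      ¬ slt d k.2 z → (∀ d, pp z d (Y.erase k.2) ≤ s.count d + 2) → φ k = φ (d, u) := by
    intro d hd u hu hus k hk hks hsk
    have hne : k.2 ≠ u := by rintro h; exact hks (h ▸ hus)
    refine hφ k hk (d, u) (mem_II.2 hu) hne ?_
    have h0 := hsk d
    have h1 := pp_erase_not (Y := Y) hks
    have h2 := pp_erase_lt (Finset.mem_erase.2 ⟨Ne.symm hne, (mem_ext.1 hu).1⟩ : u ∈ Y.erase k.2) hus
    have h3 := pp_add_le hz d
    have h4 := count_add d s
    have h5 := pp_erase_le (z := z) (!d) Y k.2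
    have h6 := pp_erase_le (z := z) (!d) (Y.erase k.2) u
    intro d'
    by_cases hdd : d' = d
    · subst hdd; simp only; omega
    · have : d' = !d := by cases d <;> cases d' <;> simp_all
      subst this; simp only; omega
  by_cases hij : i.2 = j.2
  · by_cases hs : i.1 = j.1
    · rw [Prod.ext hs hij]
    · have hi' := mem_II.1 hi
      have hj' := mem_II.1 hj
      rw [← hij] at hj'
      have hall : ∀ b, i.2 ∈ ext z b Y := by
        intro b
        by_cases hb : b = i.1
        · subst hb; exact hi'
        · have : b = j.1 := by
            revert hb hs; generalize i.1 = p; generalize j.1 = q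
            cases p <;> cases q <;> cases b <;> simp
          subst this; exact hj'
      have hns : ∀ d, ¬ slt d i.2 z := fun d =>
        ext_not_slt (c := !d) (by cases d <;> simp) hz (hall _)
      by_cases hbig : ∃ d, s.count d + 2 ≤ pp z d Y
      · obtain ⟨d, hd⟩ := hbig
        obtain ⟨u, hu, hus⟩ := exists_ext_lt (show 0 < pp z d Y by omega)
        rw [via d hd u hu hus i hi (hns d) hsi, via d hd u hu hus j hj (hij ▸ hns d) hsj]
      · push Not at hbig
        have hex : ∃ k ∈ II z Y, k.2 ≠ i.2 := by
          have : 0 < ((Y.erase z).erase i.2).card := by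
            have h1 := Finset.card_erase_add_one hz
            have h2 := Finset.pred_card_le_card_erase (s := Y.erase z) (a := i.2)
            omega
          obtain ⟨u0, hu0⟩ := Finset.card_pos.1 this
          simp only [Finset.mem_erase] at hu0
          have hmin : ∀ b, ∃ u ∈ Y, (u = u0 ∨ slt b u u0) ∧ (∀ y ∈ Y, ¬ slt b y u) ∧ u ≠ i.2 := by
            intro b
            obtain ⟨u, hu, h1, h2⟩ := exists_extremal b hu0.2.2
            refine ⟨u, hu, h1, h2, ?_⟩
            intro he
            rcases h1 with h1 | h1
            · exact hu0.1 (h1 ▸ he)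
            · rw [he, ← slt_not] at h1
              exact (mem_ext.1 (hall (!b))).2.2 u0 hu0.2.2 h1
          obtain ⟨u, hu, h1, h2, h3⟩ := hmin true
          by_cases huz : u = z
          · obtain ⟨u', hu', h1', h2', h3'⟩ := hmin false
            refine ⟨(false, u'), mem_II.2 (mem_ext.2 ⟨hu', ?_, h2'⟩), h3'⟩
            rintro rfl
            subst huz
            rcases h1 with h1 | h1
            · exact hu0.2.1 h1.symm
            rcases h1' with h1' | h1'
            · exact hu0.2.1 h1'.symm
            rw [slt_of_ne (c := true) (by simp)] at h1'
            exact slt_asymm h1 h1'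
          · exact ⟨(true, u), mem_II.2 (mem_ext.2 ⟨hu, huz, h2⟩), h3⟩
        obtain ⟨k, hk, hki⟩ := hex
        have hb : ∀ a d, pp z d ((Y.erase a).erase k.2) ≤ s.count d + 1 := by
          intro a d
          have h1 := hbig d
          have h2 := pp_erase_le (z := z) d Y a
          have h3 := pp_erase_le (z := z) d (Y.erase a) k.2
          omega
        rw [hφ i hi k hk (Ne.symm hki) (hb _), hφ j hj k hk (hij ▸ Ne.symm hki) (hb _)]
  · by_cases he : ∀ d, pp z d ((Y.erase i.2).erase j.2) ≤ s.count d + 1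
    · exact hφ i hi j hj hij he
    · push Not at he
      obtain ⟨d, hd⟩ := he
      have hiY := (mem_ext.1 (mem_II.1 hi)).1
      have hjY := (mem_ext.1 (mem_II.1 hj)).1
      have hnj : ¬ slt d j.2 z := by
        intro h
        have h1 := pp_erase_lt (Finset.mem_erase.2 ⟨Ne.symm hij, hjY⟩ : j.2 ∈ Y.erase i.2) h
        have := hsi d
        omega
      have hni : ¬ slt d i.2 z := by
        intro h
        have h1 := pp_erase_lt (Finset.mem_erase.2 ⟨hij, hiY⟩ : i.2 ∈ Y.erase j.2) h
        have := hsj d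
        rw [Finset.erase_right_comm] at hd
        omega
      rw [pp_erase_not hnj, pp_erase_not hni] at hd
      obtain ⟨u, hu, hus⟩ := exists_ext_lt (show 0 < pp z d Y by omega)
      rw [via d (by omega) u hu hus i hi hni hsi, via d (by omega) u hu hus j hj hnj hsj]

/-- hyperbolicity -/
def Hyp (W : Bool × X → ℝ) (z : X) (s : List Bool) (Y : Finset X) : Prop :=
  ∀ v w, 0 < BB W z s Y w w → BB W z s Y v v * BB W z s Y w w ≤ (BB W z s Y v w) ^ 2

theorem hyp_of_neg {V : Type*} (B : V → V → ℝ) (ℓ : V → ℝ) (sub : V → ℝ → V → V)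
    (hB : ∀ v r w, B (sub v r w) (sub v r w) = B v v - 2 * r * B v w + r ^ 2 * B w w)
    (hl : ∀ v r w, ℓ (sub v r w) = ℓ v - r * ℓ w)
    (hneg : ∀ v, ℓ v = 0 → B v v ≤ 0) (v w : V) (hw : 0 < B w w) :
    B v v * B w w ≤ (B v w) ^ 2 := by
  have hlw : ℓ w ≠ 0 := fun h => absurd (hneg w h) (not_le.2 hw)
  have h1 := hneg (sub v (ℓ v / ℓ w) w) (by rw [hl]; field_simp; ring)
  rw [hB] at h1
  nlinarith [sq_nonneg (B v w - ℓ v / ℓ w * B w w)]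

theorem BB_sub_smul (s : List Bool) (Y : Finset X) (v : Bool × X → ℝ) (r : ℝ) (w : Bool × X → ℝ) :
    BB W z s Y (v + (-r) • w) (v + (-r) • w) =
      BB W z s Y v v - 2 * r * BB W z s Y v w + r ^ 2 * BB W z s Y w w := by
  simp only [BB_add_right, BB_add_left, BB_smul_right, BB_smul_left]
  rw [BB_symm s Y w v]; ring

theorem BB_single (s : List Bool) (Y : Finset X) (i : Bool × X) (w : Bool × X → ℝ) :
    BB W z s Y (Pi.single i 1) w =
      if i ∈ II z Y then W i * AA W z s (Y.erase i.2) (TT z Y i w) else 0 := by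
  unfold BB
  split_ifs with h
  · rw [Finset.sum_eq_single_of_mem i h]
    · simp
    · intro j _ hj; simp [Pi.single_apply, hj]
  · refine Finset.sum_eq_zero fun j hj => ?_
    have : j ≠ i := by rintro rfl; exact h hj
    simp [Pi.single_apply, this]

theorem BB_eq_sum (s : List Bool) (Y : Finset X) (v w : Bool × X → ℝ) :
    BB W z s Y v w = ∑ i, v i * BB W z s Y (Pi.single i 1) w := by
  simp_rw [BB_single, mul_ite, mul_zero]
  rw [← Finset.sum_filter]
  unfold BB
  refine Finset.sum_congr ?_ fun _ _ => rfl
  ext i; simp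

theorem BB_eq_sum_right (s : List Bool) (Y : Finset X) (v w : Bool × X → ℝ) :
    BB W z s Y v w = ∑ i, w i * BB W z s Y v (Pi.single i 1) := by
  rw [BB_symm, BB_eq_sum]
  exact Finset.sum_congr rfl fun i _ => by rw [BB_symm]

theorem single_nonneg' (i j : Bool × X) : (0 : ℝ) ≤ (Pi.single i 1 : Bool × X → ℝ) j := by
  rw [Pi.single_apply]; split_ifs <;> norm_num

theorem BB_zero_of (hW : ∀ i, 0 < W i) {s : List Bool} {Y : Finset X} {H : Bool × X → ℝ}
    (hH : ∀ i, 0 < H i) (h0 : BB W z s Y H H = 0) (v w : Bool × X → ℝ) : BB W z s Y v w = 0 := by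
  have hm : ∀ i j, BB W z s Y (Pi.single i 1) (Pi.single j 1) = 0 := by
    intro i j
    have hn : ∀ i j, 0 ≤ BB W z s Y (Pi.single i 1) (Pi.single j 1) := fun i j =>
      BB_nonneg hW (single_nonneg' i) (single_nonneg' j)
    rw [BB_eq_sum] at h0
    have hrow : ∀ i, 0 ≤ BB W z s Y (Pi.single i 1) H := fun i =>
      BB_nonneg hW (single_nonneg' i) (fun j => (hH j).le)
    have h1 := (Finset.sum_eq_zero_iff_of_nonneg
      (fun i _ => mul_nonneg (hH i).le (hrow i))).1 h0 i (Finset.mem_univ i)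
    have h2 := (mul_eq_zero.1 h1).resolve_left (hH i).ne'
    rw [BB_eq_sum_right] at h2
    have h3 := (Finset.sum_eq_zero_iff_of_nonneg
      (fun j _ => mul_nonneg (hH j).le (hn i j))).1 h2 j (Finset.mem_univ j)
    exact (mul_eq_zero.1 h3).resolve_left (hH j).ne'
  rw [BB_eq_sum]
  refine Finset.sum_eq_zero fun i _ => ?_
  rw [BB_eq_sum_right]
  simp [hm]


theorem sum_II_pair {y : X} (hyz : y ≠ z) (F : Bool × X → ℝ) :
    ∑ i ∈ II z {y, z}, F i = ∑ c : Bool, if slt c z y then 0 else F (c, y) := by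
  rw [sum_II]
  refine Finset.sum_congr rfl fun c _ => ?_
  have : ext z c {y, z} = if slt c z y then ∅ else {y} := by
    ext u
    rw [mem_ext]
    split_ifs with h
    · simp only [Finset.mem_insert, Finset.mem_singleton, Finset.notMem_empty, iff_false]
      rintro ⟨rfl | rfl, h1, h2⟩
      · exact h2 z (by simp) h
      · exact h1 rfl
    · simp only [Finset.mem_insert, Finset.mem_singleton]
      constructor
      · rintro ⟨rfl | rfl, h1, h2⟩
        · rfl
        · exact absurd rfl h1
      · rintro rfl
        refine ⟨Or.inl rfl, hyz, ?_⟩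
        rintro w (rfl | rfl)
        · exact slt_irrefl _ _
        · exact h
  rw [this]
  split_ifs <;> simp

theorem sum_II_triple {x y : X} (hxy : x ≠ y) (hxz : x ≠ z) (hyz : y ≠ z) (F : Bool × X → ℝ) :
    ∑ i ∈ II z {x, y, z}, F i =
      ∑ c : Bool, ((if x ∈ ext z c {x, y, z} then F (c, x) else 0) +
        (if y ∈ ext z c {x, y, z} then F (c, y) else 0)) := by
  rw [sum_II]
  refine Finset.sum_congr rfl fun c _ => ?_
  unfold ext
  rw [Finset.sum_filter, Finset.sum_insert (by simp [hxy, hxz]), Finset.sum_insert (by simp [hyz]),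
    Finset.sum_singleton]
  simp [Finset.mem_filter]

theorem mem_ext_triple_left {x y : X} (hxz : x ≠ z) (c : Bool) :
    x ∈ ext z c {x, y, z} ↔ ¬ slt c y x ∧ ¬ slt c z x := by
  rw [mem_ext]
  simp [hxz, slt_irrefl]

theorem mem_ext_triple_right {x y : X} (hyz : y ≠ z) (c : Bool) :
    y ∈ ext z c {x, y, z} ↔ ¬ slt c x y ∧ ¬ slt c z y := by
  rw [mem_ext]
  simp [hyz, slt_irrefl]

theorem AA_nil_pair {y : X} (hyz : y ≠ z) (v : Bool × X → ℝ) :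
    AA W z [] {y, z} v = ∑ c : Bool, if slt c z y then 0 else W (c, y) * v (c, y) := by
  unfold AA
  rw [sum_II_pair hyz]
  simp [cnt]

theorem BB_nil_triple {x y : X} (hxy : x ≠ y) (hxz : x ≠ z) (hyz : y ≠ z) (v : Bool × X → ℝ) :
    BB W z [] {x, y, z} v v =
      ∑ c : Bool, ((if ¬ slt c y x ∧ ¬ slt c z x then v (c, x) * (W (c, x) *
          ∑ d : Bool, if slt d z y then 0 else W (d, y) *
            if ¬ slt d x y ∧ ¬ slt d z y then v (d, y) else v (c, x)) else 0) +
        (if ¬ slt c x y ∧ ¬ slt c z y then v (c, y) * (W (c, y) *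
          ∑ d : Bool, if slt d z x then 0 else W (d, x) *
            if ¬ slt d y x ∧ ¬ slt d z x then v (d, x) else v (c, y)) else 0)) := by
  unfold BB
  rw [sum_II_triple hxy hxz hyz]
  refine Finset.sum_congr rfl fun c _ => ?_
  have e1 : ({x, y, z} : Finset X).erase x = {y, z} := by
    ext u; simp only [Finset.mem_erase, Finset.mem_insert, Finset.mem_singleton]
    constructor
    · tauto
    · rintro (rfl | rfl)
      · exact ⟨Ne.symm hxy, by simp⟩
      · exact ⟨Ne.symm hxz, by simp⟩
  have e2 : ({x, y, z} : Finset X).erase y = {x, z} := by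
    ext u; simp only [Finset.mem_erase, Finset.mem_insert, Finset.mem_singleton]
    constructor
    · tauto
    · rintro (rfl | rfl)
      · exact ⟨hxy, by simp⟩
      · exact ⟨Ne.symm hyz, by simp⟩
  simp only [e1, e2, mem_ext_triple_left hxz, mem_ext_triple_right hyz, AA_nil_pair hyz,
    AA_nil_pair hxz, TT, mem_II]

theorem hyp_base_aux (hW : ∀ i, 0 < W i)
    (hrev : ∀ c x y, slt c x y → W (c, y) * W (!c, x) ≤ W (c, x) * W (!c, y))
    {x y : X} (hxy : x ≠ y) (hxz : x ≠ z) (hyz : y ≠ z) (hn : ¬ y < x) :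
    Hyp W z [] {x, y, z} := by
  intro v w hw
  by_cases hlt : x < y
  · let α : ℝ := if z < x ∨ z < y then 0 else W (true, x) * W (true, y)
    let β : ℝ := if z < x ∨ y < z then 0 else W (true, x) * W (false, y)
    let γ : ℝ := if x < z ∨ y < z then 0 else W (false, x) * W (false, y)
    have hQ : ∀ v, BB W z [] {x, y, z} v v = α * v (true, x) ^ 2
        + 2 * β * (v (true, x) * v (false, y)) + γ * v (false, y) ^ 2 := by
      intro v
      rw [BB_nil_triple hxy hxz hyz]
      simp only [Fintype.sum_bool, slt, hlt, hn, not_true_eq_false, not_false_eq_true, true_and,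
        false_and, if_false, α, β, γ]
      by_cases h1 : z < x <;> by_cases h2 : z < y <;> by_cases h3 : x < z <;>
        by_cases h4 : y < z <;> simp [h1, h2, h3, h4] <;> ring
    have hβ : α * γ ≤ β ^ 2 := by
      have h0 := hrev true x y hlt
      simp only [Bool.not_true] at h0
      have p1 := hW (true, x)
      have p2 := hW (false, y)
      simp only [α, β, γ]
      by_cases h1 : z < x <;> by_cases h2 : z < y <;> by_cases h3 : x < z <;>
        by_cases h4 : y < z <;> simp [h1, h2, h3, h4] <;> try positivity
      have := mul_le_mul_of_nonneg_left h0 (mul_pos p1 p2).le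
      nlinarith
    have hγ0 : 0 ≤ γ := by
      simp only [γ]; split_ifs
      · exact le_rfl
      · exact (mul_pos (hW _) (hW _)).le
    by_cases hγ : γ = 0
    · refine hyp_of_neg (BB W z [] {x, y, z}) (fun v => v (true, x)) (fun v r w => v + (-r) • w)
        (fun v r w => BB_sub_smul _ _ v r w) ?_ ?_ v w hw
      · intro v r w; simp; ring
      · intro v hv
        rw [hQ, hγ, hv]; simp
    · refine hyp_of_neg (BB W z [] {x, y, z}) (fun v => β * v (true, x) + γ * v (false, y))
        (fun v r w => v + (-r) • w)
        (fun v r w => BB_sub_smul _ _ v r w) ?_ ?_ v w hw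
      · intro v r w; simp; ring
      · intro v hv
        have hγp : 0 < γ := lt_of_le_of_ne hγ0 (Ne.symm hγ)
        have : γ * BB W z [] {x, y, z} v v ≤ 0 := by
          rw [hQ]
          have e : γ * (α * v (true, x) ^ 2
            + 2 * β * (v (true, x) * v (false, y)) + γ * v (false, y) ^ 2) =
            (β * v (true, x) + γ * v (false, y)) ^ 2 - (β ^ 2 - α * γ) * v (true, x) ^ 2 := by ring
          rw [e, hv]
          nlinarith [sq_nonneg (v (true, x))]
        by_contra hcon
        push Not at hcon
        nlinarith
  · let px : (Bool × X → ℝ) → ℝ := fun v => (if z < x then 0 else W (true, x) * v (true, x)) +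
      (if x < z then 0 else W (false, x) * v (false, x))
    let py : (Bool × X → ℝ) → ℝ := fun v => (if z < y then 0 else W (true, y) * v (true, y)) +
      (if y < z then 0 else W (false, y) * v (false, y))
    have hQ : ∀ v, BB W z [] {x, y, z} v v = 2 * px v * py v := by
      intro v
      rw [BB_nil_triple hxy hxz hyz]
      simp only [Fintype.sum_bool, slt, hlt, hn, not_true_eq_false, not_false_eq_true, true_and,
        false_and, if_false, px, py]
      by_cases h1 : z < x <;> by_cases h2 : z < y <;> by_cases h3 : x < z <;>
        by_cases h4 : y < z <;> simp [h1, h2, h3, h4] <;> ring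
    refine hyp_of_neg (BB W z [] {x, y, z}) px
        (fun v r w => v + (-r) • w)
        (fun v r w => BB_sub_smul _ _ v r w) ?_ ?_ v w hw
    · intro v r w
      simp only [px]
      split_ifs <;> simp <;> ring
    · intro v hv
      rw [hQ, hv]; simp

theorem hyp_base (hW : ∀ i, 0 < W i)
    (hrev : ∀ c x y, slt c x y → W (c, y) * W (!c, x) ≤ W (c, x) * W (!c, y))
    (Y : Finset X) (hz : z ∈ Y) (hc : Y.card = 3) : Hyp W z [] Y := by
  have h2 : (Y.erase z).card = 2 := by
    rw [Finset.card_erase_of_mem hz, hc]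
  obtain ⟨x, y, hxy, he⟩ := Finset.card_eq_two.1 h2
  have hx : x ∈ Y.erase z := by rw [he]; simp
  have hy : y ∈ Y.erase z := by rw [he]; simp
  rw [Finset.mem_erase] at hx hy
  have hY : Y = {x, y, z} := by
    rw [← Finset.insert_erase hz, he]
    ext u; simp; tauto
  by_cases h : y < x
  · have hY' : Y = {y, x, z} := by rw [hY]; ext u; simp; tauto
    rw [hY']
    exact hyp_base_aux hW hrev (Ne.symm hxy) hy.1 hx.1 (lt_asymm h)
  · rw [hY]
    exact hyp_base_aux hW hrev hxy hx.1 hy.1 h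

open Matrix in
theorem hyp_mix (hW : ∀ i, 0 < W i) (s : List Bool) (Y : Finset X) (hz : z ∈ Y)
    (hc : Y.card = s.length + 4)
    (ih : ∀ Y' : Finset X, z ∈ Y' → Y'.card = s.length + 3 → Hyp W z s Y')
    (g : Bool → ℝ) (hg : ∀ c, 0 < g c) (v w : Bool × X → ℝ)
    (hw : 0 < ∑ c, g c * BB W z (c :: s) Y w w) :
    (∑ c, g c * BB W z (c :: s) Y v v) * (∑ c, g c * BB W z (c :: s) Y w w) ≤
      (∑ c, g c * BB W z (c :: s) Y v w) ^ 2 := by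
  let B : (Bool × X → ℝ) → (Bool × X → ℝ) → ℝ := fun v w => ∑ c, g c * BB W z (c :: s) Y v w
  let H : Bool × X → ℝ := fun i => g i.1
  have hH : ∀ i, 0 < H i := fun i => hg i.1
  have hHee : H = g true • ee true + g false • ee false := by
    funext ⟨c, x⟩
    cases c <;> simp [H, ee]
  let M : Matrix (Bool × X) (Bool × X) ℝ := fun i j => B (Pi.single i 1) (Pi.single j 1)
  have hBs : ∀ v w, B v w = B w v := fun v w =>
    Finset.sum_congr rfl fun c _ => by rw [BB_symm]
  have hBsum : ∀ v w, B v w = ∑ i, v i * B (Pi.single i 1) w := by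
    intro v w
    simp only [B, Finset.mul_sum]
    rw [Finset.sum_comm]
    refine Finset.sum_congr rfl fun c _ => ?_
    rw [BB_eq_sum, Finset.mul_sum]
    exact Finset.sum_congr rfl fun i _ => by ring
  have hMv : ∀ v i, (M *ᵥ v) i = B (Pi.single i 1) v := by
    intro v i
    rw [hBs, hBsum]
    simp only [M, Matrix.mulVec, dotProduct]
    exact Finset.sum_congr rfl fun j _ => by rw [hBs]; ring
  have hvMw : ∀ v w, v ⬝ᵥ (M *ᵥ w) = B v w := by
    intro v w
    rw [hBsum]
    simp only [dotProduct, hMv]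
  -- inheritance
  have hinh : ∀ i ∈ II z Y, ∀ v, B (Pi.single i 1) v =
      W i * BB W z s (Y.erase i.2) (TT z Y i v) H := by
    intro i hi v
    simp only [B, BB_single, hi, if_true, Fintype.sum_bool]
    rw [hHee, BB_add_right, BB_smul_right, BB_smul_right, BB_ee, BB_ee]; ring
  have hinh0 : ∀ i, i ∉ II z Y → ∀ v, B (Pi.single i 1) v = 0 := by
    intro i hi v
    simp only [B, BB_single, hi, if_false, mul_zero, Finset.sum_const_zero]
  have hinhH : ∀ i ∈ II z Y, B (Pi.single i 1) H = W i * BB W z s (Y.erase i.2) H H := by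
    intro i hi
    rw [hinh i hi]
    congr 1
    exact BB_congr (fun j hj => TT_side hi g hj) (fun _ _ => rfl)
  have hIH : ∀ i ∈ II z Y, Hyp W z s (Y.erase i.2) := by
    intro i hi
    have := card_erase_ext (mem_II.1 hi)
    exact ih _ (mem_erase_z hz (mem_II.1 hi)) (by omega)
  have hneg : ∀ v, B v H = 0 → B v v ≤ 0 := by
    intro v hv
    rw [← hvMw]
    refine ws_local_global M ?_ ?_ H hH ?_ ?_ v (by rw [hvMw]; exact hv)
    · intro i j; exact hBs _ _
    · intro i j
      exact Finset.sum_nonneg fun c _ => mul_nonneg (hg c).le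
        (BB_nonneg hW (single_nonneg' i) (single_nonneg' j))
    · intro v
      rw [hvMw]
      have h1 : B v v ≤ ∑ i ∈ II z Y, H i * (W i *
          BB W z s (Y.erase i.2) (TT z Y i v) (TT z Y i v)) := by
        rw [sum_II]
        refine Finset.sum_le_sum fun c _ => ?_
        have := mul_le_mul_of_nonneg_left (pull_ineq (z := z) hW c s Y v) (hg c).le
        rw [Finset.mul_sum] at this
        exact this
      refine h1.trans ?_
      rw [← Finset.sum_subset (Finset.subset_univ (II z Y))]
      · refine Finset.sum_le_sum fun i hi => ?_
        rw [hMv, hMv, hinhH i hi, hinh i hi]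
        set b := BB W z s (Y.erase i.2) H H with hb
        have hb0 : 0 ≤ b := BB_nonneg hW (fun i => (hH i).le) (fun i => (hH i).le)
        by_cases hbz : b = 0
        · have := BB_zero_of hW hH (hb ▸ hbz) (TT z Y i v) (TT z Y i v)
          rw [this, hbz]; simp
        · have hbp : 0 < b := lt_of_le_of_ne hb0 (Ne.symm hbz)
          have hh := hIH i hi (TT z Y i v) H hbp
          rw [le_div_iff₀ (mul_pos (hW i) hbp)]
          have hp : 0 < H i * (W i * W i) := mul_pos (hH i) (mul_pos (hW i) (hW i))
          have := mul_le_mul_of_nonneg_left hh hp.le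
          nlinarith
      · intro i _ hi
        rw [hMv, hinh0 i hi]; simp
    · intro φ hφ i j hi hj
      rw [hMv] at hi hj
      have hmem : ∀ i, 0 < B (Pi.single i 1) H → i ∈ II z Y := by
        intro i hi
        by_contra hn
        rw [hinh0 i hn] at hi
        exact lt_irrefl _ hi
      have hsupp : ∀ i, 0 < B (Pi.single i 1) H → ∀ d, pp z d (Y.erase i.2) ≤ s.count d + 2 := by
        intro i hi d
        have hiI := hmem i hi
        rw [hinhH i hiI, hHee] at hi
        simp only [BB_add_right, BB_add_left, BB_smul_right, BB_smul_left, BB_ee_ee] at hi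
        have hex : ∃ a b, 0 < cnt W z (a :: b :: s) (Y.erase i.2) := by
          by_contra hno
          push Not at hno
          have hz' : ∀ a b, cnt W z (a :: b :: s) (Y.erase i.2) = 0 := fun a b =>
            le_antisymm (hno a b) (cnt_nonneg hW _ _)
          simp only [hz', mul_zero, add_zero, lt_irrefl] at hi
        obtain ⟨a, b, hab⟩ := hex
        have hcard := card_erase_ext (mem_II.1 hiI)
        rw [cnt_pos_iff hW _ _ (mem_erase_z hz (mem_II.1 hiI)) (by simp; omega)] at hab
        have := hab d
        simp only [List.count_cons] at this
        split_ifs at this <;> omega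
      refine conn_aux s Y hz hc φ ?_ i j (hmem i hi) (hmem j hj) (hsupp i hi) (hsupp j hj)
      intro i hi j hj hij hpp
      apply hφ
      have hjI : j ∈ II z (Y.erase i.2) :=
        mem_II.2 (ext_erase_of_mem (mem_II.1 hj) (Ne.symm hij))
      have hz2 := mem_erase_z (mem_erase_z hz (mem_II.1 hi)) (mem_II.1 hjI)
      have hc1 := card_erase_ext (mem_II.1 hi)
      have hc2 := card_erase_ext (mem_II.1 hjI)
      have hex : ∃ c, 0 < cnt W z (c :: s) ((Y.erase i.2).erase j.2) := by
        have hb := pp_add_le hz2 true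
        have hcs := count_add true s
        have ht := hpp true
        have hf := hpp false
        simp only [Bool.not_true] at hb hcs
        by_cases hle : pp z true ((Y.erase i.2).erase j.2) ≤ s.count true
        · refine ⟨false, ?_⟩
          rw [cnt_pos_iff hW _ _ hz2 (by simp; omega)]
          intro d; cases d <;> simp <;> omega
        · refine ⟨true, ?_⟩
          rw [cnt_pos_iff hW _ _ hz2 (by simp; omega)]
          intro d; cases d <;> simp <;> omega
      obtain ⟨c, hcpos⟩ := hex
      refine Finset.sum_pos' (fun c _ => mul_nonneg (hg c).le
        (BB_nonneg hW (single_nonneg' i) (single_nonneg' j))) ⟨c, Finset.mem_univ c, ?_⟩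
      apply mul_pos (hg c)
      rw [BB_single, if_pos hi]
      apply mul_pos (hW i)
      unfold AA
      refine Finset.sum_pos' (fun k _ => mul_nonneg (mul_nonneg (hW _).le (cnt_nonneg hW _ _))
        (TT_nonneg (single_nonneg' j) k)) ⟨j, hjI, ?_⟩
      have : TT z Y i (Pi.single j 1) j = 1 := by simp [TT, hj]
      rw [this, mul_one]
      exact mul_pos (hW _) hcpos
  refine hyp_of_neg B (fun v => B v H) (fun v r w => v + (-r) • w) ?_ ?_ hneg v w hw
  · intro v r w
    simp only [B, BB_sub_smul, Fintype.sum_bool]; ring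
  · intro v r w
    simp only [B, BB_add_left, BB_smul_left, Fintype.sum_bool]; ring

theorem hyp_all (hW : ∀ i, 0 < W i)
    (hrev : ∀ c x y, slt c x y → W (c, y) * W (!c, x) ≤ W (c, x) * W (!c, y))
    (s : List Bool) (Y : Finset X) (hz : z ∈ Y) (hc : Y.card = s.length + 3) :
    Hyp W z s Y := by
  induction s generalizing Y with
  | nil => exact hyp_base hW hrev Y hz (by simpa using hc)
  | cons d s ih =>
    intro v w hw
    have hmix : ∀ ε : ℝ, 0 < ε → 0 < BB W z (d :: s) Y w w + ε * BB W z ((!d) :: s) Y w w →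
        (BB W z (d :: s) Y v v + ε * BB W z ((!d) :: s) Y v v) *
        (BB W z (d :: s) Y w w + ε * BB W z ((!d) :: s) Y w w) ≤
        (BB W z (d :: s) Y v w + ε * BB W z ((!d) :: s) Y v w) ^ 2 := by
      intro ε hε h
      have key := hyp_mix hW s Y hz (by simpa using hc) ih (fun c => if c = d then 1 else ε)
        (by intro c; split_ifs; exacts [one_pos, hε]) v w
      have e : ∀ v w, ∑ c, (if c = d then 1 else ε) * BB W z (c :: s) Y v w =
          BB W z (d :: s) Y v w + ε * BB W z ((!d) :: s) Y v w := by
        intro v w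
        cases d <;> simp [add_comm]
      simp only [e] at key
      exact key h
    have hcont : ∀ a b : ℝ, Filter.Tendsto (fun ε : ℝ => a + ε * b) (nhdsWithin 0 (Set.Ioi 0)) (nhds a) := by
      intro a b
      have : Continuous (fun ε : ℝ => a + ε * b) := by fun_prop
      have h := this.tendsto 0
      simp only [zero_mul, add_zero] at h
      exact h.mono_left nhdsWithin_le_nhds
    refine le_of_tendsto_of_tendsto ((hcont _ (BB W z ((!d) :: s) Y v v)).mul
      (hcont _ (BB W z ((!d) :: s) Y w w))) ((hcont _ (BB W z ((!d) :: s) Y v w)).pow 2) ?_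
    have h1 := (hcont _ (BB W z ((!d) :: s) Y w w)).eventually (lt_mem_nhds hw)
    filter_upwards [h1, self_mem_nhdsWithin] with ε h2 h3
    exact hmix ε h3 h2


theorem kernel_of_eq {s : List Bool} {Y : Finset X} (hH : Hyp W z s Y) {u e : Bool × X → ℝ}
    (he : 0 < BB W z s Y e e) (hue : BB W z s Y u e = 0) (huu : BB W z s Y u u = 0)
    (v : Bool × X → ℝ) : BB W z s Y u v = 0 := by
  have key : ∀ t : ℝ, (BB W z s Y v v - 2 * t * BB W z s Y v u) * BB W z s Y e e
      ≤ (BB W z s Y v e) ^ 2 := by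
    intro t
    have h := hH (v + (-t) • u) e he
    rw [BB_sub_smul, huu, BB_add_left, BB_smul_left, hue] at h
    simpa using h
  rw [BB_symm]
  by_contra hb
  set b := BB W z s Y v u
  set a := BB W z s Y v v
  set c := BB W z s Y v e
  set E := BB W z s Y e e
  have h := key ((a - (c ^ 2 + 1) / E) / (2 * b))
  have e1 : (a - 2 * ((a - (c ^ 2 + 1) / E) / (2 * b)) * b) * E = c ^ 2 + 1 := by
    have := he.ne'
    field_simp
    ring
  rw [e1] at h
  linarith

/-- the kernel direction -/
def uu (r : ℝ) : Bool × X → ℝ := ee true + (-r) • ee false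

theorem uu_apply (r : ℝ) (i : Bool × X) : uu r i = if i.1 = true then 1 else -r := by
  rcases i with ⟨c, x⟩
  cases c <;> simp [uu, ee]

theorem TT_uu {Y : Finset X} {i : Bool × X} (hi : i ∈ II z Y) (r : ℝ)
    {j : Bool × X} (hj : j ∈ II z (Y.erase i.2)) : TT z Y i (uu r) j = uu r j := by
  have h : (uu r : Bool × X → ℝ) = fun k => if k.1 = true then 1 else -r := by
    funext k; exact uu_apply r k
  rw [uu_apply, h]
  exact TT_side hi (fun b => if b = true then 1 else -r) hj

/-- the degenerate state -/
def Pst (W : Bool × X → ℝ) (z : X) (r : ℝ) (s : List Bool) (Y : Finset X) : Prop :=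
  z ∈ Y ∧ Y.card = s.length + 3 ∧ (∀ d, pp z d Y ≤ s.count d) ∧ ∀ v, BB W z s Y (uu r) v = 0

theorem BB_uu_ee (r : ℝ) (c : Bool) (s : List Bool) (Y : Finset X) :
    BB W z s Y (uu r) (ee c) = cnt W z (true :: c :: s) Y - r * cnt W z (false :: c :: s) Y := by
  unfold uu
  rw [BB_add_left, BB_smul_left, BB_ee_ee, BB_ee_ee]; ring

theorem cnt_swap (c d : Bool) (s : List Bool) (Y : Finset X) :
    cnt W z (c :: d :: s) Y = cnt W z (d :: c :: s) Y := by
  rw [← BB_ee_ee, BB_symm, BB_ee_ee]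

theorem AA_of_Pst (hW : ∀ i, 0 < W i) {r : ℝ} {s : List Bool} {Y : Finset X} {c : Bool}
    (hP : ∀ v, BB W z s Y (uu r) v = 0) {x : X} (hx : x ∈ ext z c Y) :
    AA W z s (Y.erase x) (uu r) = 0 := by
  have h := hP (Pi.single (c, x) 1)
  have hi : (c, x) ∈ II z Y := by rw [mem_II]; exact hx
  rw [BB_symm, BB_single, if_pos hi] at h
  rcases mul_eq_zero.1 h with h | h
  · exact absurd h (hW _).ne'
  · rw [← h]
    exact (AA_congr fun j hj => TT_uu hi r hj).symm

theorem Pst_step (hW : ∀ i, 0 < W i)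
    (hrev : ∀ c x y, slt c x y → W (c, y) * W (!c, x) ≤ W (c, x) * W (!c, y))
    {r : ℝ} (hr : 0 < r) {s : List Bool} {Y : Finset X} {c : Bool}
    (hP : Pst W z r (c :: s) Y) {x : X} (hx : x ∈ ext z c Y) :
    Pst W z r s (Y.erase x) := by
  obtain ⟨hz, hc, hpp, hB⟩ := hP
  have hcard : ∀ x ∈ ext z c Y, (Y.erase x).card = s.length + 3 := by
    intro x hx
    have := card_erase_ext hx
    simp at hc; omega
  have hE : ∀ x ∈ ext z c Y, 0 < BB W z s (Y.erase x) (ee c) (ee c) := by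
    intro x hx
    rw [BB_ee_ee, cnt_pos_iff hW _ _ (mem_erase_z hz hx) (by simp [hcard x hx])]
    intro d
    refine (pp_erase_le d Y x).trans ((hpp d).trans ?_)
    simp only [List.count_cons]; omega
  have h0 : ∀ x ∈ ext z c Y, BB W z s (Y.erase x) (uu r) (ee c) = 0 := by
    intro x hx
    rw [BB_ee]
    exact AA_of_Pst hW hB hx
  have hH : ∀ x ∈ ext z c Y, Hyp W z s (Y.erase x) := fun x hx =>
    hyp_all hW hrev s _ (mem_erase_z hz hx) (hcard x hx)
  have hneg : ∀ x ∈ ext z c Y, BB W z s (Y.erase x) (uu r) (uu r) ≤ 0 := by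
    intro x hx
    have h := hH x hx (uu r) (ee c) (hE x hx)
    rw [h0 x hx] at h
    by_contra hlt
    push Not at hlt
    have := mul_pos hlt (hE x hx)
    simp at h
    linarith
  have hpull := pull_ineq hW c s Y (uu r) (z := z)
  rw [hB] at hpull
  have hpull' : 0 ≤ ∑ x ∈ ext z c Y, W (c, x) * BB W z s (Y.erase x) (uu r) (uu r) := by
    refine hpull.trans (le_of_eq (Finset.sum_congr rfl fun x hx => ?_))
    have hi : (c, x) ∈ II z Y := by rw [mem_II]; exact hx
    rw [BB_congr (fun j hj => TT_uu hi r hj) (fun j hj => TT_uu hi r hj)]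
  have hz0 : BB W z s (Y.erase x) (uu r) (uu r) = 0 := by
    by_contra hne
    have hlt : BB W z s (Y.erase x) (uu r) (uu r) < 0 := lt_of_le_of_ne (hneg x hx) hne
    have : ∑ x ∈ ext z c Y, W (c, x) * BB W z s (Y.erase x) (uu r) (uu r) < 0 :=
      Finset.sum_neg' (fun y hy => mul_nonpos_of_nonneg_of_nonpos (hW _).le (hneg y hy))
        ⟨x, hx, mul_neg_of_pos_of_neg (hW _) hlt⟩
    linarith
  have hker : ∀ v, BB W z s (Y.erase x) (uu r) v = 0 :=
    kernel_of_eq (hH x hx) (hE x hx) (h0 x hx) hz0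
  refine ⟨mem_erase_z hz hx, hcard x hx, ?_, hker⟩
  have e1 := hker (ee true)
  have e2 := hker (ee false)
  have e3 := hE x hx
  rw [BB_uu_ee] at e1 e2
  rw [BB_ee_ee] at e3
  rw [cnt_swap false true] at e1
  have hpos : 0 < cnt W z ((!c) :: (!c) :: s) (Y.erase x) := by
    cases c
    · simp only [Bool.not_false]
      have : 0 < cnt W z (true :: false :: s) (Y.erase x) := by
        rw [sub_eq_zero.1 e2]; positivity
      rw [sub_eq_zero.1 e1]; positivity
    · simp only [Bool.not_true]
      have h4 : 0 < cnt W z (true :: false :: s) (Y.erase x) := by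
        rw [sub_eq_zero.1 e1] at e3
        exact pos_of_mul_pos_right e3 hr.le
      rw [sub_eq_zero.1 e2] at h4
      exact pos_of_mul_pos_right h4 hr.le
  rw [cnt_pos_iff hW _ _ (mem_erase_z hz hx) (by simp [hcard x hx])] at hpos
  intro d
  by_cases hdc : d = c
  · subst hdc
    have := hpos d
    cases d <;> simpa using this
  · have h1 := hpp d
    rw [pp_erase_not (ext_not_slt hdc hz hx)]
    rw [List.count_cons_of_ne (Ne.symm hdc)] at h1
    exact h1

theorem Pst_cnt_pos (hW : ∀ i, 0 < W i) {r : ℝ} {c : Bool} {s : List Bool} {Y : Finset X}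
    (hP : Pst W z r (c :: s) Y) : (ext z c Y).Nonempty := by
  obtain ⟨hz, hc, hpp, -⟩ := hP
  have : 0 < cnt W z (c :: true :: true :: s) Y := by
    rw [cnt_pos_iff hW _ _ hz (by simpa using hc)]
    intro d
    refine (hpp d).trans ?_
    simp only [List.count_cons]; omega
  by_contra hne
  rw [Finset.not_nonempty_iff_eq_empty] at hne
  rw [cnt, hne] at this
  simp at this

/-- covering elements have many elements below -/
theorem Pst_cover (hW : ∀ i, 0 < W i)
    (hrev : ∀ c x y, slt c x y → W (c, y) * W (!c, x) ≤ W (c, x) * W (!c, y))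
    {r : ℝ} (hr : 0 < r) (s : List Bool) (Y : Finset X) (hP : Pst W z r s Y)
    (d : Bool) (x : X) (hx : x ∈ Y) (hzx : slt d z x)
    (hcov : ∀ y, slt d z y → ¬ slt d y x) :
    s.count d + 2 < (Y.filter (fun y => slt d y x)).card := by
  induction s generalizing Y with
  | nil =>
    have h := hP.2.2.1 (!d)
    have : 0 < pp z (!d) Y := by
      unfold pp
      refine Finset.card_pos.2 ⟨x, ?_⟩
      rw [Finset.mem_filter, slt_not]
      exact ⟨hx, hzx⟩
    simp at h; omega
  | cons c s ih =>
    obtain ⟨u0, hu0⟩ := Pst_cnt_pos hW hP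
    by_cases hcd : c = d
    · subst hcd
      rw [List.count_cons_self]
      have hne : ∀ u ∈ ext z c Y, x ≠ u := by
        rintro u hu rfl
        exact (mem_ext.1 hu).2.2 z hP.1 hzx
      by_cases hex : ∃ u ∈ ext z c Y, slt c u x
      · obtain ⟨u, hu, hux⟩ := hex
        have h := ih (Y.erase u) (Pst_step hW hrev hr hP hu)
          (Finset.mem_erase.2 ⟨hne u hu, hx⟩)
        rw [Finset.filter_erase] at h
        have h2 := Finset.card_erase_add_one (s := Y.filter (fun y => slt c y x)) (a := u)
          (by rw [Finset.mem_filter]; exact ⟨(mem_ext.1 hu).1, hux⟩)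
        omega
      · exfalso
        push Not at hex
        have h := ih (Y.erase u0) (Pst_step hW hrev hr hP hu0)
          (Finset.mem_erase.2 ⟨hne u0 hu0, hx⟩)
        have hsub : ((Y.erase u0).filter (fun y => slt c y x)) ⊆ {z} := by
          intro y hy
          rw [Finset.mem_filter] at hy
          rw [Finset.mem_singleton]
          by_contra hyz
          obtain ⟨w, hw, hwy, hmin⟩ := exists_extremal c (Finset.mem_of_mem_erase hy.1)
          have hwx : slt c w x := by
            rcases hwy with rfl | h
            · exact hy.2
            · exact slt_trans h hy.2
          by_cases hwz : w = z
          · subst hwz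
            rcases hwy with rfl | h
            · exact hyz rfl
            · exact hcov y h hy.2
          · exact hex w (mem_ext.2 ⟨hw, hwz, hmin⟩) hwx
        have := Finset.card_le_card hsub
        simp at this
        omega
    · rw [List.count_cons_of_ne hcd]
      by_cases hex : ∃ u ∈ ext z c Y, u ≠ x
      · obtain ⟨u, hu, hux⟩ := hex
        have h := ih (Y.erase u) (Pst_step hW hrev hr hP hu)
          (Finset.mem_erase.2 ⟨Ne.symm hux, hx⟩)
        rw [Finset.filter_erase, Finset.erase_eq_of_notMem] at h
        · exact h
        · rw [Finset.mem_filter, slt_of_ne (Ne.symm hcd)]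
          exact fun h => (mem_ext.1 hu).2.2 x hx h.2
      · push Not at hex
        have hall : Y.erase x ⊆ Y.filter (fun y => slt d y x) := by
          intro y hy
          rw [Finset.mem_erase] at hy
          rw [Finset.mem_filter]
          refine ⟨hy.2, ?_⟩
          obtain ⟨w, hw, hwy, hmin⟩ := exists_extremal c hy.2
          have hwz : w ≠ z := by
            rintro rfl
            exact hmin x hx ((slt_of_ne hcd).2 hzx)
          have hwx := hex w (mem_ext.2 ⟨hw, hwz, hmin⟩)
          subst hwx
          rcases hwy with h | h
          · exact absurd h.symm hy.1
          · exact (slt_of_ne (Ne.symm hcd)).2 h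
        have h1 := Finset.card_le_card hall
        have h2 := Finset.card_erase_add_one hx
        have h3 := hP.2.1
        have h4 : s.count d ≤ s.length := List.count_le_length
        simp at h3
        omega



theorem Pst_leaf (hW : ∀ i, 0 < W i) {r : ℝ} {Y : Finset X} (hP : Pst W z r [] Y)
    {y : X} (hy : y ∈ Y) (hyz : y ≠ z) : W (true, y) = r * W (false, y) := by
  obtain ⟨hz, hc, hpp, hB⟩ := hP
  have hnz : ∀ d, ∀ u ∈ Y, ¬ slt d u z := by
    intro d u hu h
    have h1 := hpp d
    have : 0 < pp z d Y := by
      unfold pp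
      exact Finset.card_pos.2 ⟨u, Finset.mem_filter.2 ⟨hu, h⟩⟩
    simp at h1; omega
  have hc2 : ((Y.erase z).erase y).card = 1 := by
    rw [Finset.card_erase_of_mem (Finset.mem_erase.2 ⟨hyz, hy⟩), Finset.card_erase_of_mem hz, hc]
    simp
  obtain ⟨x, hx⟩ := Finset.card_eq_one.1 hc2
  have hxm : x ∈ (Y.erase z).erase y := by rw [hx]; simp
  simp only [Finset.mem_erase] at hxm
  obtain ⟨hxy, hxz, hxY⟩ := hxm
  have hY : Y.erase x = {y, z} := by
    ext u
    have h2 : u ∈ (Y.erase z).erase y ↔ u ∈ ({x} : Finset X) := by rw [hx]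
    simp only [Finset.mem_erase, Finset.mem_singleton, Finset.mem_insert] at h2 ⊢
    constructor
    · rintro ⟨h3, h4⟩
      by_contra h5
      push Not at h5
      exact h3 (h2.1 ⟨h5.1, h5.2, h4⟩)
    · rintro (rfl | rfl)
      · exact ⟨Ne.symm hxy, hy⟩
      · exact ⟨Ne.symm hxz, hz⟩
  have hYm : ∀ u ∈ Y, u = x ∨ u = y ∨ u = z := by
    intro u hu
    by_cases hux : u = x
    · exact Or.inl hux
    · have : u ∈ Y.erase x := Finset.mem_erase.2 ⟨hux, hu⟩
      rw [hY] at this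
      simp at this
      exact Or.inr this
  have hext : ∃ c, x ∈ ext z c Y := by
    by_contra hne
    push Not at hne
    have hb : ∀ c, slt c y x := by
      intro c
      have := hne c
      rw [mem_ext] at this
      push Not at this
      obtain ⟨u, hu, hs⟩ := this hxY hxz
      rcases hYm u hu with rfl | rfl | rfl
      · exact absurd hs (slt_irrefl c _)
      · exact hs
      · exact absurd (slt_not.2 hs) (hnz (!c) x hxY)
    exact slt_asymm (hb true) (slt_not.1 (hb (!true)))
  obtain ⟨c, hcx⟩ := hext
  have h := AA_of_Pst hW hB hcx
  rw [hY, AA_nil_pair hyz] at h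
  have h1 : ∀ c, ¬ slt c z y := fun c h => hnz (!c) y hy (slt_not.2 h)
  simp [h1, uu_apply] at h
  linarith

/-- weights: `ω` on the left and `1` on the right -/
def WW (ω : X → ℝ) : Bool × X → ℝ := fun i => if i.1 = true then ω i.2 else 1

theorem WW_pos {ω : X → ℝ} (hω : ∀ x, 0 < ω x) (i : Bool × X) : 0 < WW ω i := by
  unfold WW; split_ifs
  · exact hω _
  · exact one_pos

theorem WW_rev {ω : X → ℝ} (hrev : ∀ x y : X, x ≤ y → ω y ≤ ω x) (c : Bool) (x y : X)
    (h : slt c x y) : WW ω (c, y) * WW ω (!c, x) ≤ WW ω (c, x) * WW ω (!c, y) := by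
  cases c
  · simpa [WW] using hrev y x (le_of_lt h)
  · simpa [WW] using hrev x y (le_of_lt h)

/-- invariant for partially assigned linear extensions -/
structure PInv (i j : ℕ) (ρ : X → ℕ) (Y : Finset X) : Prop where
  val : ∀ x, x ∉ Y → ρ x < i ∨ Fintype.card X ≤ ρ x + j
  surj : ∀ p, p < Fintype.card X → (p < i ∨ Fintype.card X ≤ p + j) → ∃ x, x ∉ Y ∧ ρ x = p
  oo : ∀ x y, x < y → x ∉ Y → y ∉ Y → ρ x < ρ y
  oi : ∀ x y, x < y → x ∉ Y → y ∈ Y → ρ x < i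
  io : ∀ x y, x < y → x ∈ Y → y ∉ Y → Fintype.card X ≤ ρ y + j

theorem PInv.step_true {i j : ℕ} {ρ : X → ℕ} {Y : Finset X} (h : PInv i j ρ Y) {x : X}
    (hx : x ∈ ext z true Y) (hij : i + j < Fintype.card X) :
    PInv (i + 1) j (Function.update ρ x i) (Y.erase x) := by
  obtain ⟨hxY, hxz, hmin⟩ := mem_ext.1 hx
  have hout : ∀ u, u ∉ Y.erase x → u = x ∨ (u ≠ x ∧ u ∉ Y) := by
    intro u hu
    by_cases hux : u = x
    · exact Or.inl hux
    · exact Or.inr ⟨hux, fun h => hu (Finset.mem_erase.2 ⟨hux, h⟩)⟩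
  constructor
  · intro u hu
    rcases hout u hu with rfl | ⟨h1, h2⟩
    · simp
    · rw [Function.update_of_ne h1]
      have := h.val u h2; omega
  · intro p hp hp2
    by_cases hpi : p = i
    · exact ⟨x, by simp, by simp [hpi]⟩
    · obtain ⟨u, hu, hu2⟩ := h.surj p hp (by omega)
      have hux : u ≠ x := fun e => hu (e ▸ hxY)
      exact ⟨u, fun h => hu (Finset.mem_of_mem_erase h), by rw [Function.update_of_ne hux, hu2]⟩
  · intro u v huv hu hv
    rcases hout u hu with rfl | ⟨h1, h2⟩ <;> rcases hout v hv with rfl | ⟨h3, h4⟩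
    · exact absurd huv (lt_irrefl _)
    · rw [Function.update_self, Function.update_of_ne h3]
      have := h.io _ _ huv hxY h4; omega
    · rw [Function.update_self, Function.update_of_ne h1]
      exact h.oi _ _ huv h2 hxY
    · rw [Function.update_of_ne h1, Function.update_of_ne h3]
      exact h.oo _ _ huv h2 h4
  · intro u v huv hu hv
    rcases hout u hu with rfl | ⟨h1, h2⟩
    · simp
    · rw [Function.update_of_ne h1]
      have := h.oi _ _ huv h2 (Finset.mem_of_mem_erase hv); omega
  · intro u v huv hu hv
    rcases hout v hv with rfl | ⟨h1, h2⟩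
    · exact absurd huv (hmin u (Finset.mem_of_mem_erase hu))
    · rw [Function.update_of_ne h1]
      exact h.io _ _ huv (Finset.mem_of_mem_erase hu) h2

theorem PInv.step_false {i j : ℕ} {ρ : X → ℕ} {Y : Finset X} (h : PInv i j ρ Y) {x : X}
    (hx : x ∈ ext z false Y) (hij : i + j < Fintype.card X) :
    PInv i (j + 1) (Function.update ρ x (Fintype.card X - 1 - j)) (Y.erase x) := by
  obtain ⟨hxY, hxz, hmin⟩ := mem_ext.1 hx
  have hout : ∀ u, u ∉ Y.erase x → u = x ∨ (u ≠ x ∧ u ∉ Y) := by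
    intro u hu
    by_cases hux : u = x
    · exact Or.inl hux
    · exact Or.inr ⟨hux, fun h => hu (Finset.mem_erase.2 ⟨hux, h⟩)⟩
  constructor
  · intro u hu
    rcases hout u hu with rfl | ⟨h1, h2⟩
    · simp; omega
    · rw [Function.update_of_ne h1]
      have := h.val u h2; omega
  · intro p hp hp2
    by_cases hpi : p = Fintype.card X - 1 - j
    · exact ⟨x, by simp, by simp [hpi]⟩
    · obtain ⟨u, hu, hu2⟩ := h.surj p hp (by omega)
      have hux : u ≠ x := fun e => hu (e ▸ hxY)
      exact ⟨u, fun h => hu (Finset.mem_of_mem_erase h), by rw [Function.update_of_ne hux, hu2]⟩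
  · intro u v huv hu hv
    rcases hout u hu with rfl | ⟨h1, h2⟩ <;> rcases hout v hv with rfl | ⟨h3, h4⟩
    · exact absurd huv (lt_irrefl _)
    · rw [Function.update_self, Function.update_of_ne h3]
      have := h.io _ _ huv hxY h4; omega
    · rw [Function.update_self, Function.update_of_ne h1]
      have := h.oi _ _ huv h2 hxY; omega
    · rw [Function.update_of_ne h1, Function.update_of_ne h3]
      exact h.oo _ _ huv h2 h4
  · intro u v huv hu hv
    rcases hout u hu with rfl | ⟨h1, h2⟩
    · exact absurd huv (hmin v (Finset.mem_of_mem_erase hv))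
    · rw [Function.update_of_ne h1]
      exact h.oi _ _ huv h2 (Finset.mem_of_mem_erase hv)
  · intro u v huv hu hv
    rcases hout v hv with rfl | ⟨h1, h2⟩
    · simp; omega
    · rw [Function.update_of_ne h1]
      have := h.io _ _ huv (Finset.mem_of_mem_erase hu) h2; omega

/-- linear extensions with prescribed values outside `Y` -/
def SS (z : X) (k : ℕ) (Y : Finset X) (ρ : X → ℕ) : Finset (X ≃ Fin (Fintype.card X)) :=
  Finset.univ.filter (fun σ => IsLinExt σ ∧ (σ z : ℕ) = k - 1 ∧ ∀ x, x ∉ Y → (σ x : ℕ) = ρ x)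

theorem mem_SS {k : ℕ} {Y : Finset X} {ρ : X → ℕ} {σ : X ≃ Fin (Fintype.card X)} :
    σ ∈ SS z k Y ρ ↔ IsLinExt σ ∧ (σ z : ℕ) = k - 1 ∧ ∀ x, x ∉ Y → (σ x : ℕ) = ρ x := by
  simp [SS]

theorem SS_range {i j k : ℕ} {Y : Finset X} {ρ : X → ℕ} (hI : PInv i j ρ Y)
    {σ : X ≃ Fin (Fintype.card X)} (hσ : σ ∈ SS z k Y ρ) {y : X} (hy : y ∈ Y) :
    i ≤ (σ y : ℕ) ∧ (σ y : ℕ) + j < Fintype.card X := by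
  by_contra hne
  obtain ⟨x, hx, hx2⟩ := hI.surj (σ y) (σ y).2 (by omega)
  have := (mem_SS.1 hσ).2.2 x hx
  have h2 : σ x = σ y := Fin.ext (by omega)
  exact hx (σ.injective h2 ▸ hy)

theorem SS_erase {k : ℕ} {Y : Finset X} {ρ : X → ℕ} {x : X} (hx : x ∈ Y)
    (p : Fin (Fintype.card X)) :
    (SS z k Y ρ).filter (fun σ => σ.symm p = x) = SS z k (Y.erase x) (Function.update ρ x p) := by
  ext σ
  rw [Finset.mem_filter, mem_SS, mem_SS]
  constructor
  · rintro ⟨⟨h1, h2, h3⟩, h4⟩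
    refine ⟨h1, h2, fun u hu => ?_⟩
    by_cases hux : u = x
    · subst hux
      rw [Function.update_self, ← h4, Equiv.apply_symm_apply]
    · rw [Function.update_of_ne hux]
      exact h3 u fun h => hu (Finset.mem_erase.2 ⟨hux, h⟩)
  · rintro ⟨h1, h2, h3⟩
    refine ⟨⟨h1, h2, fun u hu => ?_⟩, ?_⟩
    · have hux : u ≠ x := fun e => hu (e ▸ hx)
      have := h3 u fun h => hu (Finset.mem_of_mem_erase h)
      rwa [Function.update_of_ne hux] at this
    · have := h3 x (by simp)
      rw [Function.update_self] at this
      rw [Equiv.symm_apply_eq]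
      exact (Fin.ext this).symm

theorem link_aux (ω : X → ℝ) {k : ℕ} (hk : 1 ≤ k) (s : List Bool) (Y : Finset X) (ρ : X → ℕ)
    (i j : ℕ) (hz : z ∈ Y) (hc : Y.card = s.length + 1) (hi : i + s.count true + 1 = k)
    (hj : j + s.count false + k = Fintype.card X) (hI : PInv i j ρ Y) :
    ∑ σ ∈ SS z k Y ρ, ∏ x ∈ Y.filter (fun x => σ x < σ z), ω x = cnt (WW ω) z s Y := by
  induction s generalizing Y ρ i j with
  | nil =>
    have hY : Y = {z} := by
      obtain ⟨a, ha⟩ := Finset.card_eq_one.1 (by simpa using hc)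
      rw [ha] at hz ⊢
      simp at hz; rw [hz]
    subst hY
    simp only [List.count_nil, add_zero] at hi hj
    have hprod : ∀ σ : X ≃ Fin (Fintype.card X),
        ({z} : Finset X).filter (fun x => σ x < σ z) = ∅ := by
      intro σ; ext u; simp; rintro rfl; exact le_rfl
    simp only [hprod, Finset.prod_empty, cnt]
    have hlt : ∀ u, (if u = z then k - 1 else ρ u) < Fintype.card X ∨ True := fun u => Or.inr trivial
    suffices h : ∃ τ, SS z k {z} ρ = {τ} by
      obtain ⟨τ, hτ⟩ := h
      rw [hτ]; simp
    -- a preliminary section of positions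
    have hsec : ∀ p : Fin (Fintype.card X), ∃ u : X, (if u = z then k - 1 else ρ u) = (p : ℕ) := by
      intro p
      by_cases hp : (p : ℕ) = k - 1
      · exact ⟨z, by simp [hp]⟩
      · obtain ⟨u, hu, hu2⟩ := hI.surj p p.2 (by omega)
        simp at hu
        exact ⟨u, by simp [hu, hu2]⟩
    choose g hg using hsec
    have hginj : Function.Injective g := by
      intro p q hpq
      apply Fin.ext
      rw [← hg p, ← hg q, hpq]
    have hgbij : Function.Bijective g := by
      rw [Fintype.bijective_iff_injective_and_card]
      exact ⟨hginj, by simp⟩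
    have hval : ∀ u, (((Equiv.ofBijective g hgbij).symm u : Fin _) : ℕ) =
        if u = z then k - 1 else ρ u := by
      intro u
      obtain ⟨p, rfl⟩ := hgbij.2 u
      have : (Equiv.ofBijective g hgbij).symm (g p) = p := by
        rw [Equiv.symm_apply_eq]; rfl
      rw [this, hg]
    refine ⟨(Equiv.ofBijective g hgbij).symm, ?_⟩
    ext σ
    rw [mem_SS, Finset.mem_singleton]
    constructor
    · rintro ⟨-, h2, h3⟩
      ext u
      rw [hval]
      split_ifs with h
      · rw [h, h2]
      · exact h3 u (by simpa using h)
    · rintro rfl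
      refine ⟨?_, ?_, ?_⟩
      · intro x y hxy
        rw [Fin.lt_def, hval, hval]
        split_ifs with h1 h2 h2
        · subst h1; subst h2; exact absurd hxy (lt_irrefl _)
        · have := hI.io x y hxy (by simpa using h1) (by simpa using h2)
          omega
        · have := hI.oi x y hxy (by simpa using h1) (by simpa using h2)
          omega
        · exact hI.oo x y hxy (by simpa using h1) (by simpa using h2)
      · rw [hval]; simp
      · intro x hx
        rw [hval]; simp at hx; simp [hx]
  | cons c s ih =>
    have hcount := count_add true s
    simp only [Bool.not_true] at hcount
    cases c
    · rw [List.count_cons_self, List.count_cons_of_ne (by simp)] at *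
      have hp : Fintype.card X - 1 - j < Fintype.card X := by omega
      set p : Fin (Fintype.card X) := ⟨Fintype.card X - 1 - j, hp⟩ with hpdef
      have hmaps : ∀ σ ∈ SS z k Y ρ, σ.symm p ∈ ext z false Y := by
        intro σ hσ
        have hσp : ((σ (σ.symm p) : Fin _) : ℕ) = Fintype.card X - 1 - j := by
          rw [Equiv.apply_symm_apply]
        rw [mem_ext]
        have hm := mem_SS.1 hσ
        refine ⟨?_, ?_, ?_⟩
        · by_contra hne
          have h1 := hm.2.2 _ hne
          have h2 := hI.val _ hne
          omega
        · intro he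
          rw [he, hm.2.1] at hσp
          omega
        · intro y hy hlt
          have h1 := hm.1 _ _ hlt
          rw [Fin.lt_def] at h1
          have h2 := SS_range hI hσ hy
          omega
      rw [← Finset.sum_fiberwise_of_maps_to hmaps, cnt]
      refine Finset.sum_congr rfl fun x hx => ?_
      rw [SS_erase (mem_ext.1 hx).1]
      rw [← ih (Y.erase x) (Function.update ρ x p) i (j + 1) (mem_erase_z hz hx)
        (by have := card_erase_ext hx; simp at hc; omega) (by omega) (by omega)
        (hI.step_false hx (by omega))]
      rw [Finset.mul_sum]
      refine Finset.sum_congr rfl fun σ hσ => ?_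
      have hm := mem_SS.1 hσ
      have hσx := hm.2.2 x (by simp)
      rw [Function.update_self, hpdef] at hσx
      simp only at hσx
      rw [Finset.filter_erase, Finset.erase_eq_of_notMem]
      · simp [WW]
      · rw [Finset.mem_filter, Fin.lt_def]
        omega
    · rw [List.count_cons_self, List.count_cons_of_ne (by simp)] at *
      have hp : i < Fintype.card X := by omega
      set p : Fin (Fintype.card X) := ⟨i, hp⟩ with hpdef
      have hmaps : ∀ σ ∈ SS z k Y ρ, σ.symm p ∈ ext z true Y := by
        intro σ hσ
        have hσp : ((σ (σ.symm p) : Fin _) : ℕ) = i := by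
          rw [Equiv.apply_symm_apply]
        rw [mem_ext]
        have hm := mem_SS.1 hσ
        refine ⟨?_, ?_, ?_⟩
        · by_contra hne
          have h1 := hm.2.2 _ hne
          have h2 := hI.val _ hne
          omega
        · intro he
          rw [he, hm.2.1] at hσp
          omega
        · intro y hy hlt
          have h1 := hm.1 _ _ hlt
          rw [Fin.lt_def] at h1
          have h2 := SS_range hI hσ hy
          omega
      rw [← Finset.sum_fiberwise_of_maps_to hmaps, cnt]
      refine Finset.sum_congr rfl fun x hx => ?_
      rw [SS_erase (mem_ext.1 hx).1]
      rw [← ih (Y.erase x) (Function.update ρ x p) (i + 1) j (mem_erase_z hz hx)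
        (by have := card_erase_ext hx; simp at hc; omega) (by omega) (by omega)
        (hI.step_true hx (by omega))]
      rw [Finset.mul_sum]
      refine Finset.sum_congr rfl fun σ hσ => ?_
      have hm := mem_SS.1 hσ
      have hσx := hm.2.2 x (by simp)
      rw [Function.update_self, hpdef] at hσx
      simp only at hσx
      rw [Finset.filter_erase]
      have hxm : x ∈ Y.filter (fun x => σ x < σ z) := by
        rw [Finset.mem_filter, Fin.lt_def]
        exact ⟨(mem_ext.1 hx).1, by omega⟩
      rw [← Finset.mul_prod_erase _ _ hxm]
      simp [WW]

theorem Nw_eq_cnt (ω : X → ℝ) {k : ℕ} (hk : 1 ≤ k) (s : List Bool)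
    (hi : s.count true + 1 = k) (hj : s.count false + k = Fintype.card X) :
    Nw ω z k = cnt (WW ω) z s Finset.univ := by
  have hcount := count_add true s
  simp only [Bool.not_true] at hcount
  rw [← link_aux ω hk s Finset.univ (fun _ => 0) 0 0 (Finset.mem_univ _)
    (by rw [Finset.card_univ]; omega) (by omega) (by omega)]
  · unfold Nw
    refine Finset.sum_congr ?_ fun σ _ => ?_
    · ext σ; simp [mem_SS]
    · rfl
  · constructor <;> simp



theorem Pst_weights (hW : ∀ i, 0 < W i)
    (hrev : ∀ c x y, slt c x y → W (c, y) * W (!c, x) ≤ W (c, x) * W (!c, y))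
    {r : ℝ} (hr : 0 < r) {σ : X ≃ Fin (Fintype.card X)} (hσ : IsLinExt σ) {k : ℕ}
    (hσz : (σ z : ℕ) + 1 = k) {x : X} (hxz : x ≠ z) (hx : (σ x : ℕ) + 2 = k ∨ (σ x : ℕ) = k)
    (s : List Bool) (Y : Finset X) (i j : ℕ)
    (hY : ∀ y, y ∈ Y ↔ i ≤ (σ y : ℕ) ∧ (σ y : ℕ) + j < Fintype.card X)
    (hi : i + s.count true + 2 = k) (hj : j + s.count false + k + 1 = Fintype.card X)
    (hP : Pst W z r s Y) : W (true, x) = r * W (false, x) := by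
  induction s generalizing Y i j with
  | nil =>
    simp at hi hj
    refine Pst_leaf hW hP ?_ hxz
    rw [hY]
    omega
  | cons c s ih =>
    cases c
    · rw [List.count_cons_self, List.count_cons_of_ne (by simp)] at *
      have hp : Fintype.card X - 1 - j < Fintype.card X := by omega
      set p : Fin (Fintype.card X) := ⟨Fintype.card X - 1 - j, hp⟩ with hpdef
      have hσp : ((σ (σ.symm p) : Fin _) : ℕ) = Fintype.card X - 1 - j := by
        rw [Equiv.apply_symm_apply]
      have hmem : σ.symm p ∈ ext z false Y := by
        rw [mem_ext]
        refine ⟨?_, ?_, ?_⟩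
        · rw [hY]; omega
        · intro he
          rw [he] at hσp
          omega
        · intro y hy hlt
          have h1 := hσ _ _ hlt
          rw [Fin.lt_def] at h1
          rw [hY] at hy
          omega
      refine ih (Y.erase (σ.symm p)) i (j + 1) ?_ (by omega) (by omega)
        (Pst_step hW hrev hr hP hmem)
      intro y
      rw [Finset.mem_erase, hY]
      have : y = σ.symm p ↔ (σ y : ℕ) = Fintype.card X - 1 - j := by
        rw [Equiv.eq_symm_apply, Fin.ext_iff]
      rw [Ne, this]
      omega
    · rw [List.count_cons_self, List.count_cons_of_ne (by simp)] at *
      have hp : i < Fintype.card X := by omega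
      set p : Fin (Fintype.card X) := ⟨i, hp⟩ with hpdef
      have hσp : ((σ (σ.symm p) : Fin _) : ℕ) = i := by
        rw [Equiv.apply_symm_apply]
      have hmem : σ.symm p ∈ ext z true Y := by
        rw [mem_ext]
        refine ⟨?_, ?_, ?_⟩
        · rw [hY]; omega
        · intro he
          rw [he] at hσp
          omega
        · intro y hy hlt
          have h1 := hσ _ _ hlt
          rw [Fin.lt_def] at h1
          rw [hY] at hy
          omega
      refine ih (Y.erase (σ.symm p)) (i + 1) j ?_ (by omega) (by omega)
        (Pst_step hW hrev hr hP hmem)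
      intro y
      rw [Finset.mem_erase, hY]
      have : y = σ.symm p ↔ (σ y : ℕ) = i := by
        rw [Equiv.eq_symm_apply, Fin.ext_iff]
      rw [Ne, this]
      omega

theorem Pst_bound (hW : ∀ i, 0 < W i)
    (hrev : ∀ c x y, slt c x y → W (c, y) * W (!c, x) ≤ W (c, x) * W (!c, y))
    {r : ℝ} (hr : 0 < r) {s : List Bool} (hP : Pst W z r s Finset.univ)
    (d : Bool) (x : X) (hzx : slt d z x) :
    s.count d + 2 < (Finset.univ.filter (fun y => slt d y x)).card := by
  obtain ⟨u, hu, hux, hmin⟩ := exists_extremal d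
    (Y := Finset.univ.filter (fun y => slt d z y)) (x := x) (by simpa using hzx)
  rw [Finset.mem_filter] at hu
  have h := Pst_cover hW hrev hr s Finset.univ hP d u (Finset.mem_univ _) hu.2
    (fun y hy => hmin y (by simpa using hy))
  refine h.trans_le (Finset.card_le_card ?_)
  intro y hy
  rw [Finset.mem_filter] at hy ⊢
  refine ⟨hy.1, ?_⟩
  rcases hux with rfl | h2
  · exact hy.2
  · exact slt_trans hy.2 h2

theorem numBelow_le {σ : X ≃ Fin (Fintype.card X)} (hσ : IsLinExt σ) (x : X) :
    numBelow x ≤ (σ x : ℕ) := by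
  unfold numBelow
  rw [← Fin.card_Iio (σ x)]
  refine Finset.card_le_card_of_injOn σ ?_ σ.injective.injOn
  intro y hy
  simp at hy
  simpa using hσ _ _ hy

theorem numAbove_le {σ : X ≃ Fin (Fintype.card X)} (hσ : IsLinExt σ) (x : X) :
    numAbove x ≤ Fintype.card X - 1 - (σ x : ℕ) := by
  unfold numAbove
  rw [← Fin.card_Ioi (σ x)]
  refine Finset.card_le_card_of_injOn σ ?_ σ.injective.injOn
  intro y hy
  simp at hy
  simpa using hσ _ _ hy

theorem swap_linext {σ : X ≃ Fin (Fintype.card X)} (hσ : IsLinExt σ)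
    {p q : Fin (Fintype.card X)} (hpq : (q : ℕ) = p + 1)
    (hn : ¬ σ.symm p < σ.symm q) : IsLinExt (σ.trans (Equiv.swap p q)) := by
  intro x y hxy
  have h := hσ x y hxy
  have hne : ¬ (σ x = p ∧ σ y = q) := by
    rintro ⟨h1, h2⟩
    apply hn
    rw [← h1, ← h2]; simpa using hxy
  simp only [Equiv.trans_apply, Equiv.swap_apply_def]
  rw [Fin.lt_def] at h
  simp only [Fin.ext_iff] at *
  split_ifs <;> rw [Fin.lt_def] <;> omega

theorem Nw_swap (ω : X → ℝ) (s : ℝ) (j : ℕ) (hj : j + 1 < Fintype.card X)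
    (H1 : ∀ x : X, z < x → j + 1 < numBelow x)
    (H2 : ∀ y : X, y < z → Fintype.card X - 1 - j < numAbove y)
    (hs : ∀ σ : X ≃ Fin (Fintype.card X), IsLinExt σ → (σ z : ℕ) = j →
      ∀ x : X, (σ x : ℕ) = j + 1 → ω x = s) :
    Nw ω z (j + 2) = s * Nw ω z (j + 1) := by
  symm
  unfold Nw
  rw [Finset.mul_sum]
  set p : Fin (Fintype.card X) := ⟨j, by omega⟩ with hp
  set q : Fin (Fintype.card X) := ⟨j + 1, hj⟩ with hq
  refine Finset.sum_nbij' (fun σ => σ.trans (Equiv.swap p q)) (fun σ => σ.trans (Equiv.swap p q))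
    ?_ ?_ ?_ ?_ ?_
  · intro σ h
    simp only [Finset.mem_filter, Finset.mem_univ, true_and] at h ⊢
    have hσz : σ z = p := Fin.ext (by simpa [hp] using h.2)
    refine ⟨swap_linext h.1 rfl ?_, ?_⟩
    · rw [← hσz, Equiv.symm_apply_apply]
      intro hlt
      have h1 := H1 _ hlt
      have h2 := numBelow_le h.1 (σ.symm q)
      rw [Equiv.apply_symm_apply] at h2
      have h3 : (q : ℕ) = j + 1 := rfl
      omega
    · simp [hσz, hq]
  · intro σ h
    simp only [Finset.mem_filter, Finset.mem_univ, true_and] at h ⊢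
    have hσz : σ z = q := Fin.ext (by simpa [hq] using h.2)
    refine ⟨swap_linext h.1 rfl ?_, ?_⟩
    · rw [← hσz, Equiv.symm_apply_apply]
      intro hlt
      have h1 := H2 _ hlt
      have h2 := numAbove_le h.1 (σ.symm p)
      rw [Equiv.apply_symm_apply] at h2
      have h3 : (p : ℕ) = j := rfl
      omega
    · simp [hσz, hp]
  · intro σ _; ext x; simp
  · intro σ _; ext x; simp
  · intro σ h
    simp only [Finset.mem_filter, Finset.mem_univ, true_and] at h
    have hσz : σ z = p := Fin.ext (by simpa [hp] using h.2)
    have hw : ω (σ.symm q) = s := hs σ h.1 (by simpa using h.2) _ (by simp [hq])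
    have hset : Finset.univ.filter
        (fun x : X => (σ.trans (Equiv.swap p q)) x < (σ.trans (Equiv.swap p q)) z) =
        insert (σ.symm q) (Finset.univ.filter (fun x : X => σ x < σ z)) := by
      ext x
      simp only [Finset.mem_filter, Finset.mem_univ, true_and, Finset.mem_insert,
        Equiv.trans_apply, hσz, Equiv.swap_apply_left, Equiv.eq_symm_apply]
      rw [Equiv.swap_apply_def]
      simp only [Fin.ext_iff, hp, hq]
      split_ifs <;> simp only [Fin.lt_def] <;> omega
    rw [hset, Finset.prod_insert, hw]
    simp [hσz, Fin.le_def, hp, hq]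

theorem Nw_nonneg {ω : X → ℝ} (hω : ∀ x, 0 < ω x) (k : ℕ) : 0 ≤ Nw ω z k :=
  Finset.sum_nonneg fun _ _ => Finset.prod_nonneg fun x _ => (hω x).le

theorem a_to_b (A B C : ℝ) (hA : 0 ≤ A) (hC : 0 ≤ C) (hB : 0 < B) (h : B ^ 2 = A * C) :
    0 < A ∧ 0 < C ∧ 0 < C / B ∧ C = C / B * B ∧ C / B * B = (C / B) ^ 2 * A := by
  have hAC : 0 < A * C := by rw [← h]; positivity
  have hA' : 0 < A := lt_of_le_of_ne hA fun e => by rw [← e] at hAC; simp at hAC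
  have hC' : 0 < C := lt_of_le_of_ne hC fun e => by rw [← e] at hAC; simp at hAC
  refine ⟨hA', hC', by positivity, by field_simp, ?_⟩
  field_simp
  nlinarith

theorem a_to_c (ω : X → ℝ) (hω : ∀ x, 0 < ω x)
    (hrev : ∀ x y : X, x ≤ y → ω y ≤ ω x)
    (k : ℕ) (hk1 : 1 < k) (hk2 : k < Fintype.card X)
    (hpos : 0 < Nw ω z k) (ha : (Nw ω z k) ^ 2 = Nw ω z (k - 1) * Nw ω z (k + 1)) :
    ∃ s : ℝ, 0 < s ∧
          (∀ x : X, z < x → k < numBelow x) ∧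
          (∀ x : X, x < z → Fintype.card X - k + 1 < numAbove x) ∧
          (∀ σ : X ≃ Fin (Fintype.card X), IsLinExt σ → (σ z : ℕ) = k - 1 →
            (∀ x : X, (σ x : ℕ) = k - 2 → ω x = s) ∧
            (∀ x : X, (σ x : ℕ) = k → ω x = s)) := by
  obtain ⟨hA, hC, hr, h1, h2⟩ := a_to_b _ _ _ (Nw_nonneg hω (k - 1)) (Nw_nonneg hω (k + 1)) hpos ha
  set r := Nw ω z (k + 1) / Nw ω z k with hrdef
  have hW := WW_pos hω
  have hrv := WW_rev hrev
  obtain ⟨s, hst, hsf⟩ : ∃ s : List Bool, s.count true + 2 = k ∧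
      s.count false + k + 1 = Fintype.card X :=
    ⟨List.replicate (k - 2) true ++ List.replicate (Fintype.card X - k - 1) false,
      by simp [List.count_replicate]; omega, by simp [List.count_replicate]; omega⟩
  have hcount := count_add true s
  simp only [Bool.not_true] at hcount
  have eC : Nw ω z (k + 1) = cnt (WW ω) z (true :: true :: s) Finset.univ :=
    Nw_eq_cnt ω (by omega) _ (by simp; omega) (by simp; omega)
  have eB : Nw ω z k = cnt (WW ω) z (true :: false :: s) Finset.univ :=
    Nw_eq_cnt ω (by omega) _ (by simp; omega) (by simp; omega)
  have eA : Nw ω z (k - 1) = cnt (WW ω) z (false :: false :: s) Finset.univ :=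
    Nw_eq_cnt ω (by omega) _ (by simp; omega) (by simp; omega)
  have hcard : (Finset.univ : Finset X).card = s.length + 3 := by
    rw [Finset.card_univ]; omega
  have hzu : z ∈ (Finset.univ : Finset X) := Finset.mem_univ z
  have u1 : BB (WW ω) z s Finset.univ (uu r) (ee true) = 0 := by
    rw [BB_uu_ee, cnt_swap false true, ← eC, ← eB]; linarith
  have u2 : BB (WW ω) z s Finset.univ (uu r) (ee false) = 0 := by
    rw [BB_uu_ee, ← eA, ← eB]
    have : r * (Nw ω z k - r * Nw ω z (k - 1)) = 0 := by linarith
    rcases mul_eq_zero.1 this with h | h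
    · exact absurd h hr.ne'
    · exact h
  have u3 : BB (WW ω) z s Finset.univ (uu r) (uu r) = 0 := by
    conv_lhs => arg 6; unfold uu
    rw [BB_add_right, BB_smul_right, u1, u2]; simp
  have hP : Pst (WW ω) z r s Finset.univ := by
    refine ⟨hzu, hcard, ?_, kernel_of_eq (hyp_all hW hrv s _ hzu hcard) (e := ee true) ?_ u1 u3⟩
    · rw [eC, cnt_pos_iff hW _ _ hzu (by simpa using hcard)] at hC
      rw [eA, cnt_pos_iff hW _ _ hzu (by simpa using hcard)] at hA
      intro d
      cases d
      · simpa using hC false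
      · simpa using hA true
    · rw [BB_ee_ee, ← eC]; exact hC
  refine ⟨r, hr, ?_, ?_, ?_⟩
  · intro x hx
    have := Pst_bound hW hrv hr hP true x hx
    rw [hst] at this
    exact this
  · intro x hx
    have h := Pst_bound hW hrv hr hP false x hx
    have e : (Finset.univ.filter (fun y => slt false y x)).card = numAbove x := rfl
    rw [e] at h
    omega
  · intro σ hσ hσz
    have key : ∀ x, x ≠ z → ((σ x : ℕ) + 2 = k ∨ (σ x : ℕ) = k) → ω x = r := by
      intro x hxz hx
      have := Pst_weights hW hrv hr hσ (k := k) (by omega) hxz hx s Finset.univ 0 0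
        (by intro y; simp) (by omega) (by omega) hP
      simpa [WW] using this
    constructor
    · intro x hx
      refine key x ?_ (by omega)
      rintro rfl; omega
    · intro x hx
      refine key x ?_ (by omega)
      rintro rfl; omega

theorem c_to_b (ω : X → ℝ) (k : ℕ) (hk1 : 1 < k) (hk2 : k < Fintype.card X) (s : ℝ)
    (H1 : ∀ x : X, z < x → k < numBelow x)
    (H2 : ∀ x : X, x < z → Fintype.card X - k + 1 < numAbove x)
    (H3 : ∀ σ : X ≃ Fin (Fintype.card X), IsLinExt σ → (σ z : ℕ) = k - 1 →
            (∀ x : X, (σ x : ℕ) = k - 2 → ω x = s) ∧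
            (∀ x : X, (σ x : ℕ) = k → ω x = s)) :
    Nw ω z (k + 1) = s * Nw ω z k ∧ s * Nw ω z k = s ^ 2 * Nw ω z (k - 1) := by
  obtain ⟨m, rfl⟩ : ∃ m, k = m + 2 := ⟨k - 2, by omega⟩
  have e1 : Nw ω z (m + 2 + 1) = s * Nw ω z (m + 2) := by
    refine Nw_swap ω s (m + 1) (by omega) (fun x hx => H1 x hx) (fun x hx => ?_) ?_
    · have := H2 x hx; omega
    · intro σ hσ hz x hx
      exact (H3 σ hσ (by omega)).2 x hx
  have e2 : Nw ω z (m + 2) = s * Nw ω z (m + 1) := by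
    refine Nw_swap ω s m (by omega) (fun x hx => ?_) (fun x hx => ?_) ?_
    · have := H1 x hx; omega
    · have := H2 x hx; omega
    · intro σ hσ hz x hx
      have hpz : σ z = ⟨m, by omega⟩ := Fin.ext hz
      have hpx : σ x = ⟨m + 1, by omega⟩ := Fin.ext hx
      have hlin : IsLinExt (σ.trans (Equiv.swap (σ z) (σ x))) := by
        refine swap_linext hσ (by omega) ?_
        simp only [Equiv.symm_apply_apply]
        intro hlt
        have h1 := H1 _ hlt
        have h2 := numBelow_le hσ x
        omega
      refine (H3 _ hlin ?_).1 x ?_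
      · simp [hx]
      · simp [hz]
  refine ⟨e1, ?_⟩
  rw [e2]
  simp only [Nat.add_sub_cancel, show m + 2 - 1 = m + 1 by omega]
  ring



end WSHelpers

/-- **Equality conditions for the weighted Stanley inequality.**  Suppose `N_ω(k) > 0`.
Then the following are equivalent: (a) `N_ω(k)² = N_ω(k-1)·N_ω(k+1)`;
(b) there is `s > 0` with `N_ω(k+1) = s·N_ω(k) = s²·N_ω(k-1)`;
(c) there is `s > 0` such that `f(x) > k` for all `x ≻ z`, `g(x) > n - k + 1` for all
`x ≺ z`, and `ω(L⁻¹(k-1)) = ω(L⁻¹(k+1)) = s` for every linear extension `L` with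
`L(z) = k`. -/
theorem weighted_stanley_equality
    (ω : X → ℝ) (hω : ∀ x, 0 < ω x)
    (hrev : ∀ x y : X, x ≤ y → ω y ≤ ω x)
    (z : X) (k : ℕ) (hk1 : 1 < k) (hk2 : k < Fintype.card X)
    (hpos : 0 < Nw ω z k) :
    ((Nw ω z k) ^ 2 = Nw ω z (k - 1) * Nw ω z (k + 1) ↔
        ∃ s : ℝ, 0 < s ∧
          Nw ω z (k + 1) = s * Nw ω z k ∧
          s * Nw ω z k = s ^ 2 * Nw ω z (k - 1)) ∧
      ((∃ s : ℝ, 0 < s ∧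
          Nw ω z (k + 1) = s * Nw ω z k ∧
          s * Nw ω z k = s ^ 2 * Nw ω z (k - 1)) ↔
        ∃ s : ℝ, 0 < s ∧
          (∀ x : X, z < x → k < numBelow x) ∧
          (∀ x : X, x < z → Fintype.card X - k + 1 < numAbove x) ∧
          (∀ σ : X ≃ Fin (Fintype.card X), IsLinExt σ → (σ z : ℕ) = k - 1 →
            (∀ x : X, (σ x : ℕ) = k - 2 → ω x = s) ∧
            (∀ x : X, (σ x : ℕ) = k → ω x = s))) := by
  have hba : (∃ s : ℝ, 0 < s ∧ Nw ω z (k + 1) = s * Nw ω z k ∧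
          s * Nw ω z k = s ^ 2 * Nw ω z (k - 1)) →
      (Nw ω z k) ^ 2 = Nw ω z (k - 1) * Nw ω z (k + 1) := by
    rintro ⟨s, hs, h1, h2⟩
    have h3 : Nw ω z k = s * Nw ω z (k - 1) := by
      apply mul_left_cancel₀ hs.ne'
      rw [h2]; ring
    rw [h1, h3]; ring
  refine ⟨⟨fun h => ?_, hba⟩, fun h => a_to_c ω hω hrev k hk1 hk2 hpos (hba h), ?_⟩
  · obtain ⟨-, -, hr, h1, h2⟩ :=
      a_to_b _ _ _ (Nw_nonneg hω (k - 1)) (Nw_nonneg hω (k + 1)) hpos h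
    exact ⟨_, hr, h1, h2⟩
  · rintro ⟨s, hs, H1, H2, H3⟩
    exact ⟨s, hs, c_to_b ω k hk1 hk2 s H1 H2 H3⟩
end
end
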